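/- arXiv:1005.3275 — 4 statements merged into one kernel-verified Lean document; each statement's English description precedes it below -/
import Mathlib

section
/- Let (R, m) be a complete Noetherian local domain of mixed characteristic p > 0 of Krull dimension d, with absolute integral closure R^+. Then there exist elements x_2, ..., x_d of m such that p, x_2, ..., x_d is a system of parameters of R, together with an R^+-algebra B, satisfying: (1) (p, x_2, ..., x_d)B ≠ B; (2) x_2, ..., x_d is a regular sequence on B/pB; (3) p is not nilpotent in B, and for all positive integers a, n and every y ∈ R^+ with y^n = p^a, the image of y in B annihilates the ideal (0 :_B p). -/
/-!
Condition (3) only constrains the `p`-torsion of `B`, so `B` may be taken to be a product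
`B₁ × K`. Here `K` is an algebraic closure of the fraction field of `R`, in which `p` is
invertible, and `B₁` is an algebra over a quotient `S = R⁺ / Q` of characteristic `p`. The factor
`K` makes `p` non-nilpotent, is killed modulo `p`, and has no `p`-torsion. On the factor `B₁` every
`y` with `yⁿ = pᵃ` acts as zero, because `p` vanishes in the domain `S`. Conditions (1) and (2) then
say that `x₂, …, x_d` is a regular sequence on `B₁`, so it remains to find a big Cohen-Macaulay
algebra over `S`, where the argument takes place in equal characteristic `p`.

Choose a prime `P` of `R` containing `p` with `dim R/P = d - 1`, and a prime `Q` of `R⁺` over `P`.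
Extend `p` to parameters `p, x₂, …, x_d` of `R`. The complete local domain `D = R/P` contains a
coefficient field `k` (`exists_coefficient_field`), and evaluation of power series at the images of
`x₂, …, x_d` embeds `A = k⟦X₁, …, X_{d-1}⟧` in `D` with `D` finite over `A`
(`exists_noether_normalization`). Thus `S` is an integral extension domain of `A` in which every
element has a `p`-th root.

In `S` the variables are regular up to small multipliers (`colon_capturing`): if
`x_j u ∈ (x_i : i ∈ T)` with `j ∉ T`, there is a nonzero `c ∈ A` such that `c^(1/pᵉ) u` lies in
`(x_i : i ∈ T)` for all `e`. For the proof, the `pᵉ`-th power of the relation is multiplied by `c`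
into a free `A`-module, where regularity of powers of the variables of `A` can be used, and then
`pᵉ`-th roots are taken.

A valuation `v` on `S` (`exists_valuation`), built from the order of power series, measures the size
of the multipliers `c^(1/pᵉ)`: their value tends to `1` as `e` grows. The algebra `B₁` is the
localization of `S^ℕ` at the sequences whose value tends to `1`. Relations on the `x_i` become
trivial there by choosing larger and larger `e` along the sequence, while `(x_i) B₁` stays proper,
since a sequence whose value tends to `1` cannot have all its terms in an ideal on which
`v ≤ max v(x_i) < 1` (`exists_regular_algebra`).
-/

open IsLocalRing

/-! ### Coefficient fields in characteristic `p` -/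

/-- A surjection of rings of characteristic `p` onto a field with square-zero kernel splits. The
section is the inverse of the projection restricted to a maximal subring `C` that contains all
`p`-th powers and meets the kernel trivially. Such a `C` is a field, and if its image were not all
of `k`, adjoining a lift of a missing element would enlarge it. -/
lemma exists_section_of_square_zero {p : ℕ} (hp : p.Prime) {E k : Type*} [CommRing E] [Field k]
    [CharP E p] [CharP k p] (π : E →+* k) (hπ : Function.Surjective π)
    (hsq : ∀ a b, π a = 0 → π b = 0 → a * b = 0) :
    ∃ σ : k →+* E, ∀ t, π (σ t) = t := by
  have : Fact p.Prime := ⟨hp⟩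
  have hker : ∀ e : E, π e = 0 → e ^ p = 0 := by
    intro e he
    obtain ⟨m, rfl⟩ := Nat.exists_eq_add_of_le hp.two_le
    rw [pow_add, pow_two, hsq e e he he, zero_mul]
  let Z : Set (Subring E) := {C | (∀ e : E, e ^ p ∈ C) ∧ ∀ c ∈ C, π c = 0 → c = 0}
  have hbase : (frobenius E p).range ∈ Z := by
    refine ⟨fun e => ⟨e, rfl⟩, ?_⟩
    rintro _ ⟨e, rfl⟩ h
    rw [frobenius_def] at h ⊢
    rw [map_pow] at h
    exact hker e (pow_eq_zero_iff hp.ne_zero |>.1 h)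
  obtain ⟨C, -, hC⟩ := zorn_le_nonempty₀ Z (by
    intro c hcZ hc y hy
    have hdir : DirectedOn (· ≤ ·) c := hc.directedOn
    refine ⟨sSup c, ⟨fun e => ?_, fun x hx h => ?_⟩, fun z hz => le_sSup hz⟩
    · exact (Subring.mem_sSup_of_directedOn ⟨y, hy⟩ hdir).2 ⟨y, hy, (hcZ hy).1 e⟩
    · obtain ⟨s, hs, hxs⟩ := (Subring.mem_sSup_of_directedOn ⟨y, hy⟩ hdir).1 hx
      exact (hcZ hs).2 x hxs h) _ hbase
  have hCp := hC.prop.1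
  have hC0 := hC.prop.2
  have : Nontrivial E := π.domain_nontrivial
  have hfield : IsField C := by
    refine ⟨⟨0, 1, zero_ne_one⟩, mul_comm, ?_⟩
    intro c hc
    have hc0 : π c ≠ 0 := fun h => hc (Subtype.ext (hC0 c c.2 h))
    obtain ⟨e, he⟩ := hπ (π c)⁻¹
    have h1 : (c : E) ^ p * e ^ p - 1 = 0 := by
      refine hC0 _ (C.sub_mem (C.mul_mem (hCp _) (hCp _)) C.one_mem) ?_
      rw [map_sub, map_mul, map_pow, map_pow, he, ← mul_pow, mul_inv_cancel₀ hc0, one_pow, map_one,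
        sub_self]
    refine ⟨c ^ (p - 1) * ⟨e ^ p, hCp e⟩, Subtype.ext ?_⟩
    push_cast
    rw [← mul_assoc, ← pow_succ', Nat.sub_add_cancel hp.one_le]
    exact sub_eq_zero.1 h1
  let : Field C := hfield.toField
  let : Algebra C k := (π.comp C.subtype).toAlgebra
  have hsurj : ∀ t, ∃ c : C, π c = t := by
    by_contra! hcon
    obtain ⟨t, ht⟩ := hcon
    obtain ⟨e, rfl⟩ := hπ t
    let ev : Polynomial C →+* E := Polynomial.eval₂RingHom C.subtype e
    let g : Polynomial C := Polynomial.X ^ p - Polynomial.C ⟨e ^ p, hCp e⟩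
    have hgirr : Irreducible g := by
      refine X_pow_sub_C_irreducible_of_prime hp ?_
      intro b hb
      refine ht b ?_
      have h2 := congrArg (fun z : C => π z) hb
      simp only [SubmonoidClass.coe_pow, map_pow] at h2
      exact frobenius_inj k p h2
    have hgm : g.Monic := Polynomial.monic_X_pow_sub_C _ hp.ne_zero
    -- `X ^ p - e ^ p` is the minimal polynomial of `π e` and already annihilates the lift `e`,
    -- so `C[e]` still meets the kernel trivially
    have hmin : g = minpoly C (π e) := by
      refine minpoly.eq_of_irreducible_of_monic hgirr ?_ hgm
      simp only [g, map_sub, map_pow, Polynomial.aeval_X, Polynomial.aeval_C]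
      change π e ^ p - π (e ^ p) = 0
      rw [map_pow, sub_self]
    have hCle : C ≤ ev.range := fun c hc => ⟨Polynomial.C ⟨c, hc⟩, by simp [ev]⟩
    have hmem : ev.range ∈ Z := by
      refine ⟨fun e => hCle (hCp e), ?_⟩
      rintro _ ⟨f, rfl⟩ hf
      have h3 : Polynomial.aeval (π e) f = 0 := by
        rw [← hf]
        change _ = π (Polynomial.eval₂ C.subtype e f)
        rw [Polynomial.hom_eval₂]
        rfl
      obtain ⟨h, rfl⟩ := hmin ▸ minpoly.dvd C (π e) h3
      rw [map_mul]
      have : ev g = 0 := by simp [ev, g]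
      rw [this, zero_mul]
    have heq := hC.eq_of_le hmem hCle
    have he : e ∈ C := by
      rw [heq]
      exact ⟨Polynomial.X, by simp [ev]⟩
    exact ht ⟨e, he⟩ rfl
  have hbij : Function.Bijective (π.comp C.subtype) :=
    ⟨(π.comp C.subtype).injective, hsurj⟩
  refine ⟨C.subtype.comp (RingEquiv.ofBijective _ hbij).symm.toRingHom, fun t => ?_⟩
  exact (RingEquiv.ofBijective _ hbij).apply_symm_apply t

/-- Every field of characteristic `p` is formally smooth over `𝔽_p`: a lifting problem along
`B → B / I` with `I ^ 2 = 0` is a splitting problem for the square-zero extension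
`B ×_{B / I} k → k`. -/
lemma formallySmooth_zmod {p : ℕ} (hp : p.Prime) (k : Type) [Field k] [CharP k p]
    [Algebra (ZMod p) k] : Algebra.FormallySmooth (ZMod p) k := by
  have : Fact p.Prime := ⟨hp⟩
  refine Algebra.FormallySmooth.of_comp_surjective fun B _ _ I hI f => ?_
  have hfinj : Function.Injective f ∨ Subsingleton B := by
    by_cases h : Nontrivial (B ⧸ I)
    · exact Or.inl f.toRingHom.injective
    · right
      rw [not_nontrivial_iff_subsingleton, Ideal.Quotient.subsingleton_iff] at h
      rw [h] at hI
      rw [← Ideal.one_eq_top, one_pow, Ideal.one_eq_top] at hI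
      exact (Submodule.subsingleton_iff B).1 (subsingleton_of_bot_eq_top hI.symm)
  rcases hfinj with hfinj | hB
  swap
  · refine ⟨AlgHom.mk (⟨⟨⟨fun _ => 0, Subsingleton.elim _ _⟩, fun _ _ => Subsingleton.elim _ _⟩,
      Subsingleton.elim _ _, fun _ _ => Subsingleton.elim _ _⟩ : k →+* B)
      fun _ => Subsingleton.elim _ _, ?_⟩
    ext x
    obtain ⟨b, hb⟩ := Ideal.Quotient.mk_surjective (f x)
    rw [← hb]
    exact congrArg (Ideal.Quotient.mk I) (Subsingleton.elim _ _)
  -- the fibre product `B ×_{B / I} k`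
  let E : Subring (B × k) :=
    ((Ideal.Quotient.mk I).comp (RingHom.fst B k)).eqLocus (f.toRingHom.comp (RingHom.snd B k))
  let π : E →+* k := (RingHom.snd B k).comp E.subtype
  have hπ : Function.Surjective π := by
    intro t
    obtain ⟨b, hb⟩ := Ideal.Quotient.mk_surjective (f t)
    exact ⟨⟨(b, t), hb⟩, rfl⟩
  have hpB : (p : B) = 0 := by
    have h := map_natCast (algebraMap (ZMod p) B) p
    rwa [CharP.cast_eq_zero, map_zero, eq_comm] at h
  have hE : CharP E p := by
    refine ⟨fun x => ⟨fun h => ?_, ?_⟩⟩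
    · have h2 := congrArg π h
      rw [map_natCast, map_zero] at h2
      exact (CharP.cast_eq_zero_iff k p x).1 h2
    · rintro ⟨y, rfl⟩
      refine Subtype.ext (Prod.ext ?_ ?_) <;> simp [hpB]
  obtain ⟨σ, hσ⟩ := exists_section_of_square_zero hp π hπ (by
    rintro ⟨⟨a, s⟩, ha⟩ ⟨⟨b, t⟩, hb⟩ h1 h2
    obtain rfl : s = 0 := h1
    obtain rfl : t = 0 := h2
    have ha' : Ideal.Quotient.mk I a = f 0 := ha
    have hb' : Ideal.Quotient.mk I b = f 0 := hb
    rw [map_zero, Ideal.Quotient.eq_zero_iff_mem] at ha' hb'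
    have : a * b ∈ I ^ 2 := by rw [pow_two]; exact Ideal.mul_mem_mul ha' hb'
    rw [hI] at this
    exact Subtype.ext (Prod.ext this (mul_zero _)))
  let g : k →+* B := ((RingHom.fst B k).comp E.subtype).comp σ
  refine ⟨AlgHom.mk g fun r => RingHom.congr_fun
    (RingHom.ext_zmod (g.comp (algebraMap _ _)) (algebraMap _ _)) r, ?_⟩
  ext t
  have h : Ideal.Quotient.mk I (σ t).1.1 = f (σ t).1.2 := (σ t).2
  rw [show (σ t).1.2 = t from hσ t] at h
  exact h

/-- The Cohen structure theorem in equal characteristic `p`: formal smoothness of the residue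
field over `𝔽_p` lifts its identity map along the quotient maps of the complete ring `D`. -/
lemma exists_coefficient_field {p : ℕ} (hp : p.Prime) (D : Type) [CommRing D] [IsLocalRing D]
    [CharP D p] [IsAdicComplete (maximalIdeal D) D] :
    ∃ σ : ResidueField D →+* D, ∀ t, residue D (σ t) = t := by
  have : Fact p.Prime := ⟨hp⟩
  let : Algebra (ZMod p) D := ZMod.algebra D p
  have : CharP (ResidueField D) p :=
    charP_of_injective_algebraMap (algebraMap (ZMod p) (ResidueField D)).injective p
  have := formallySmooth_zmod hp (ResidueField D)
  obtain ⟨g, hg⟩ := Algebra.FormallySmooth.exists_mkₐ_comp_eq_of_isAdicComplete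
    (R := ZMod p) (A := ResidueField D) (S := D) (I := maximalIdeal D)
    (AlgHom.id (ZMod p) (ResidueField D))
  exact ⟨g, fun t => congrArg (fun φ => φ t) hg⟩

/-! ### Power series rings: evaluation and powers of the variables -/

/-- Evaluation of power series at topologically nilpotent elements of a complete ring, given as
the limit of the evaluations of the truncations. -/
lemma exists_powerSeries_eval {n : ℕ} {k D : Type*} [Field k] [CommRing D] (I : Ideal D)
    [IsAdicComplete I D] (σ : k →+* D) (x : Fin n → D) (hx : ∀ i, x i ∈ I) :
    ∃ ev : MvPowerSeries (Fin n) k →+* D, (∀ a, ev (MvPowerSeries.C a) = σ a) ∧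
      ∀ i, ev (MvPowerSeries.X i) = x i := by
  let J := MvPolynomial.idealOfVars (Fin n) k
  let φ : MvPolynomial (Fin n) k →+* D := MvPolynomial.eval₂Hom σ x
  have hJ : ∀ N, J ^ N ≤ (I ^ N).comap φ := by
    intro N
    rw [← Ideal.map_le_iff_le_comap, Ideal.map_pow]
    refine Ideal.pow_right_mono ?_ N
    rw [Ideal.map_le_iff_le_comap]
    refine Ideal.span_le.2 ?_
    rintro _ ⟨i, rfl⟩
    simpa [φ] using hx i
  let F : ∀ N, MvPowerSeries (Fin n) k →+* D ⧸ I ^ N := fun N =>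
    (Ideal.quotientMap (I ^ N) φ (hJ N)).comp (MvPowerSeries.truncTotalAlgHom (Fin n) k N).toRingHom
  have hFa : ∀ N f, F N f = Ideal.Quotient.mk (I ^ N) (φ (MvPowerSeries.truncTotal N f)) :=
    fun N f => rfl
  have hF : ∀ {m N : ℕ} (hle : m ≤ N), (Ideal.Quotient.factorPow I hle).comp (F N) = F m := by
    intro m N hle
    ext f
    rw [RingHom.comp_apply, hFa, hFa]
    change Ideal.Quotient.mk (I ^ m) _ = _
    rw [Ideal.Quotient.eq, ← map_sub]
    exact hJ m (MvPowerSeries.truncTotal_sub_truncTotal_mem_pow_idealOfVars hle le_rfl f)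
  let ev := IsAdicComplete.liftRingHom I F hF
  have hev : ∀ N f, Ideal.Quotient.mk (I ^ N) (ev f) = F N f := fun N f =>
    IsAdicComplete.mk_liftRingHom I F hF N f
  have hpoly : ∀ P : MvPolynomial (Fin n) k, ev (P : MvPowerSeries (Fin n) k) = φ P := by
    intro P
    refine (IsHausdorff.eq_iff_smodEq (I := I)).2 fun N => ?_
    rw [SModEq.sub_mem, smul_eq_mul, Ideal.mul_top, ← Ideal.Quotient.eq, hev, hFa,
      Ideal.Quotient.eq, ← map_sub]
    refine hJ N ((MvPolynomial.mem_pow_idealOfVars_iff' ..).2 fun e he => ?_)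
    rw [MvPolynomial.coeff_sub, MvPowerSeries.coeff_truncTotal _ he, MvPolynomial.coeff_coe,
      sub_self]
  refine ⟨ev, fun a => ?_, fun i => ?_⟩
  · rw [← MvPolynomial.coe_C, hpoly]
    simp [φ]
  · rw [← MvPolynomial.coe_X, hpoly]
    simp [φ]

/-- The ideal generated by `q`-th powers of some of the variables consists of the series that are
supported on the monomials divisible by one of these powers. -/
lemma mem_span_X_pow_iff {n : ℕ} {k : Type*} [CommRing k] (q : ℕ) (T : Finset (Fin n))
    (f : MvPowerSeries (Fin n) k) :
    f ∈ Ideal.span ((fun i => MvPowerSeries.X i ^ q) '' (T : Set (Fin n))) ↔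
      ∀ e : Fin n →₀ ℕ, (∀ i ∈ T, e i < q) → MvPowerSeries.coeff e f = 0 := by
  constructor
  · intro hf
    induction hf using Submodule.span_induction with
    | mem g hg =>
      obtain ⟨i, hi, rfl⟩ := hg
      exact fun e he => MvPowerSeries.X_pow_dvd_iff.1 dvd_rfl e (he i hi)
    | zero => simp
    | add a b _ _ ha hb =>
      intro e he
      rw [map_add, ha e he, hb e he, add_zero]
    | smul a b _ hb =>
      intro e he
      classical
      rw [smul_eq_mul, MvPowerSeries.coeff_mul]
      refine Finset.sum_eq_zero fun ij hij => ?_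
      replace hij : ij.1 + ij.2 = e := Finset.HasAntidiagonal.mem_antidiagonal.1 hij
      rw [hb ij.2 fun i hi => lt_of_le_of_lt ?_ (he i hi), mul_zero]
      rw [← hij, Finsupp.add_apply]
      exact Nat.le_add_left _ _
  · induction T using Finset.induction_on generalizing f with
    | empty =>
      intro h
      have : f = 0 := by
        ext e
        simpa using h e
      simp [this]
    | insert i T hi ih =>
      intro h
      classical
      -- the part of `f` supported on the monomials divisible by `X i ^ q`
      let g : MvPowerSeries (Fin n) k := fun e => if q ≤ e i then MvPowerSeries.coeff e f else 0
      have hg : ∀ e, MvPowerSeries.coeff e g = if q ≤ e i then MvPowerSeries.coeff e f else 0 :=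
        fun e => rfl
      have hgd : MvPowerSeries.X i ^ q ∣ g := by
        rw [MvPowerSeries.X_pow_dvd_iff]
        intro e he
        rw [hg, if_neg (not_le.2 he)]
      have hfg : f - g ∈ Ideal.span ((fun i => MvPowerSeries.X i ^ q) '' (T : Set (Fin n))) := by
        refine ih _ fun e he => ?_
        rw [map_sub, hg]
        split_ifs with hq
        · exact sub_self _
        · rw [sub_zero]
          exact h e fun j hj => by
            rcases Finset.mem_insert.1 hj with rfl | hj
            · exact not_le.1 hq
            · exact he j hj
      rw [← sub_add_cancel f g, Finset.coe_insert, Set.image_insert_eq]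
      refine Ideal.add_mem _ (Ideal.span_mono (Set.subset_insert _ _) hfg) ?_
      exact Ideal.mem_of_dvd _ hgd (Ideal.subset_span (Set.mem_insert _ _))

/-- The `q`-th powers of the variables form a regular sequence in any order. -/
lemma colon_X_pow {n : ℕ} {k : Type*} [CommRing k] (q : ℕ) (T : Finset (Fin n)) (j : Fin n)
    (hj : j ∉ T) (f : MvPowerSeries (Fin n) k)
    (h : MvPowerSeries.X j ^ q * f ∈
      Ideal.span ((fun i => MvPowerSeries.X i ^ q) '' (T : Set (Fin n)))) :
    f ∈ Ideal.span ((fun i => MvPowerSeries.X i ^ q) '' (T : Set (Fin n))) := by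
  rw [mem_span_X_pow_iff] at h ⊢
  intro e he
  have := h (Finsupp.single j q + e) fun i hi => by
    have : j ≠ i := fun h => hj (h ▸ hi)
    simpa [Finsupp.single_apply, this] using he i hi
  rwa [MvPowerSeries.X_pow_eq, MvPowerSeries.coeff_add_monomial_mul, one_mul] at this

/-! ### Noether normalization of complete local rings of characteristic `p` -/

lemma isPrecomplete_pi {A : Type*} [CommRing A] (I : Ideal A) [IsPrecomplete I A]
    (ι : Type*) [Finite ι] :
    IsPrecomplete I (ι → A) := by
  have hmem : ∀ (n : ℕ) (v : ι → A), (∀ i, v i ∈ I ^ n) →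
      v ∈ (I ^ n • ⊤ : Submodule A (ι → A)) := by
    intro n v hv
    classical
    have := Fintype.ofFinite ι
    rw [pi_eq_sum_univ' v]
    exact Submodule.sum_mem _ fun i _ => Submodule.smul_mem_smul (hv i) trivial
  have hmem' : ∀ (n : ℕ) (v : ι → A), v ∈ (I ^ n • ⊤ : Submodule A (ι → A)) →
      ∀ i, v i ∈ I ^ n := by
    intro n v hv i
    induction hv using Submodule.smul_induction_on' with
    | smul r hr w _ => exact Ideal.mul_mem_right _ _ hr
    | add a _ b _ ha hb => exact Ideal.add_mem _ ha hb
  constructor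
  intro f hf
  have h : ∀ i, ∃ L : A, ∀ n, f n i ≡ L [SMOD (I ^ n • ⊤ : Submodule A A)] := by
    intro i
    refine IsPrecomplete.prec' (fun n => f n i) fun {m n} hmn => ?_
    rw [SModEq.sub_mem, smul_eq_mul, Ideal.mul_top]
    exact hmem' m _ (SModEq.sub_mem.1 (hf hmn)) i
  choose L hL using h
  refine ⟨L, fun n => SModEq.sub_mem.2 (hmem n _ fun i => ?_)⟩
  simpa [SModEq.sub_mem] using hL i n

/-- If a power of the maximal ideal of a complete Noetherian local ring `D` lies in the ideal
generated by the variables, and the power series ring maps onto the residue field, then `D` is a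
finite module over the power series ring. Generators of the powers of the maximal ideal generate `D`
modulo the ideal of the variables, and completeness lifts these generators to generators of `D`. -/
lemma finite_of_eval {k D : Type} [Field k] [CommRing D] [IsNoetherianRing D] [IsLocalRing D]
    [IsAdicComplete (maximalIdeal D) D] {n : ℕ} [Algebra (MvPowerSeries (Fin n) k) D]
    (hres : ∀ y : D, ∃ a : MvPowerSeries (Fin n) k, y - algebraMap _ D a ∈ maximalIdeal D)
    (s : ℕ) (hx : ∀ i, algebraMap (MvPowerSeries (Fin n) k) D (MvPowerSeries.X i) ∈ maximalIdeal D)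
    (hs : maximalIdeal D ^ s ≤ Ideal.span (Set.range fun i =>
      algebraMap (MvPowerSeries (Fin n) k) D (MvPowerSeries.X i))) :
    Module.Finite (MvPowerSeries (Fin n) k) D := by
  set A := MvPowerSeries (Fin n) k with hA
  let M : Ideal A := Ideal.span (Set.range MvPowerSeries.X)
  have hmap : M.map (algebraMap A D) = Ideal.span (Set.range fun i =>
      algebraMap A D (MvPowerSeries.X i)) := by
    rw [Ideal.map_span, ← Set.range_comp]; rfl
  -- `D` is finitely generated over `A` modulo every power of its maximal ideal
  have hstep : ∀ j : ℕ, ∃ E : Finset D, ∀ y : D, ∃ z ∈ Submodule.span A (E : Set D),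
      y - z ∈ maximalIdeal D ^ j := by
    intro j
    induction j with
    | zero => exact ⟨∅, fun y => ⟨0, Submodule.zero_mem _, by simp⟩⟩
    | succ j ih =>
      obtain ⟨E, hE⟩ := ih
      obtain ⟨G, hG⟩ := IsNoetherian.noetherian (maximalIdeal D ^ j)
      classical
      refine ⟨E ∪ G, fun y => ?_⟩
      obtain ⟨z, hz, hyz⟩ := hE y
      have key : ∀ w ∈ Submodule.span D (G : Set D), ∃ z' ∈ Submodule.span A (G : Set D),
          w - z' ∈ maximalIdeal D ^ (j + 1) := by
        intro w hw
        induction hw using Submodule.span_induction with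
        | mem w hw => exact ⟨w, Submodule.subset_span hw, by simp⟩
        | zero => exact ⟨0, Submodule.zero_mem _, by simp⟩
        | add a b _ _ ha hb =>
          obtain ⟨a', ha', ha⟩ := ha
          obtain ⟨b', hb', hb⟩ := hb
          refine ⟨a' + b', Submodule.add_mem _ ha' hb', ?_⟩
          rw [add_sub_add_comm]
          exact Ideal.add_mem _ ha hb
        | smul c w hw' hw =>
          obtain ⟨w', hw1, hw2⟩ := hw
          obtain ⟨a, ha⟩ := hres c
          refine ⟨a • w', Submodule.smul_mem _ _ hw1, ?_⟩
          have hwj : w ∈ maximalIdeal D ^ j := hG ▸ hw'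
          have : c • w - a • w' = (c - algebraMap A D a) * w + algebraMap A D a * (w - w') := by
            rw [Algebra.smul_def a w', smul_eq_mul]; ring
          rw [this]
          refine Ideal.add_mem _ ?_ (Ideal.mul_mem_left _ _ hw2)
          rw [pow_succ']
          exact Ideal.mul_mem_mul ha hwj
      rw [← hG] at hyz
      obtain ⟨z', hz', hw⟩ := key _ hyz
      refine ⟨z + z', ?_, by rwa [← sub_sub]⟩
      rw [Finset.coe_union, Submodule.span_union]
      exact Submodule.add_mem_sup hz hz'
  obtain ⟨E, hE⟩ := hstep s
  have hpre : IsPrecomplete M (E → A) := isPrecomplete_pi M E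
  have hle : M.map (algebraMap A D) ≤ maximalIdeal D := by
    rw [hmap, Ideal.span_le]
    rintro _ ⟨i, rfl⟩
    exact hx i
  have hH : IsHausdorff M D := by
    rw [← IsHausdorff.map_algebraMap_iff (S := D)]
    constructor
    intro y hy
    refine IsHausdorff.haus (I := maximalIdeal D) inferInstance y fun N => ?_
    have := hy N
    rw [SModEq.zero, smul_eq_mul, Ideal.mul_top] at this ⊢
    exact Ideal.pow_right_mono hle N this
  let f : (E → A) →ₗ[A] D := Fintype.linearCombination A (fun e : E => (e : D))
  have hf : LinearMap.range f = Submodule.span A (E : Set D) := by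
    rw [Fintype.range_linearCombination]
    simp
  refine Module.Finite.of_surjective f (surjective_of_mkQ_comp_surjective (I := M) ?_)
  intro y
  obtain ⟨y, rfl⟩ := Submodule.mkQ_surjective _ y
  obtain ⟨z, hz, hyz⟩ := hE y
  rw [← hf] at hz
  obtain ⟨v, rfl⟩ := hz
  refine ⟨v, ?_⟩
  rw [LinearMap.comp_apply, ← sub_eq_zero, ← map_sub, ← LinearMap.mem_ker, Submodule.ker_mkQ,
    ← neg_mem_iff, neg_sub, Ideal.smul_top_eq_map, hmap]
  exact hs hyz

lemma krullDim_le_of_isIntegral {A D : Type*} [CommRing A] [CommRing D] [Algebra A D]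
    [Algebra.IsIntegral A D] : ringKrullDim D ≤ ringKrullDim A := by
  refine Order.krullDim_le_of_strictMono (PrimeSpectrum.comap (algebraMap A D)) fun P Q h => ?_
  exact Ideal.IsIntegral.comap_lt_comap h

lemma powerSeries_dim_le (n : ℕ) (k : Type) [Field k] :
    ringKrullDim (MvPowerSeries (Fin n) k) ≤ n := by
  have hM : maximalIdeal (MvPowerSeries (Fin n) k) = Ideal.span (Set.range MvPowerSeries.X) := by
    refine le_antisymm (fun f hf => ?_) ?_
    · have h0 : MvPowerSeries.constantCoeff f = 0 := by
        by_contra h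
        exact hf (MvPowerSeries.isUnit_iff_constantCoeff.2 (isUnit_iff_ne_zero.2 h))
      have := (mem_span_X_pow_iff 1 Finset.univ f).2 fun e he => by
        have : e = 0 := by
          ext i
          simpa using he i (Finset.mem_univ i)
        rw [this, MvPowerSeries.coeff_zero_eq_constantCoeff_apply, h0]
      simpa using this
    · rw [Ideal.span_le]
      rintro _ ⟨i, rfl⟩ h
      simpa using MvPowerSeries.isUnit_iff_constantCoeff.1 h
  refine (ringKrullDim_le_spanFinrank_maximalIdeal _).trans ?_
  rw [hM]
  have := Submodule.spanFinrank_span_le_ncard_of_finite (R := MvPowerSeries (Fin n) k)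
    (Set.finite_range (MvPowerSeries.X : Fin n → MvPowerSeries (Fin n) k))
  have h2 : (Set.range (MvPowerSeries.X : Fin n → MvPowerSeries (Fin n) k)).ncard ≤ n := by
    rw [← Set.image_univ]
    refine (Set.ncard_image_le Set.finite_univ).trans ?_
    simp
  exact_mod_cast this.trans h2

/-- An integral map from a power series ring in `n` variables to a ring of dimension `n` is
injective, since a nonzero kernel would force that ring to have dimension less than `n`. -/
lemma ev_injective {k D : Type} [Field k] [CommRing D] {n : ℕ} [Algebra (MvPowerSeries (Fin n) k) D]
    [Algebra.IsIntegral (MvPowerSeries (Fin n) k) D] (hD : ringKrullDim D = n) :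
    Function.Injective (algebraMap (MvPowerSeries (Fin n) k) D) := by
  rw [injective_iff_map_eq_zero]
  intro f hf
  by_contra hf0
  have h1 := ringKrullDim_quotient_succ_le_of_nonZeroDivisor (mem_nonZeroDivisors_of_ne_zero hf0)
  let φ : MvPowerSeries (Fin n) k ⧸ Ideal.span {f} →+* D :=
    Ideal.Quotient.lift _ (algebraMap (MvPowerSeries (Fin n) k) D) fun a ha => by
      obtain ⟨b, rfl⟩ := Ideal.mem_span_singleton'.1 ha
      rw [map_mul, hf, mul_zero]
  let _ := φ.toAlgebra
  have hφ : φ.IsIntegral := by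
    refine RingHom.IsIntegral.tower_top (Ideal.Quotient.mk _) φ ?_
    exact fun y => Algebra.IsIntegral.isIntegral y
  have : Algebra.IsIntegral (MvPowerSeries (Fin n) k ⧸ Ideal.span {f}) D :=
    Algebra.isIntegral_def.2 hφ
  have h2 := krullDim_le_of_isIntegral (A := MvPowerSeries (Fin n) k ⧸ Ideal.span {f}) (D := D)
  rw [hD] at h2
  have h3 := (add_le_add_left h2 1).trans (h1.trans (powerSeries_dim_le n k))
  have : n + 1 ≤ n := by exact_mod_cast h3
  omega

/-- A complete Noetherian local ring of characteristic `p` and dimension `n` is an integral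
extension of a power series ring in `n` variables over its residue field, whose variables map to
any prescribed parameters. -/
lemma exists_noether_normalization {p : ℕ} (hp : p.Prime) {D : Type} [CommRing D]
    [IsNoetherianRing D] [IsLocalRing D] [CharP D p] [IsAdicComplete (maximalIdeal D) D]
    {n : ℕ} (hD : ringKrullDim D = n) (y : Fin n → D) (hy : ∀ i, y i ∈ maximalIdeal D) (s : ℕ)
    (hs : maximalIdeal D ^ s ≤ Ideal.span (Set.range y)) :
    ∃ ev : MvPowerSeries (Fin n) (ResidueField D) →+* D, Function.Injective ev ∧
      ev.IsIntegral ∧ ∀ i, ev (MvPowerSeries.X i) = y i := by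
  obtain ⟨σ, hσ⟩ := exists_coefficient_field hp D
  obtain ⟨ev, hC, hX⟩ := exists_powerSeries_eval (maximalIdeal D) σ y hy
  let _ := ev.toAlgebra
  have hX' : ∀ i, algebraMap (MvPowerSeries (Fin n) (ResidueField D)) D (MvPowerSeries.X i) = y i :=
    hX
  have hfin : Module.Finite (MvPowerSeries (Fin n) (ResidueField D)) D := by
    refine finite_of_eval (fun z => ⟨MvPowerSeries.C (residue D z), ?_⟩) s
      (fun i => by rw [hX']; exact hy i) (by simpa only [hX'] using hs)
    rw [RingHom.algebraMap_toAlgebra, hC, ← residue_eq_zero_iff, map_sub, hσ, sub_self]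
  have hint : Algebra.IsIntegral (MvPowerSeries (Fin n) (ResidueField D)) D := inferInstance
  exact ⟨ev, ev_injective hD, fun z => hint.isIntegral z, hX⟩

/-! ### Colon capturing -/

/-- A finitely generated submodule is multiplied by some nonzero scalar into a free submodule with
basis `s`, a maximal linearly independent subset of its generators. -/
lemma exists_free_sublattice {A S : Type} [CommRing A] [IsDomain A] [AddCommGroup S] [Module A S]
    (F : Submodule A S) (hF : F.FG) :
    ∃ s : Set S, LinearIndepOn A id s ∧ ∃ c : A, c ≠ 0 ∧ ∀ y ∈ F, c • y ∈ Submodule.span A s := by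
  obtain ⟨G, rfl⟩ := hF
  obtain ⟨t, ht, hmax⟩ := exists_maximal_linearIndepOn A (Subtype.val : G → S)
  have hgen : ∀ g : G, ∃ a : A, a ≠ 0 ∧ a • (g : S) ∈ Submodule.span A (Subtype.val '' t) := by
    intro g
    by_cases hg : g ∈ t
    · exact ⟨1, one_ne_zero, by
        rw [one_smul]; exact Submodule.subset_span (Set.mem_image_of_mem _ hg)⟩
    · exact hmax g hg
  choose a ha0 ha using hgen
  refine ⟨Subtype.val '' t, ht.id_image, ∏ g, a g, Finset.prod_ne_zero_iff.2 fun g _ => ha0 g,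
    fun y hy => ?_⟩
  induction hy using Submodule.span_induction with
  | mem g hg =>
    classical
    rw [← Finset.prod_erase_mul _ a (Finset.mem_univ ⟨g, hg⟩), mul_smul]
    exact Submodule.smul_mem _ _ (ha ⟨g, hg⟩)
  | zero => simp
  | add y z _ _ hy hz => rw [smul_add]; exact Submodule.add_mem _ hy hz
  | smul b y _ hy => rw [smul_comm]; exact Submodule.smul_mem _ _ hy

section
variable {n p : ℕ} {k S : Type} [Field k] [CommRing S] [IsDomain S]
  [Algebra (MvPowerSeries (Fin n) k) S]

/-- In a perfect domain `S` integral over a power series ring, each relation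
`x j * u ∈ (x i : i ∈ T)` with `j ∉ T` is trivial up to all the `p ^ e`-th roots of one nonzero power
series `c`. -/
lemma colon_capturing [hp : Fact p.Prime] [CharP S p]
    [Algebra.IsIntegral (MvPowerSeries (Fin n) k) S]
    (hroot : ∀ s : S, ∃ t, t ^ p = s) (x : Fin n → S)
    (hx : ∀ i, x i = algebraMap (MvPowerSeries (Fin n) k) S (MvPowerSeries.X i))
    (T : Finset (Fin n)) (j : Fin n) (hj : j ∉ T) (u : S)
    (hu : x j * u ∈ Ideal.span (x '' (T : Set (Fin n)))) :
    ∃ c : MvPowerSeries (Fin n) k, c ≠ 0 ∧ ∀ e : ℕ, ∃ w : S,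
      w ^ p ^ e = algebraMap _ S c ∧ w * u ∈ Ideal.span (x '' (T : Set (Fin n))) := by
  have hroot' : ∀ (e : ℕ) (s : S), ∃ t, t ^ p ^ e = s := by
    intro e
    induction e with
    | zero => exact fun s => ⟨s, by simp⟩
    | succ e ih =>
      intro s
      obtain ⟨t, ht⟩ := ih s
      obtain ⟨t', ht'⟩ := hroot t
      exact ⟨t', by rw [pow_succ', pow_mul, ht', ht]⟩
  obtain ⟨r, hr⟩ := (Submodule.mem_span_image_finset_iff_exists_fun' S).1 hu
  set A := MvPowerSeries (Fin n) k
  have : IsDomain A := NoZeroDivisors.to_isDomain _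
  -- `F` is a finite `A`-module containing all powers of `u` and of the coefficients `r i`, so that
  -- one `c` multiplies all of these powers into the same free module
  let F : Subalgebra A S := Algebra.adjoin A (insert u (r '' (T : Set (Fin n))))
  have hF : F.toSubmodule.FG :=
    fg_adjoin_of_finite ((T.finite_toSet.image r).insert u)
      fun s _ => Algebra.IsIntegral.isIntegral s
  have huF : u ∈ F := Algebra.subset_adjoin (Set.mem_insert _ _)
  have hrF : ∀ i ∈ T, r i ∈ F := fun i hi =>
    Algebra.subset_adjoin (Set.mem_insert_of_mem _ (Set.mem_image_of_mem r hi))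
  obtain ⟨b, hb, c, hc0, hc⟩ := exists_free_sublattice F.toSubmodule hF
  have hb' : LinearIndependent A (fun z : b => (z : S)) := hb
  have hlin : ∀ y ∈ F, ∃ v : b →₀ A,
      Finsupp.linearCombination A (fun z : b => (z : S)) v = c • y := by
    intro y hy
    have := hc y hy
    rwa [Finsupp.mem_span_iff_linearCombination] at this
  refine ⟨c, hc0, fun e => ?_⟩
  have hpow : c • u ^ p ^ e ∈ Ideal.span ((fun i => x i ^ p ^ e) '' (T : Set (Fin n))) := by
    obtain ⟨v, hv⟩ := hlin (u ^ p ^ e) (F.pow_mem huF _)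
    have hr' : ∀ i, ∃ v : b →₀ A, i ∈ T →
        Finsupp.linearCombination A (fun z : b => (z : S)) v = c • r i ^ p ^ e := by
      intro i
      by_cases hi : i ∈ T
      · obtain ⟨v, hv⟩ := hlin (r i ^ p ^ e) (F.pow_mem (hrF i hi) _)
        exact ⟨v, fun _ => hv⟩
      · exact ⟨0, fun h => absurd h hi⟩
    choose ρ hρ using hr'
    have hvec : (MvPowerSeries.X j ^ p ^ e : A) • v =
        ∑ i ∈ T, (MvPowerSeries.X i ^ p ^ e : A) • ρ i := by
      apply hb'
      rw [map_smul, hv, map_sum]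
      have h1 := congrArg (fun z => c • z ^ p ^ e) hr
      simp only [sum_pow_char_pow, smul_eq_mul, mul_pow] at h1
      rw [Finset.smul_sum] at h1
      rw [smul_comm, Algebra.smul_def (MvPowerSeries.X j ^ p ^ e), map_pow, ← hx, ← h1]
      refine Finset.sum_congr rfl fun i hi => ?_
      rw [map_smul, hρ i hi, smul_comm, Algebra.smul_def (MvPowerSeries.X i ^ p ^ e), map_pow, ← hx,
        mul_comm]
    have hcoord : ∀ z, v z ∈
        Ideal.span ((fun i => (MvPowerSeries.X i ^ p ^ e : A)) '' (T : Set (Fin n))) := by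
      intro z
      refine colon_X_pow _ T j hj _ ?_
      have := DFunLike.congr_fun hvec z
      rw [Finsupp.smul_apply, smul_eq_mul, Finsupp.finsetSum_apply] at this
      rw [this]
      refine Ideal.sum_mem _ fun i hi => ?_
      exact Ideal.mul_mem_right _ _ (Ideal.subset_span (Set.mem_image_of_mem _ hi))
    rw [← hv, Finsupp.linearCombination_apply]
    refine Submodule.sum_mem _ fun z _ => ?_
    change v z • (z : S) ∈ _
    rw [Algebra.smul_def]
    refine Ideal.mul_mem_right _ _ ?_
    have := Ideal.mem_map_of_mem (algebraMap A S) (hcoord z)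
    rw [Ideal.map_span, ← Set.image_comp] at this
    convert this using 3
    simp [hx]
    rfl
  obtain ⟨w, hw⟩ := hroot' e (algebraMap A S c)
  refine ⟨w, hw, ?_⟩
  obtain ⟨g, hg⟩ := (Submodule.mem_span_image_finset_iff_exists_fun' S).1 hpow
  choose h hh using fun i => hroot' e (g i)
  rw [Algebra.smul_def, ← hw, ← mul_pow] at hg
  have : w * u = ∑ i ∈ T, h i * x i := by
    apply iterateFrobenius_inj S p e
    simp only [iterateFrobenius_def, sum_pow_char_pow]
    rw [← hg]
    simp [mul_pow, hh]
  rw [this]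
  exact Ideal.sum_mem _ fun i hi => Ideal.mul_mem_left _ _
    (Ideal.subset_span (Set.mem_image_of_mem _ hi))

end

/-! ### A valuation with controlled values -/

/-- The elements `z` of `L` that are quotients `f / g` of power series with `ord g ≤ ord f`. -/
def orderSubring (n : ℕ) (k L : Type) [Field k] [Field L] [Algebra (MvPowerSeries (Fin n) k) L] :
    Subring L where
  carrier := {z | ∃ f g : MvPowerSeries (Fin n) k, g ≠ 0 ∧
    z * algebraMap _ L g = algebraMap _ L f ∧ g.order ≤ f.order}
  mul_mem' := by
    rintro z w ⟨f, g, hg, hz, h⟩ ⟨f', g', hg', hw, h'⟩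
    refine ⟨f * f', g * g', mul_ne_zero hg hg', ?_, ?_⟩
    · rw [map_mul, map_mul, ← hz, ← hw]; ring
    · rw [MvPowerSeries.order_mul, MvPowerSeries.order_mul]
      exact add_le_add h h'
  one_mem' := ⟨1, 1, one_ne_zero, by simp, le_rfl⟩
  add_mem' := by
    rintro z w ⟨f, g, hg, hz, h⟩ ⟨f', g', hg', hw, h'⟩
    refine ⟨f * g' + f' * g, g * g', mul_ne_zero hg hg', ?_, ?_⟩
    · simp only [map_mul, map_add, ← hz, ← hw]; ring
    · refine le_trans (le_min ?_ ?_) MvPowerSeries.min_order_le_add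
      · rw [MvPowerSeries.order_mul, MvPowerSeries.order_mul]
        exact add_le_add h le_rfl
      · rw [MvPowerSeries.order_mul, MvPowerSeries.order_mul, add_comm]
        exact add_le_add h' le_rfl
  zero_mem' := ⟨0, 1, one_ne_zero, by simp, by simp⟩
  neg_mem' := by
    rintro z ⟨f, g, hg, hz, h⟩
    exact ⟨-f, g, hg, by rw [map_neg, ← hz, neg_mul], by rwa [MvPowerSeries.order_neg]⟩

lemma order_X {n : ℕ} {k : Type} [Field k] (i : Fin n) :
    (MvPowerSeries.X i : MvPowerSeries (Fin n) k).order = 1 := by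
  classical
  rw [MvPowerSeries.X, MvPowerSeries.order_monomial_of_ne_zero one_ne_zero]
  simp

/-- There is a (multiplicative) valuation `v ≤ 1` on `S` for which a given variable `x o` has the
largest value among the variables, this value lies strictly between `0` and `1`, and the value of
every nonzero power series is at least a power of it. The valuation ring of `v` contains
`orderSubring`, and `x o` is a nonunit in it. The bounds hold as `x i / x o` and `x o ^ ord c / c`
belong to `orderSubring`. -/
lemma exists_valuation {n : ℕ} {k S : Type} [Field k] [CommRing S] [IsDomain S]
    [Algebra (MvPowerSeries (Fin n) k) S] [Algebra.IsIntegral (MvPowerSeries (Fin n) k) S]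
    (hinj : Function.Injective (algebraMap (MvPowerSeries (Fin n) k) S)) (x : Fin n → S)
    (hx : ∀ i, x i = algebraMap (MvPowerSeries (Fin n) k) S (MvPowerSeries.X i)) (o : Fin n) :
    ∃ (Γ : Type) (_ : LinearOrderedCommGroupWithZero Γ) (v : Valuation S Γ), (∀ s, v s ≤ 1) ∧
      (∀ i, v (x i) ≤ v (x o)) ∧ v (x o) < 1 ∧ v (x o) ≠ 0 ∧
      ∀ c : MvPowerSeries (Fin n) k, c ≠ 0 → ∃ m : ℕ, v (x o) ^ m ≤ v (algebraMap _ S c) := by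
  set A := MvPowerSeries (Fin n) k
  let L := FractionRing S
  have hinjL : Function.Injective (algebraMap A L) := by
    rw [IsScalarTower.algebraMap_eq A S L]
    exact (IsFractionRing.injective S L).comp hinj
  let O := orderSubring n k L
  let ξ : L := algebraMap S L (x o)
  have hxL : ∀ i, algebraMap S L (x i) = algebraMap A L (MvPowerSeries.X i) := fun i => by
    rw [hx, ← IsScalarTower.algebraMap_apply]
  have hXo : (MvPowerSeries.X o : A) ≠ 0 := fun h => by
    have := order_X (k := k) o
    rw [h, MvPowerSeries.order_zero] at this
    exact absurd this (by simp)
  have hξ0 : ξ ≠ 0 := by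
    rw [show ξ = _ from hxL o]
    exact (map_ne_zero_iff _ hinjL).2 hXo
  have hAO : ∀ f : A, algebraMap A L f ∈ O := fun f => ⟨f, 1, one_ne_zero,
    (congrArg _ (map_one _)).trans (mul_one _), by
    have : (1 : A).order = 0 := by
      by_contra h
      simpa using MvPowerSeries.order_ne_zero_iff_constCoeff_eq_zero.1 h
    rw [this]
    exact zero_le⟩
  have hξO : ξ ∈ O := by
    rw [show ξ = _ from hxL o]
    exact hAO _
  -- the inverse of `ξ` would have order `-1`
  have hne : Ideal.span {(⟨ξ, hξO⟩ : O)} ≠ ⊤ := by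
    intro h
    obtain ⟨⟨z, f, g, hg, hz, hfg⟩, hzξ⟩ :=
      Ideal.mem_span_singleton'.1 ((Ideal.eq_top_iff_one _).1 h)
    have h1 : z * ξ = 1 := congrArg Subtype.val hzξ
    have h2 : g = MvPowerSeries.X o * f := by
      apply hinjL
      rw [map_mul, ← hz, ← hxL]
      change _ = ξ * _
      rw [← mul_assoc, mul_comm ξ z, h1, one_mul]
    rw [h2, MvPowerSeries.order_mul, order_X] at hfg
    have hf : f.order ≠ ⊤ := by
      rw [Ne, MvPowerSeries.order_eq_top_iff]
      rintro rfl
      exact hg (by rw [h2, mul_zero])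
    lift f.order to ℕ using hf with m
    have : 1 + m ≤ m := by exact_mod_cast hfg
    omega
  obtain ⟨V, hOV, hV⟩ := Ideal.image_subset_nonunits_valuationSubring _ hne
  have hξV : V.valuation ξ < 1 := by
    rw [← ValuationSubring.mem_nonunits_iff]
    exact hV ⟨⟨ξ, hξO⟩, Ideal.subset_span rfl, rfl⟩
  have hvO : ∀ z ∈ O, V.valuation z ≤ 1 := fun z hz => (V.valuation_le_one_iff z).2 (hOV hz)
  have hξv : V.valuation ξ ≠ 0 := (map_ne_zero _).2 hξ0
  refine ⟨V.ValueGroup, inferInstance, V.valuation.comap (algebraMap S L), fun s => ?_, fun i => ?_,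
    hξV, hξv, fun c hc => ?_⟩
  · have hs : IsIntegral A (algebraMap S L s) :=
      (Algebra.IsIntegral.isIntegral (R := A) s).algebraMap
    obtain ⟨P, hP, hPs⟩ := hs
    let φ : A →+* V := (algebraMap A L).codRestrict V.toSubring fun f => hOV (hAO f)
    have hsV : IsIntegral V (algebraMap S L s) := by
      refine ⟨P.map φ, hP.map φ, ?_⟩
      rw [Polynomial.eval₂_map]
      exact hPs
    obtain ⟨t, ht⟩ := IsIntegrallyClosed.isIntegral_iff.1 hsV
    change V.valuation (algebraMap S L s) ≤ 1
    rw [← ht]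
    exact V.valuation_le_one t
  · change V.valuation (algebraMap S L (x i)) ≤ V.valuation ξ
    have : algebraMap S L (x i) / ξ ∈ O := by
      refine ⟨MvPowerSeries.X i, MvPowerSeries.X o, hXo, ?_, ?_⟩
      · rw [← hxL, ← hxL]
        exact div_mul_cancel₀ _ hξ0
      · rw [order_X, order_X]
    have := hvO _ this
    rw [map_div₀] at this
    exact (div_le_one₀ (zero_lt_iff.2 hξv)).1 this
  · have hc' : c.order ≠ ⊤ := by rwa [Ne, MvPowerSeries.order_eq_top_iff]
    obtain ⟨m, hm⟩ := ENat.ne_top_iff_exists.1 hc'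
    refine ⟨m, ?_⟩
    change V.valuation ξ ^ m ≤ V.valuation (algebraMap S L (algebraMap A S c))
    rw [← IsScalarTower.algebraMap_apply]
    have hcL : algebraMap A L c ≠ 0 := (map_ne_zero_iff _ hinjL).2 hc
    have : ξ ^ m / algebraMap A L c ∈ O := by
      refine ⟨MvPowerSeries.X o ^ m, c, hc, ?_, ?_⟩
      · rw [map_pow, ← hxL]
        exact div_mul_cancel₀ _ hcL
      · refine le_trans ?_ (MvPowerSeries.le_order_pow m)
        rw [order_X, ← hm]
        simp
    have := hvO _ this
    rw [map_div₀, map_pow] at this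
    exact (div_le_one₀ (zero_lt_iff.2 ((map_ne_zero _).2 hcL))).1 this

/-! ### A big Cohen-Macaulay algebra in characteristic `p` -/

/-- The sequences `w` in `S` all of whose powers eventually have value at least `t`. For `t < 1` this
encodes that the value of `w i` tends to `1`, in an arbitrary value group. -/
def slowSubmonoid {S Γ : Type} [CommRing S] [LinearOrderedCommGroupWithZero Γ] (v : Valuation S Γ)
    (t : Γ) (ht : t ≤ 1) : Submonoid (ℕ → S) where
  carrier := {w | ∀ N : ℕ, ∀ᶠ i in Filter.atTop, t ≤ v (w i) ^ N}
  one_mem' := fun N => Filter.Eventually.of_forall fun i => by simpa using ht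
  mul_mem' := by
    intro w w' hw hw' N
    filter_upwards [hw (2 * N), hw' (2 * N)] with i h h'
    rw [Pi.mul_apply, map_mul, mul_pow]
    rcases le_total (v (w i)) (v (w' i)) with hle | hle
    · refine h.trans ?_
      rw [two_mul, pow_add]
      gcongr
    · refine h'.trans ?_
      rw [two_mul, pow_add]
      gcongr

/-- Existence of a big Cohen-Macaulay algebra over `S`, namely the localization of `ℕ → S` at the sequences whose value tends
to `1`. -/
lemma exists_regular_algebra {n p : ℕ} {k S : Type} [Field k] [CommRing S] [IsDomain S]
    [Algebra (MvPowerSeries (Fin n) k) S] [Fact p.Prime] [CharP S p]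
    [Algebra.IsIntegral (MvPowerSeries (Fin n) k) S]
    (hinj : Function.Injective (algebraMap (MvPowerSeries (Fin n) k) S))
    (hroot : ∀ s : S, ∃ t, t ^ p = s) (x : Fin n → S)
    (hx : ∀ i, x i = algebraMap (MvPowerSeries (Fin n) k) S (MvPowerSeries.X i)) (hn : 0 < n) :
    ∃ (B : Type) (_ : CommRing B) (φ : S →+* B),
      Ideal.span (Set.range fun i => φ (x i)) ≠ ⊤ ∧
      ∀ (T : Finset (Fin n)) (j : Fin n), j ∉ T → ∀ b : B,
        φ (x j) * b ∈ Ideal.span ((fun i => φ (x i)) '' (T : Set (Fin n))) →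
        b ∈ Ideal.span ((fun i => φ (x i)) '' (T : Set (Fin n))) := by
  let o : Fin n := ⟨0, hn⟩
  obtain ⟨Γ, _, v, hv1, hvx, hvo1, hvo0, hvc⟩ := exists_valuation hinj x hx o
  let W := slowSubmonoid v (v (x o)) hvo1.le
  let D : S →+* (ℕ → S) := Pi.constRingHom ℕ S
  let φ : S →+* Localization W := (algebraMap (ℕ → S) (Localization W)).comp D
  have himg : ∀ T : Set (Fin n), Ideal.span ((fun i => φ (x i)) '' T) =
      (Ideal.span ((fun i => D (x i)) '' T)).map (algebraMap (ℕ → S) (Localization W)) := by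
    intro T
    rw [Ideal.map_span, ← Set.image_comp]
    rfl
  have hcomp : ∀ (T : Finset (Fin n)) (u : ℕ → S),
      u ∈ Ideal.span ((fun i => D (x i)) '' (T : Set (Fin n))) ↔
        ∀ i, u i ∈ Ideal.span (x '' (T : Set (Fin n))) := by
    intro T u
    constructor
    · intro hu i
      have := Ideal.mem_map_of_mem (Pi.evalRingHom (fun _ : ℕ => S) i) hu
      rw [Ideal.map_span, ← Set.image_comp] at this
      exact this
    · intro hu
      choose g hg using fun i => (Submodule.mem_span_image_finset_iff_exists_fun' S).1 (hu i)
      have : u = ∑ l ∈ T, (fun i => g i l) * D (x l) := by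
        ext i
        rw [← hg i, Finset.sum_apply]
        rfl
      rw [this]
      exact Ideal.sum_mem _ fun l hl => Ideal.mul_mem_left _ _
        (Ideal.subset_span (Set.mem_image_of_mem _ hl))
  refine ⟨Localization W, inferInstance, φ, fun h => ?_, fun T j hj b hb => ?_⟩
  · rw [← Set.image_univ, ← Finset.coe_univ, himg, Ideal.eq_top_iff_one,
      ← map_one (algebraMap (ℕ → S) (Localization W)),
      IsLocalization.algebraMap_mem_map_algebraMap_iff W] at h
    obtain ⟨m, hm, h⟩ := h
    rw [mul_one, hcomp] at h
    obtain ⟨i, hi⟩ := (hm 2).exists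
    have hle : v (m i) ≤ v (x o) := by
      obtain ⟨g, hg⟩ := (Submodule.mem_span_image_finset_iff_exists_fun' S).1 (h i)
      rw [← hg]
      refine v.map_sum_le fun l _ => ?_
      rw [smul_eq_mul, map_mul]
      exact mul_le_of_le_one_of_le (hv1 _) (hvx l)
    have h2 : v (x o) * 1 ≤ v (x o) * v (x o) := by
      rw [mul_one, ← pow_two]
      exact hi.trans (pow_le_pow_left₀ zero_le hle 2)
    exact absurd ((mul_le_mul_iff_right₀ (zero_lt_iff.2 hvo0)).1 h2) (not_le.2 hvo1)
  · rw [himg] at hb ⊢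
    obtain ⟨⟨u, s⟩, hus⟩ := IsLocalization.surj W b
    have hs : IsUnit (algebraMap (ℕ → S) (Localization W) s) := IsLocalization.map_units _ s
    have hu : algebraMap (ℕ → S) (Localization W) (D (x j) * u) ∈
        (Ideal.span ((fun i => D (x i)) '' (T : Set (Fin n)))).map
          (algebraMap (ℕ → S) (Localization W)) := by
      rw [map_mul, ← hus, ← mul_assoc]
      exact Ideal.mul_mem_right _ _ hb
    rw [IsLocalization.algebraMap_mem_map_algebraMap_iff W] at hu
    obtain ⟨m, hm, hu⟩ := hu
    rw [hcomp] at hu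
    have hu' : ∀ i, x j * (m i * u i) ∈ Ideal.span (x '' (T : Set (Fin n))) := fun i => by
      rw [mul_left_comm]
      exact hu i
    -- in the `i`-th coordinate, take a root `w` of the multiplier `c` so high that the value of
    -- `w ^ i` is at least that of `x o`
    have key : ∀ i : ℕ, ∃ w : S, v (x o) ≤ v w ^ i ∧
        w * (m i * u i) ∈ Ideal.span (x '' (T : Set (Fin n))) := by
      intro i
      obtain ⟨c, hc0, hc⟩ := colon_capturing hroot x hx T j hj _ (hu' i)
      obtain ⟨M, hM⟩ := hvc c hc0
      obtain ⟨e, he⟩ : ∃ e, i * (M + 1) ≤ p ^ e :=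
        ⟨i * (M + 1), (Nat.lt_pow_self (Fact.out : p.Prime).one_lt).le⟩
      obtain ⟨w, hw, hwu⟩ := hc e
      refine ⟨w, ?_, hwu⟩
      rw [← pow_le_pow_iff_left₀ zero_le zero_le (Nat.succ_ne_zero M)]
      calc v (x o) ^ (M + 1) ≤ v (x o) ^ M := pow_le_pow_right_of_le_one' hvo1.le (Nat.le_succ M)
        _ ≤ v w ^ p ^ e := by rwa [← map_pow v w, hw]
        _ ≤ v w ^ (i * (M + 1)) := pow_le_pow_right_of_le_one' (hv1 w) he
        _ = _ := pow_mul _ _ _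
    choose w hw hwu using key
    have hwW : w ∈ W := fun N => by
      filter_upwards [Filter.eventually_ge_atTop N] with i hi
      exact (hw i).trans (pow_le_pow_right_of_le_one' (hv1 _) hi)
    have hmem : algebraMap (ℕ → S) (Localization W) u ∈
        (Ideal.span ((fun i => D (x i)) '' (T : Set (Fin n)))).map
          (algebraMap (ℕ → S) (Localization W)) := by
      rw [IsLocalization.algebraMap_mem_map_algebraMap_iff W]
      refine ⟨w * m, W.mul_mem hwW hm, ?_⟩
      rw [hcomp]
      intro i
      rw [mul_assoc]
      exact hwu i
    rw [← hus] at hmem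
    exact (Ideal.mul_unit_mem_iff_mem _ hs).1 hmem

/-! ### Parameters and the residual algebra -/

lemma isAdicComplete_of_surjective {R D : Type} [CommRing R] [CommRing D] [IsLocalRing R]
    [IsLocalRing D] [IsNoetherianRing D] (f : R →+* D) (hf : Function.Surjective f)
    (hR : IsAdicComplete (maximalIdeal R) R) : IsAdicComplete (maximalIdeal D) D := by
  let _ := f.toAlgebra
  have h1 : IsPrecomplete (maximalIdeal R) D := by
    rw [← AdicCompletion.of_surjective_iff]
    have hR' := (AdicCompletion.of_surjective_iff (I := maximalIdeal R) (M := R)).2 inferInstance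
    have hm := AdicCompletion.map_surjective (maximalIdeal R) (f := Algebra.linearMap R D) hf
    intro z
    obtain ⟨w, rfl⟩ := hm z
    obtain ⟨r, rfl⟩ := hR' w
    exact ⟨f r, by rw [AdicCompletion.map_of]; rfl⟩
  have h2 : IsPrecomplete (maximalIdeal D) D := by
    rw [← map_maximalIdeal_of_surjective f hf]
    exact (IsPrecomplete.map_algebraMap_iff (S := D)).2 h1
  exact { toIsHausdorff := inferInstance, toIsPrecomplete := h2 }

/-- The prime is the first term of a chain of primes over `I` of maximal length. -/
lemma exists_prime_with_ringKrullDim_eq {R : Type} [CommRing R] {I : Ideal R} {n : ℕ}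
    (hI : ringKrullDim (R ⧸ I) = n) :
    ∃ P : Ideal R, P.IsPrime ∧ I ≤ P ∧ ringKrullDim (R ⧸ P) = n := by
  have h := hI
  rw [ringKrullDim_quotient] at h
  obtain ⟨l, hl⟩ := Order.le_krullDim_iff.1 h.ge
  have hle : I ≤ l.head.1.asIdeal := l.head.2
  refine ⟨l.head.1.asIdeal, l.head.1.isPrime, hle, le_antisymm ?_ ?_⟩
  · rw [← hI]
    exact ringKrullDim_le_of_surjective (Ideal.Quotient.factor hle)
      (Ideal.Quotient.factor_surjective hle)
  · rw [ringKrullDim_quotient, Order.le_krullDim_iff]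
    refine ⟨⟨l.length, fun i => ⟨(l i).1, ?_⟩, fun i => l.step i⟩, hl⟩
    exact (LTSeries.head_le l i : l.head ≤ l i)

/-- An element `r` with `dim R / r = n` extends by `n` elements to one whose generated ideal is
primary to the maximal ideal; these elements lift a system of parameters of `R / r`. -/
lemma exists_parameters {R : Type} [CommRing R] [IsLocalRing R] [IsNoetherianRing R] {r : R}
    (hr : r ∈ maximalIdeal R) {n : ℕ} (hdim : ringKrullDim (R ⧸ Ideal.span {r}) = n) :
    ∃ x : Fin n → R, (∀ i, x i ∈ maximalIdeal R) ∧
      (Ideal.span (Set.range (Fin.cons r x : Fin (n + 1) → R))).radical = maximalIdeal R := by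
  have hne : Ideal.span {r} ≠ ⊤ := fun h => (maximalIdeal.isMaximal R).ne_top
    (top_le_iff.1 (h ▸ (Ideal.span_singleton_le_iff_mem _).2 hr))
  have : Nontrivial (R ⧸ Ideal.span {r}) := Ideal.Quotient.nontrivial_iff.2 hne
  let f := Ideal.Quotient.mk (Ideal.span {r})
  have hf : Function.Surjective f := Ideal.Quotient.mk_surjective
  have : IsLocalRing (R ⧸ Ideal.span {r}) := IsLocalRing.of_surjective' f hf
  have hloc : IsLocalHom f := IsLocalHom.of_surjective f hf
  obtain ⟨s, hs, hcard⟩ := Ideal.exists_finset_card_eq_height_of_isNoetherianRing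
    (maximalIdeal (R ⧸ Ideal.span {r}))
  have hcard' : s.card = n := by
    have := maximalIdeal_height_eq_ringKrullDim (R := R ⧸ Ideal.span {r})
    rw [hdim, ← hcard] at this
    exact_mod_cast this
  have hrad : (Ideal.span (s : Set (R ⧸ Ideal.span {r}))).radical = maximalIdeal _ := by
    refine le_antisymm (hs.1.1.radical_le_iff.2 hs.1.2) ?_
    rw [Ideal.radical_eq_sInf]
    refine le_sInf fun J hJ => ?_
    exact hs.2 ⟨hJ.2, hJ.1⟩ (le_maximalIdeal hJ.2.ne_top)
  let e := s.equivFinOfCardEq hcard'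
  choose g hg using fun i => hf ((e.symm i : s) : R ⧸ Ideal.span {r})
  have hgm : ∀ i, g i ∈ maximalIdeal R := by
    intro i
    rw [← maximalIdeal_comap f, Ideal.mem_comap, hg]
    exact hs.1.2 (Ideal.subset_span (e.symm i).2)
  refine ⟨g, hgm, le_antisymm ?_ ?_⟩
  · refine (maximalIdeal.isMaximal R).isPrime.radical_le_iff.2 (Ideal.span_le.2 ?_)
    rintro _ ⟨i, rfl⟩
    refine Fin.cases ?_ (fun i => ?_) i
    · exact hr
    · exact hgm i
  · intro z hz
    rw [← maximalIdeal_comap f, Ideal.mem_comap, ← hrad] at hz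
    obtain ⟨N, hN⟩ := hz
    refine ⟨N, ?_⟩
    have hspan : Ideal.span (s : Set (R ⧸ Ideal.span {r})) = (Ideal.span (Set.range g)).map f := by
      rw [Ideal.map_span, ← Set.range_comp]
      congr 1
      ext w
      constructor
      · intro hw
        exact ⟨e ⟨w, hw⟩, by simp [hg]⟩
      · rintro ⟨i, rfl⟩
        simp [hg]
    rw [hspan, ← map_pow, Ideal.mem_map_iff_of_surjective f hf] at hN
    obtain ⟨w, hw, hwz⟩ := hN
    have h1 := Ideal.Quotient.eq.1 hwz
    obtain ⟨c, hc⟩ := Ideal.mem_span_singleton'.1 h1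
    have hz' : z ^ N = w - c * r := by rw [hc]; ring
    rw [hz']
    refine sub_mem (Ideal.span_mono ?_ hw) (Ideal.mul_mem_left _ _ (Ideal.subset_span ⟨0, rfl⟩))
    rintro _ ⟨i, rfl⟩
    exact ⟨i.succ, rfl⟩

/-- The characteristic `p` part of the construction: an algebra `B` over an integral
extension `W` of `R` with `p`-th roots, on which the parameters other than `p` form a regular
sequence. It factors through `W / Q`, where `Q` lies over a prime `P ∋ p` of `R` with
`dim R / P = dim R / p`. -/
lemma exists_residual_algebra {p : ℕ} (hp : p.Prime) {R W : Type} [CommRing R]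
    [IsNoetherianRing R] [IsLocalRing R] (hcompl : IsAdicComplete (maximalIdeal R) R)
    [CommRing W] [Algebra R W] [Algebra.IsIntegral R W]
    (hinj : Function.Injective (algebraMap R W)) (hroot : ∀ w : W, ∃ t, t ^ p = w) {n : ℕ}
    (hdim : ringKrullDim (R ⧸ Ideal.span {(p : R)}) = n) (x : Fin n → R)
    (hxm : ∀ i, x i ∈ maximalIdeal R)
    (hx : (Ideal.span (Set.range (Fin.cons (p : R) x : Fin (n + 1) → R))).radical =
      maximalIdeal R) :
    ∃ (B : Type) (_ : CommRing B) (ψ : W →+* B), ψ p = 0 ∧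
      (∀ (w : W) (a m : ℕ), 0 < a → w ^ m = (p : W) ^ a → ψ w = 0) ∧
      Ideal.span (Set.range fun i => ψ (algebraMap R W (x i))) ≠ ⊤ ∧
      ∀ (T : Finset (Fin n)) (j : Fin n), j ∉ T → ∀ b : B,
        ψ (algebraMap R W (x j)) * b ∈
          Ideal.span ((fun i => ψ (algebraMap R W (x i))) '' (T : Set (Fin n))) →
        b ∈ Ideal.span ((fun i => ψ (algebraMap R W (x i))) '' (T : Set (Fin n))) := by
  obtain ⟨P, hP, hpP, hPdim⟩ := exists_prime_with_ringKrullDim_eq hdim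
  replace hpP : (p : R) ∈ P := hpP (Ideal.mem_span_singleton_self _)
  obtain ⟨Q, -, hQ, hQP⟩ := Ideal.exists_ideal_over_prime_of_isIntegral P (⊥ : Ideal W)
    (by rw [← RingHom.ker_eq_comap_bot, (RingHom.injective_iff_ker_eq_bot _).1 hinj]
        exact bot_le)
  let f := Ideal.Quotient.mk P
  have hf : Function.Surjective f := Ideal.Quotient.mk_surjective
  have : Nontrivial (R ⧸ P) := Ideal.Quotient.nontrivial_iff.2 hP.ne_top
  have : IsLocalRing (R ⧸ P) := IsLocalRing.of_surjective' f hf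
  have hloc : IsLocalHom f := IsLocalHom.of_surjective f hf
  have hfp : ((p : ℕ) : R ⧸ P) = 0 := by
    rw [← map_natCast f]; exact Ideal.Quotient.eq_zero_iff_mem.2 hpP
  have : CharP (R ⧸ P) p := (CharP.charP_iff_prime_eq_zero hp).2 hfp
  have := isAdicComplete_of_surjective f hf hcompl
  obtain ⟨s, hs⟩ : ∃ s, maximalIdeal R ^ s ≤
      Ideal.span (Set.range (Fin.cons (p : R) x : Fin (n + 1) → R)) := by
    rw [← hx]
    exact Ideal.exists_radical_pow_le_of_fg _ (IsNoetherian.noetherian _)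
  obtain ⟨ev, hev, hevint, hevX⟩ := exists_noether_normalization hp hPdim (fun i => f (x i))
    (fun i => by
      rw [← Ideal.mem_comap, maximalIdeal_comap f]; exact hxm i) s (by
      rw [← map_maximalIdeal_of_surjective f hf, ← Ideal.map_pow]
      refine (Ideal.map_mono hs).trans ?_
      rw [Ideal.map_span, Ideal.span_le]
      rintro _ ⟨_, ⟨i, rfl⟩, rfl⟩
      refine Fin.cases ?_ (fun i => ?_) i
      · rw [Fin.cons_zero, Ideal.Quotient.eq_zero_iff_mem.2 hpP]
        exact zero_mem _
      · rw [Fin.cons_succ]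
        exact Ideal.subset_span ⟨i, rfl⟩)
  let g := Ideal.Quotient.mk Q
  let h : R ⧸ P →+* W ⧸ Q := Ideal.quotientMap Q (algebraMap R W) hQP.ge
  have hh : Function.Injective h := Ideal.quotientMap_injective' hQP.le
  have hhf : ∀ r, h (f r) = g (algebraMap R W r) := fun r => rfl
  have hhint : h.IsIntegral := by
    refine RingHom.IsIntegral.tower_top f h ?_
    have : h.comp f = g.comp (algebraMap R W) := rfl
    rw [this]
    exact RingHom.IsIntegral.trans _ _ (fun w => Algebra.IsIntegral.isIntegral w)
      (RingHom.isIntegral_of_surjective _ Ideal.Quotient.mk_surjective)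
  let _ := (h.comp ev).toAlgebra
  have hgp : ((p : ℕ) : W ⧸ Q) = 0 := by rw [← map_natCast h, hfp, map_zero]
  have : CharP (W ⧸ Q) p := (CharP.charP_iff_prime_eq_zero hp).2 hgp
  have : Fact p.Prime := ⟨hp⟩
  have hint : Algebra.IsIntegral (MvPowerSeries (Fin n) (ResidueField (R ⧸ P))) (W ⧸ Q) :=
    ⟨fun z => RingHom.IsIntegral.trans ev h hevint hhint z⟩
  have hpow : ∀ (w : W) (a m : ℕ), 0 < a → w ^ m = (p : W) ^ a → g w = 0 := by
    intro w a m ha hw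
    refine eq_zero_of_pow_eq_zero (n := m) ?_
    rw [← map_pow, hw, map_pow, map_natCast, hgp, zero_pow ha.ne']
  rcases Nat.eq_zero_or_pos n with rfl | hn
  -- for `n = 0` there are no `x i`, and `W ⧸ Q` itself works
  · refine ⟨W ⧸ Q, inferInstance, g, by rw [map_natCast, hgp], hpow, ?_, fun _ j => j.elim0⟩
    rw [Set.range_eq_empty, Ideal.span_empty]
    exact bot_ne_top
  · obtain ⟨B, _, φ, hB1, hB2⟩ := exists_regular_algebra (k := ResidueField (R ⧸ P)) (p := p)
      (hh.comp hev) (fun z => by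
        obtain ⟨w, rfl⟩ := Ideal.Quotient.mk_surjective z
        obtain ⟨t, rfl⟩ := hroot w
        exact ⟨g t, (map_pow g t p).symm⟩) (fun i => g (algebraMap R W (x i)))
      (fun i => by
        rw [RingHom.algebraMap_toAlgebra, RingHom.comp_apply, hevX]; rfl) hn
    refine ⟨B, inferInstance, φ.comp g, ?_, ?_, hB1, hB2⟩
    · rw [RingHom.comp_apply, map_natCast, hgp, map_zero]
    · intro w a m ha hw
      rw [RingHom.comp_apply, hpow w a m ha hw, map_zero]

/-- **Main Theorem.** Let `(R, m)` be a complete Noetherian local domain of mixed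
characteristic `p > 0` of Krull dimension `d`, with absolute integral closure `R⁺`. Then
there exist `x₂, …, x_d ∈ m` such that `p, x₂, …, x_d` is a system of parameters of `R`
(encoded as `x : Fin d → R` with `x 0 = p`), together with an `R⁺`-algebra `B`, such that:
(1) `(p, x₂, …, x_d)B ≠ B`;
(2) `x₂, …, x_d` is a regular sequence on `B/pB`;
(3) `p` is not nilpotent in `B` and for all positive integers `a, n` and every `y ∈ R⁺` with
`yⁿ = pᵃ`, the image of `y` in `B` annihilates `(0 :_B p)`. -/
theorem exists_weakly_almost_CM_algebra
    (p : ℕ) (hp : p.Prime) (d : ℕ) (hd : 0 < d)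
    (R : Type) [CommRing R] [IsDomain R] [IsNoetherianRing R] [IsLocalRing R]
    [CharZero R] (hcompl : IsAdicComplete (maximalIdeal R) R)
    (hpm : (p : R) ∈ maximalIdeal R)
    (hdim : ringKrullDim R = d) :
    ∃ x : Fin d → R, x ⟨0, hd⟩ = (p : R) ∧ (∀ i, x i ∈ maximalIdeal R) ∧
      (Ideal.span (Set.range x)).radical = maximalIdeal R ∧
      ∃ (B : Type) (_ : CommRing B)
        (_ : Algebra (integralClosure R (AlgebraicClosure (FractionRing R))) B),
        -- (1)
        Ideal.span (Set.range fun i =>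
          algebraMap (integralClosure R (AlgebraicClosure (FractionRing R))) B
            (algebraMap R (integralClosure R (AlgebraicClosure (FractionRing R))) (x i))) ≠ ⊤ ∧
        -- (2)
        (∀ (j : ℕ) (hj : j < d), 1 ≤ j → ∀ b : B,
          algebraMap (integralClosure R (AlgebraicClosure (FractionRing R))) B
              (algebraMap R (integralClosure R (AlgebraicClosure (FractionRing R))) (x ⟨j, hj⟩)) * b ∈
            Ideal.span (Set.range fun i : Fin j =>
              algebraMap (integralClosure R (AlgebraicClosure (FractionRing R))) B
                (algebraMap R (integralClosure R (AlgebraicClosure (FractionRing R)))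
                  (x ⟨i.1, i.2.trans hj⟩))) →
          b ∈ Ideal.span (Set.range fun i : Fin j =>
              algebraMap (integralClosure R (AlgebraicClosure (FractionRing R))) B
                (algebraMap R (integralClosure R (AlgebraicClosure (FractionRing R)))
                  (x ⟨i.1, i.2.trans hj⟩)))) ∧
        -- (3)
        ¬ IsNilpotent (p : B) ∧
        (∀ a n : ℕ, 0 < a → 0 < n →
          ∀ y : integralClosure R (AlgebraicClosure (FractionRing R)),
            y ^ n = (p : integralClosure R (AlgebraicClosure (FractionRing R))) ^ a →
            ∀ c : B, (p : B) * c = 0 →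
              algebraMap (integralClosure R (AlgebraicClosure (FractionRing R))) B y * c = 0) := by
  obtain ⟨n, rfl⟩ : ∃ n, d = n + 1 := ⟨d - 1, by omega⟩
  have hp0 : (p : R) ≠ 0 := Nat.cast_ne_zero.2 hp.ne_zero
  have hdim' : ringKrullDim (R ⧸ Ideal.span {(p : R)}) = n := by
    have h := ringKrullDim_quotient_span_singleton_succ_eq_ringKrullDim_of_mem_nonZeroDivisors
      (mem_nonZeroDivisors_of_ne_zero hp0) hpm
    rw [hdim, Nat.cast_add, Nat.cast_one] at h
    exact ENat.WithBot.add_one_cancel.1 h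
  obtain ⟨x, hxm, hx⟩ := exists_parameters hpm hdim'
  refine ⟨Fin.cons (p : R) x, rfl, ?_, hx, ?_⟩
  · intro i
    refine Fin.cases ?_ (fun i => ?_) i
    · exact hpm
    · exact hxm i
  let K := AlgebraicClosure (FractionRing R)
  let W := integralClosure R K
  have hinjK : Function.Injective (algebraMap R K) := by
    rw [IsScalarTower.algebraMap_eq R (FractionRing R) K, RingHom.coe_comp]
    exact (algebraMap (FractionRing R) K).injective.comp (IsFractionRing.injective R _)
  have hinj : Function.Injective (algebraMap R W) := by
    refine Function.Injective.of_comp (f := algebraMap W K) ?_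
    rw [← RingHom.coe_comp, ← IsScalarTower.algebraMap_eq]
    exact hinjK
  have hroot : ∀ w : W, ∃ t, t ^ p = w := by
    intro w
    obtain ⟨z, hz⟩ := IsAlgClosed.exists_pow_nat_eq (w : K) hp.pos
    have hzi : IsIntegral R z := by
      refine IsIntegral.of_pow hp.pos ?_
      rw [hz]
      exact w.2
    exact ⟨⟨z, hzi⟩, Subtype.ext hz⟩
  obtain ⟨B, _, ψ, hψp, hψ, hB1, hB2⟩ :=
    exists_residual_algebra hp hcompl hinj hroot hdim' x hxm hx
  have hBp : ((p : ℕ) : B) = 0 := by rw [← map_natCast ψ, hψp]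
  have hKp : ((p : ℕ) : K) ≠ 0 := by
    rw [← map_natCast (algebraMap R K)]
    exact (map_ne_zero_iff _ hinjK).2 hp0
  let θ : W →+* B × K := ψ.prod (algebraMap W K)
  refine ⟨B × K, inferInstance, θ.toAlgebra, ?_, ?_, ?_, ?_⟩
  · intro htop
    apply hB1
    rw [eq_top_iff, ← Ideal.map_top (RingHom.fst B K), ← htop, Ideal.map_span, Ideal.span_le]
    rintro _ ⟨_, ⟨i, rfl⟩, rfl⟩
    refine Fin.cases ?_ (fun i => ?_) i
    · change ψ (algebraMap R W (p : R)) ∈ _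
      rw [map_natCast, hψp]
      exact zero_mem _
    · exact Ideal.subset_span ⟨i, rfl⟩
  · intro j hj hj1 b hb
    obtain ⟨j, rfl⟩ : ∃ i, j = i + 1 := ⟨j - 1, by omega⟩
    set J : Ideal (B × K) := Ideal.span (Set.range fun i : Fin (j + 1) =>
      θ (algebraMap R W ((Fin.cons (p : R) x : Fin (n + 1) → R) ⟨i.1, i.2.trans hj⟩))) with hJ
    change b ∈ J
    change θ (algebraMap R W (x ⟨j, by omega⟩)) * b ∈ J at hb
    have hpJ : (p : B × K) ∈ J := by
      refine Ideal.subset_span ⟨0, ?_⟩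
      change θ (algebraMap R W (p : R)) = _
      rw [map_natCast, map_natCast]
    let T : Finset (Fin n) := Finset.univ.filter fun i => i.1 < j
    have hmap : J.map (RingHom.fst B K) =
        Ideal.span ((fun i => ψ (algebraMap R W (x i))) '' (T : Set (Fin n))) := by
      rw [hJ, Ideal.map_span]
      refine le_antisymm (Ideal.span_le.2 ?_) (Ideal.span_le.2 ?_)
      · rintro _ ⟨_, ⟨⟨i, hi⟩, rfl⟩, rfl⟩
        rcases i with _ | i
        · change ψ (algebraMap R W (p : R)) ∈ _
          rw [map_natCast, hψp]
          exact zero_mem _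
        · exact Ideal.subset_span ⟨⟨i, by omega⟩, by simpa [T] using hi, rfl⟩
      · rintro _ ⟨i, hi, rfl⟩
        have hi' : i.1 < j := by simpa [T] using hi
        exact Ideal.subset_span ⟨_, ⟨⟨i.1 + 1, by omega⟩, rfl⟩, rfl⟩
    have hfst : b.1 ∈ J.map (RingHom.fst B K) := by
      rw [hmap]
      refine hB2 T ⟨j, by omega⟩ (by simp [T]) b.1 ?_
      rw [← hmap]
      exact Ideal.mem_map_of_mem (RingHom.fst B K) hb
    obtain ⟨c, hc, hcb⟩ := (Ideal.mem_map_iff_of_surjective (RingHom.fst B K)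
      Prod.fst_surjective).1 hfst
    -- `p` generates the factor `K`, so `b` and `c` agree modulo `p`
    have hb' : b = c * (1, 0) + (p : B × K) * (0, b.2 / p) := by
      refine Prod.ext ?_ ?_
      · simpa using hcb.symm
      · simp only [Prod.snd_add, Prod.snd_mul, mul_zero, zero_add, Prod.snd_natCast]
        rw [mul_div_cancel₀ _ hKp]
    rw [hb']
    exact add_mem (Ideal.mul_mem_right _ _ hc) (Ideal.mul_mem_right _ _ hpJ)
  · rintro ⟨m, hm⟩
    have := congrArg Prod.snd hm
    rw [Prod.pow_snd, Prod.snd_natCast] at this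
    exact hKp (eq_zero_of_pow_eq_zero this)
  · intro a m ha _ y hy c hc
    refine Prod.ext ?_ ?_
    · change ψ y * c.1 = 0
      rw [hψ y a m ha hy, zero_mul]
    · have h2 := congrArg Prod.snd hc
      rw [Prod.snd_mul, Prod.snd_natCast] at h2
      change algebraMap W K y * c.2 = 0
      rw [(mul_eq_zero.1 h2).resolve_left hKp, mul_zero]
end

section
/- There exists an E(R^+)-algebra S satisfying: (1) (⟨p⟩, ⟨x_2⟩, ..., ⟨x_d⟩)S ≠ S; (2) ⟨x_2⟩, ..., ⟨x_d⟩ is a regular sequence on S/⟨p⟩S; (3) ⟨p⟩ is not nilpotent in S, and for every k ≥ 1 and every ρ ∈ E(R^+) with ρ^{p^k} = ⟨p⟩, the ideal (0 :_S ⟨p⟩) = {s ∈ S : ⟨p⟩s = 0} is annihilated by ρ; (4) S is a perfect ring of characteristic p (the Frobenius endomorphism x ↦ x^p of S is bijective). Moreover there is an E(R^+)-algebra homomorphism from S to the localization of E(R^+) at the powers of the element ⟨x_2⟩⋯⟨x_d⟩. -/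
/-!
The algebra is a product `S = L × S'`, where `L` is the localization of `E = E(R⁺)` at the powers
of `⟨x₂⟩⋯⟨x_d⟩` and `S'` is a perfect `E`-algebra of characteristic `p` in which `⟨p⟩` maps to `0`
and over which `⟨x₂⟩, …, ⟨x_d⟩` is a regular sequence.

*Why the product suffices.* In `L` each `⟨xᵢ⟩` is a unit, so regularity on `S / ⟨p⟩S` and properness
of `(⟨p⟩, ⟨x₂⟩, …, ⟨x_d⟩)S` are read off on `S'`. The image of `⟨p⟩` in `L` is not nilpotent because
`⟨p⟩⟨x₂⟩⋯⟨x_d⟩` is not nilpotent in `E`: otherwise all powers of `p` would divide a fixed power of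
`p x₂⋯x_d` in `R⁺`, which a prime of `R⁺` over `pR` forbids (`prod_not_isNilpotent`). The homomorphism
to `L` is the first projection. Both factors are perfect, and the almost-vanishing of `(0 : ⟨p⟩)`
holds in any perfect ring: if `ρ ^ p ^ k = ⟨p⟩` and `⟨p⟩ s = 0`, then `(ρ s) ^ p ^ k = 0`.

*Construction of `S'`.* Let `A = R / pR`, let `P` be a prime of `R⁺` over `pR`, and let `K` be an
algebraic closure of the fraction field of `R⁺ / P`, so that `A ⊆ K`. `S'` is the ring `boundedSeq`
of sequences `s : ℕ → K` such that, for some `e`, all the `s n ^ p ^ e` lie in one finitely generated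
`A`-submodule of `K`; it is perfect because `K` is. The ring `E` acts through its zeroth coordinate
followed by `b ↦ (n ↦ b ^ p ^ n)` (`frobSeq`), so that `⟨xᵢ⟩` becomes the sequence `xᵢ ^ p ^ n`. Thus
the `n`-th coordinate sees `K` as an `A`-module through the `n`-th power of Frobenius, and the common
finitely generated module keeps enough finiteness:

* if `(⟨p⟩, ⟨x₂⟩, …, ⟨x_d⟩)S' = S'`, then `1` lies in `𝔪 ^ k M` for every `k`, with `M` finitely
  generated, which contradicts Krull's intersection theorem (`boundedSeq_span_ne_top`);
* a finitely generated `A`-submodule of `K` lies in a free one, and there a relation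
  `x_j ^ N m ∈ (x₂ ^ N, …, x_{j-1} ^ N)` can be divided by `x_j ^ N`, since the powers of the `xᵢ`
  form a regular sequence on the regular ring `A` (`boundedSeq_mem_span_of_mul_mem`).

The facts needed about a regular system of parameters (subsets of it generate primes, powers of it
are regular) are obtained by dimension counting.
-/

open IsLocalRing

/-- The absolute integral closure `R⁺` of a domain `R`. -/
noncomputable def AbsIntClosure (R : Type) [CommRing R] [IsDomain R] : Type :=
  integralClosure R (AlgebraicClosure (FractionRing R))

noncomputable instance (R : Type) [CommRing R] [IsDomain R] : CommRing (AbsIntClosure R) :=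
  inferInstanceAs (CommRing (integralClosure R (AlgebraicClosure (FractionRing R))))

noncomputable instance (R : Type) [CommRing R] [IsDomain R] : Algebra R (AbsIntClosure R) :=
  inferInstanceAs (Algebra R (integralClosure R (AlgebraicClosure (FractionRing R))))

/-! ### Regular local rings are domains -/

lemma dim_cancel {D : WithBot ℕ∞} {n k : ℕ} (h : ((n + k : ℕ) : WithBot ℕ∞) ≤ D + k) :
    (n : WithBot ℕ∞) ≤ D := by
  induction D with
  | bot => simp at h
  | coe e =>
    induction e with
    | top => exact le_top
    | coe m =>
      have h' : n + k ≤ m + k := by exact_mod_cast h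
      have : n ≤ m := by omega
      exact_mod_cast this

lemma maximalIdeal_quotient_eq_map {B : Type} [CommRing B] [IsLocalRing B] (I : Ideal B)
    [IsLocalRing (B ⧸ I)] :
    maximalIdeal (B ⧸ I) = (maximalIdeal B).map (Ideal.Quotient.mk I) := by
  have hs := Ideal.Quotient.mk_surjective (I := I)
  exact (IsLocalRing.map_maximalIdeal_of_surjective _ hs).symm

lemma krullDim_le_card {B : Type} [CommRing B] [IsLocalRing B] [IsNoetherianRing B]
    (s : Finset B) (hs : maximalIdeal B = Ideal.span (s : Set B)) :
    ringKrullDim B ≤ s.card := by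
  refine (ringKrullDim_le_spanFinrank_maximalIdeal B).trans ?_
  rw [hs]
  have := Submodule.spanFinrank_span_le_ncard_of_finite (R := B) (s := (s : Set B)) s.finite_toSet
  rw [Set.ncard_coe_finset] at this
  exact_mod_cast this

/-- A Noetherian local ring whose maximal ideal is generated by at most `n ≤ dim B` elements is a
domain. By induction `B ⧸ (y)` is a domain for a generator `y`; a dimension count puts a prime `Q`
at the bottom of a maximal chain inside `(y)` but does not let it contain `y`, whence `Q = y Q` and
`Q = 0` by Nakayama. -/
theorem isDomain_of_card_le_krullDim (n : ℕ) : ∀ (B : Type) [CommRing B] [IsLocalRing B]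
    [IsNoetherianRing B] (s : Finset B), maximalIdeal B = Ideal.span (s : Set B) → s.card ≤ n →
    (n : WithBot ℕ∞) ≤ ringKrullDim B → IsDomain B := by
  classical
  induction n with
  | zero =>
    intro B _ _ _ s hs hc _
    have : s = ∅ := by simpa using hc
    have h0 : maximalIdeal B = ⊥ := by simpa [this] using hs
    have := (IsLocalRing.isField_iff_maximalIdeal_eq.mpr h0)
    exact this.isDomain
  | succ n ih =>
    intro B _ _ _ s hs hc hdim
    obtain ⟨y, hy⟩ : s.Nonempty := by
      by_contra h
      rw [Finset.not_nonempty_iff_eq_empty] at h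
      have := hdim.trans (krullDim_le_card s hs)
      rw [h] at this
      have : n + 1 ≤ 0 := by exact_mod_cast this
      omega
    have hym : y ∈ maximalIdeal B := hs ▸ Ideal.subset_span hy
    have hyt : Ideal.span {y} ≠ ⊤ := fun h => (maximalIdeal.isMaximal B).ne_top
      (top_le_iff.mp (h ▸ (Ideal.span_singleton_le_iff_mem _).mpr hym))
    have : Nontrivial (B ⧸ Ideal.span {y}) := Ideal.Quotient.nontrivial_iff.mpr hyt
    have : IsLocalRing (B ⧸ Ideal.span {y}) :=
      IsLocalRing.of_surjective' _ Ideal.Quotient.mk_surjective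
    let s' : Finset (B ⧸ Ideal.span {y}) := (s.erase y).image (Ideal.Quotient.mk _)
    have hs'c : s'.card ≤ n := Finset.card_image_le.trans
      (by rw [Finset.card_erase_of_mem hy]; omega)
    have hs' : maximalIdeal (B ⧸ Ideal.span {y}) = Ideal.span (s' : Set _) := by
      rw [maximalIdeal_quotient_eq_map, hs]
      conv_lhs => rw [← Finset.insert_erase hy]
      rw [Finset.coe_insert,
        Ideal.span_insert, Ideal.map_sup, Ideal.map_quotient_self, bot_sup_eq, Ideal.map_span,
        Finset.coe_image]
    have hup : ringKrullDim (B ⧸ Ideal.span {y}) ≤ n :=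
      (krullDim_le_card s' hs').trans (by exact_mod_cast hs'c)
    have hlow : (n : WithBot ℕ∞) ≤ ringKrullDim (B ⧸ Ideal.span {y}) := by
      have h := ringKrullDim_le_ringKrullDim_quotient_add_card ({y} : Finset B)
        (by simpa [IsLocalRing.ringJacobson_eq_maximalIdeal] using hym)
      rw [Finset.coe_singleton] at h
      exact dim_cancel (k := 1) (hdim.trans h)
    have hdom := ih (B ⧸ Ideal.span {y}) s' hs' hs'c hlow
    -- the bottom of a chain of primes of length `n + 1`
    obtain ⟨l, hl⟩ := Order.le_krullDim_iff.mp hdim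
    set Q : Ideal B := l.head.asIdeal with hQ
    have hQp : Q.IsPrime := l.head.isPrime
    have hQdim : ((n + 1 : ℕ) : WithBot ℕ∞) ≤ ringKrullDim (B ⧸ Q) := by
      rw [ringKrullDim_quotient]
      refine Order.le_krullDim_iff.mpr ⟨⟨l.length, fun i => ⟨l i, ?_⟩, fun i => l.step i⟩, hl⟩
      exact LTSeries.head_le l i
    have hyQ : y ∉ Q := by
      intro h
      have h1 := ringKrullDim_le_of_surjective
        (Ideal.Quotient.factor ((Ideal.span_singleton_le_iff_mem Q).mpr h))
        (Ideal.Quotient.factor_surjective _)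
      have : n + 1 ≤ n := by exact_mod_cast (hQdim.trans (h1.trans hup))
      omega
    have hQQ : ringKrullDim (B ⧸ Q) ≤ ringKrullDim (B ⧸ (Q ⊔ Ideal.span {y})) + 1 := by
      have : IsLocalRing (B ⧸ Q) := IsLocalRing.of_surjective' _ Ideal.Quotient.mk_surjective
      have h := ringKrullDim_le_ringKrullDim_quotient_add_card
        ({Ideal.Quotient.mk Q y} : Finset (B ⧸ Q))
        (by
          simp only [Finset.coe_singleton, IsLocalRing.ringJacobson_eq_maximalIdeal,
            Set.singleton_subset_iff, SetLike.mem_coe, maximalIdeal_quotient_eq_map]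
          exact Ideal.mem_map_of_mem _ hym)
      rw [Finset.coe_singleton] at h
      refine h.trans ?_
      simp only [Finset.card_singleton, Nat.cast_one]
      gcongr
      refine (ringKrullDim_eq_of_ringEquiv ?_).le
      exact (Ideal.quotEquivOfEq (by rw [Ideal.map_span, Set.image_singleton])).trans
        (DoubleQuot.quotQuotEquivQuotSup Q (Ideal.span {y}))
    -- `B ⧸ (y)` is a domain, so a nonzero image of `Q` there would lower the dimension once more
    have hQy : Q ≤ Ideal.span {y} := by
      intro c hc
      by_contra hcy
      have hc0 : Ideal.Quotient.mk (Ideal.span {y}) c ≠ 0 := by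
        rwa [Ne, Ideal.Quotient.eq_zero_iff_mem]
      have h1 := ringKrullDim_quotient_succ_le_of_nonZeroDivisor
        (mem_nonZeroDivisors_of_ne_zero hc0)
      have h2 : ringKrullDim (B ⧸ (Q ⊔ Ideal.span {y})) ≤ ringKrullDim
          ((B ⧸ Ideal.span {y}) ⧸ Ideal.span {Ideal.Quotient.mk (Ideal.span {y}) c}) := by
        let f : (B ⧸ Ideal.span {y}) →+* B ⧸ (Q ⊔ Ideal.span {y}) :=
          Ideal.Quotient.factor le_sup_right
        have hf : Function.Surjective f := Ideal.Quotient.factor_surjective _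
        refine ringKrullDim_le_of_surjective (Ideal.Quotient.lift _ f ?_)
          (Ideal.Quotient.lift_surjective_of_surjective _ _ hf)
        intro a ha
        obtain ⟨b, rfl⟩ := Ideal.mem_span_singleton'.mp ha
        rw [map_mul]
        have : f (Ideal.Quotient.mk (Ideal.span {y}) c) = 0 := by
          simp only [f, Ideal.Quotient.factor_mk]
          exact Ideal.Quotient.eq_zero_iff_mem.mpr (Ideal.mem_sup_left hc)
        rw [this, mul_zero]
      have h3 : ((n + 1 : ℕ) : WithBot ℕ∞) ≤ n := by
        refine hQdim.trans (hQQ.trans (le_trans ?_ (h1.trans hup)))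
        gcongr
      have : n + 1 ≤ n := by exact_mod_cast h3
      omega
    have hQ0 : Q = ⊥ := by
      refine Submodule.eq_bot_of_le_smul_of_le_jacobson_bot (Ideal.span {y}) Q
        (IsNoetherian.noetherian Q) ?_ ?_
      · intro q hq
        obtain ⟨b, rfl⟩ := Ideal.mem_span_singleton'.mp (hQy hq)
        rw [mul_comm]
        exact Submodule.smul_mem_smul (Ideal.mem_span_singleton_self y)
          ((hQp.mem_or_mem hq).resolve_right hyQ)
      · rw [Ideal.span_singleton_le_iff_mem, IsLocalRing.jacobson_eq_maximalIdeal _ bot_ne_top]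
        exact hym
    rw [hQ0] at hQp
    exact IsDomain.of_bot_isPrime B

/-! ### Regular systems of parameters and their powers -/

/-- Modulo `I`, the maximal ideal is generated by any set of the `x i` that contains all those
outside `I`. -/
lemma maximalIdeal_quotient_of_subset {R : Type} [CommRing R] [IsLocalRing R] {d : ℕ}
    (x : Fin d → R) (hxgen : maximalIdeal R = Ideal.span (Set.range x))
    (I : Ideal R) [IsLocalRing (R ⧸ I)] [DecidableEq (R ⧸ I)]
    (U : Finset (Fin d)) (hU : ∀ i ∉ U, x i ∈ I) :
    maximalIdeal (R ⧸ I) =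
      Ideal.span ((U.image fun i => Ideal.Quotient.mk I (x i) : Finset (R ⧸ I)) : Set (R ⧸ I)) := by
  rw [maximalIdeal_quotient_eq_map, hxgen, Ideal.map_span]
  apply le_antisymm
  · rw [Ideal.span_le]
    rintro _ ⟨_, ⟨i, rfl⟩, rfl⟩
    by_cases hi : i ∈ U
    · exact Ideal.subset_span (by simpa using ⟨i, hi, rfl⟩)
    · rw [Ideal.Quotient.eq_zero_iff_mem.mpr (hU i hi)]
      exact Ideal.zero_mem _
  · refine Ideal.span_mono ?_
    intro b hb
    simp only [Finset.coe_image, Set.mem_image] at hb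
    obtain ⟨i, _, rfl⟩ := hb
    exact ⟨x i, ⟨i, rfl⟩, rfl⟩

lemma mem_of_pow_mul_mem {R : Type} [CommRing R] {I : Ideal R} {y : R}
    (h : ∀ r, y * r ∈ I → r ∈ I) (n : ℕ) :
    ∀ r, y ^ n * r ∈ I → r ∈ I := by
  induction n with
  | zero => simp
  | succ n ih => exact fun r hr => h r (ih _ (by rwa [pow_succ, mul_assoc] at hr))

section RegularSystem

variable {R : Type} [CommRing R] [IsLocalRing R] [IsNoetherianRing R] {d : ℕ} (x : Fin d → R)

/-- Every subset of a regular system of parameters generates a prime ideal containing none of the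
other parameters. -/
theorem isPrime_span_image (hdim : ringKrullDim R = d)
    (hxgen : maximalIdeal R = Ideal.span (Set.range x)) (T : Finset (Fin d)) :
    (Ideal.span (x '' T)).IsPrime ∧ ∀ i ∉ T, x i ∉ Ideal.span (x '' T) := by
  classical
  have hxm : ∀ i, x i ∈ maximalIdeal R := fun i => hxgen ▸ Ideal.subset_span ⟨i, rfl⟩
  set I := Ideal.span (x '' T) with hI
  have hIm : I ≤ maximalIdeal R := by
    rw [hI, Ideal.span_le]
    rintro _ ⟨i, _, rfl⟩
    exact hxm i
  have hIt : I ≠ ⊤ := fun h => (maximalIdeal.isMaximal R).ne_top (top_le_iff.mp (h ▸ hIm))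
  have : Nontrivial (R ⧸ I) := Ideal.Quotient.nontrivial_iff.mpr hIt
  have : IsLocalRing (R ⧸ I) := IsLocalRing.of_surjective' _ Ideal.Quotient.mk_surjective
  have hTd : T.card ≤ d := by simpa using T.card_le_univ
  have hlow : ((d - T.card : ℕ) : WithBot ℕ∞) ≤ ringKrullDim (R ⧸ I) := by
    have h := ringKrullDim_le_ringKrullDim_quotient_add_card (T.image x)
      (by
        rw [IsLocalRing.ringJacobson_eq_maximalIdeal]
        intro b hb
        simp only [Finset.coe_image, Set.mem_image] at hb
        obtain ⟨i, _, rfl⟩ := hb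
        exact hxm i)
    rw [Finset.coe_image, hdim] at h
    refine dim_cancel (k := T.card) ?_
    rw [Nat.sub_add_cancel hTd]
    refine h.trans ?_
    gcongr
    exact Finset.card_image_le
  constructor
  · rw [← Ideal.Quotient.isDomain_iff_prime]
    refine isDomain_of_card_le_krullDim (d - T.card) _ _
      (maximalIdeal_quotient_of_subset x hxgen I Tᶜ ?_) ?_ hlow
    · intro i hi
      exact Ideal.subset_span ⟨i, by simpa using hi, rfl⟩
    · exact Finset.card_image_le.trans (by simp [Finset.card_compl])
  · intro i hiT hi
    have h := krullDim_le_card _ (maximalIdeal_quotient_of_subset x hxgen I (insert i T)ᶜ (by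
      intro j hj
      rw [Finset.mem_compl, not_not, Finset.mem_insert] at hj
      rcases hj with rfl | hj
      · exact hi
      · exact Ideal.subset_span ⟨j, hj, rfl⟩))
    have h2 := hlow.trans h
    have h3 : d - T.card ≤ (insert i T)ᶜ.card :=
      le_trans (by exact_mod_cast h2) Finset.card_image_le
    rw [Finset.card_compl, Finset.card_insert_of_notMem hiT, Fintype.card_fin] at h3
    have : (insert i T).card ≤ d := by simpa using (insert i T).card_le_univ
    rw [Finset.card_insert_of_notMem hiT] at this
    omega

/-- A parameter outside `T` is a nonzerodivisor modulo arbitrary positive powers of the parameters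
in `T`. The proof is by induction on the sum of the exponents, lowering one exponent `a t > 1`;
`n` bounds that sum. -/
theorem mem_span_pow_of_mul_mem (hdim : ringKrullDim R = d)
    (hxgen : maximalIdeal R = Ideal.span (Set.range x)) (n : ℕ) :
    ∀ (T : Finset (Fin d)) (a : Fin d → ℕ), (∀ t ∈ T, 1 ≤ a t) → ∑ t ∈ T, a t ≤ n →
      ∀ i ∉ T, ∀ r, x i * r ∈ Ideal.span ((fun t => x t ^ a t) '' T) →
        r ∈ Ideal.span ((fun t => x t ^ a t) '' T) := by
  classical
  induction n with
  | zero =>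
    intro T a ha hs i hi r hr
    have hT : T = ∅ := by
      by_contra h
      obtain ⟨t, ht⟩ := Finset.nonempty_iff_ne_empty.mpr h
      have := Finset.single_le_sum (f := a) (fun _ _ => Nat.zero_le _) ht
      have := ha t ht
      omega
    subst hT
    obtain ⟨h1, h2⟩ := isPrime_span_image x hdim hxgen ∅
    have h2 := h2 i hi
    simp only [Finset.coe_empty, Set.image_empty] at h1 h2 hr ⊢
    exact (h1.mem_or_mem hr).resolve_left h2
  | succ n ih =>
    intro T a ha hs i hi r hr
    by_cases h1 : ∀ t ∈ T, a t = 1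
    · have he : (fun t => x t ^ a t) '' (T : Set (Fin d)) = x '' T := by
        refine Set.image_congr fun t ht => ?_
        rw [h1 t ht, pow_one]
      obtain ⟨hp, hn⟩ := isPrime_span_image x hdim hxgen T
      rw [he] at hr ⊢
      exact (hp.mem_or_mem hr).resolve_left (hn i hi)
    · push Not at h1
      obtain ⟨t, ht, ht1⟩ := h1
      obtain ⟨b, hb⟩ : ∃ b, a t = b + 1 := ⟨a t - 1, by have := ha t ht; omega⟩
      have hsum : ∑ s ∈ T.erase t, a s + a t = ∑ s ∈ T, a s := Finset.sum_erase_add _ _ ht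
      set K := Ideal.span ((fun s => x s ^ a s) '' (T.erase t : Set (Fin d))) with hK
      -- the ideal with the exponent at `t` replaced by `c`
      have key : ∀ c, Ideal.span ((fun s => x s ^ Function.update a t c s) '' (T : Set (Fin d))) =
          Ideal.span {x t ^ c} ⊔ K := by
        intro c
        conv_lhs => rw [← Finset.insert_erase ht]
        rw [Finset.coe_insert, Set.image_insert_eq, Ideal.span_insert, Function.update_self, hK]
        congr 2
        refine Set.image_congr fun s hs => ?_
        rw [Function.update_of_ne (Finset.ne_of_mem_erase hs)]
      have keysum : ∀ c, ∑ s ∈ T, Function.update a t c s = ∑ s ∈ T.erase t, a s + c := by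
        intro c
        rw [← Finset.sum_erase_add _ _ ht, Function.update_self]
        congr 1
        refine Finset.sum_congr rfl fun s hs => ?_
        rw [Function.update_of_ne (Finset.ne_of_mem_erase hs)]
      have colon : ∀ c, 1 ≤ c → c ≤ b → ∀ r, x i * r ∈ Ideal.span {x t ^ c} ⊔ K →
          r ∈ Ideal.span {x t ^ c} ⊔ K := by
        intro c hc hcb r hr
        rw [← key] at hr ⊢
        refine ih T _ ?_ ?_ i hi r hr
        · intro s hs
          by_cases hst : s = t
          · subst hst; simpa using hc
          · rw [Function.update_of_ne hst]; exact ha s hs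
        · rw [keysum]; omega
      have regt : ∀ r, x t ^ b * r ∈ K → r ∈ K := mem_of_pow_mul_mem
        (ih (T.erase t) a (fun s hs => ha s (Finset.mem_of_mem_erase hs)) (by omega) t
          (Finset.notMem_erase t T)) b
      have e0 := key (b + 1)
      rw [← hb, Function.update_eq_self, hb] at e0
      rw [e0] at hr ⊢
      obtain ⟨u, hu, k, hk, huk⟩ := Submodule.mem_sup.mp hr
      obtain ⟨w, rfl⟩ := Ideal.mem_span_singleton'.mp hu
      have hr' : r ∈ Ideal.span {x t ^ b} ⊔ K := by
        refine colon b (by have := ha t ht; omega) le_rfl r ?_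
        rw [← huk]
        refine Ideal.add_mem _ (Ideal.mem_sup_left (Ideal.mem_span_singleton'.mpr
          ⟨w * x t, by ring⟩)) (Ideal.mem_sup_right hk)
      obtain ⟨u', hu', k', hk', huk'⟩ := Submodule.mem_sup.mp hr'
      obtain ⟨τ, rfl⟩ := Ideal.mem_span_singleton'.mp hu'
      have h3 : x i * τ - w * x t ∈ K := by
        refine regt _ ?_
        have : x t ^ b * (x i * τ - w * x t) = k - x i * k' := by
          linear_combination x i * huk' - huk
        rw [this]
        exact Ideal.sub_mem _ hk (Ideal.mul_mem_left _ _ hk')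
      have h4 : τ ∈ Ideal.span {x t ^ 1} ⊔ K := by
        refine colon 1 le_rfl (by have := ha t ht; omega) τ ?_
        have : x i * τ = w * x t ^ 1 + (x i * τ - w * x t) := by ring
        rw [this]
        exact Ideal.add_mem _ (Ideal.mem_sup_left (Ideal.mem_span_singleton'.mpr ⟨w, rfl⟩))
          (Ideal.mem_sup_right h3)
      obtain ⟨u'', hu'', k'', hk'', huk''⟩ := Submodule.mem_sup.mp h4
      obtain ⟨v, rfl⟩ := Ideal.mem_span_singleton'.mp hu''
      rw [← huk', ← huk'']
      have : (v * x t ^ 1 + k'') * x t ^ b + k' = v * x t ^ (b + 1) + (k'' * x t ^ b + k') := by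
        ring
      rw [this]
      exact Ideal.add_mem _ (Ideal.mem_sup_left (Ideal.mem_span_singleton'.mpr ⟨v, rfl⟩))
        (Ideal.mem_sup_right (Ideal.add_mem _ (Ideal.mul_mem_right _ _ hk'') hk'))

end RegularSystem

/-! ### Bounded sequences -/

section BoundedSequences

/-- A finitely generated `A`-submodule of a field containing the domain `A` lies in a free one:
take a basis of its span over the fraction field and divide it by a common denominator. -/
lemma exists_le_span_linearIndependent {A K : Type} [CommRing A] [IsDomain A] [Field K]
    [Algebra A K] (hinj : Function.Injective (algebraMap A K)) (M : Submodule A K) (hM : M.FG) :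
    ∃ (r : ℕ) (v : Fin r → K), LinearIndependent A v ∧ M ≤ Submodule.span A (Set.range v) := by
  classical
  obtain ⟨s, rfl⟩ := hM
  have : FaithfulSMul A K := (faithfulSMul_iff_algebraMap_injective A K).mpr hinj
  let L := FractionRing A
  let _ : Algebra L K := FractionRing.liftAlgebra A K
  have : IsScalarTower A L K := FractionRing.isScalarTower_liftAlgebra A K
  let V := Submodule.span L (s : Set K)
  have : FiniteDimensional L V := FiniteDimensional.span_finset L s
  let b := Module.finBasis L V
  have hsV : ∀ g ∈ s, g ∈ V := fun g hg => Submodule.subset_span hg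
  -- a common denominator for the coordinates of the generators
  obtain ⟨c, hc⟩ := IsLocalization.exist_integer_multiples_of_finset (nonZeroDivisors A)
    (s.attach.biUnion fun g => Finset.univ.image fun k => b.repr ⟨g.1, hsV g.1 g.2⟩ k)
  have hc0 : algebraMap A L c ≠ 0 := IsFractionRing.to_map_ne_zero_of_mem_nonZeroDivisors c.2
  have hv : LinearIndependent L fun k => (b k : K) :=
    b.linearIndependent.map' V.subtype (Submodule.ker_subtype V)
  refine ⟨_, fun k => (algebraMap A L c)⁻¹ • (b k : K), ?_, ?_⟩
  · rw [LinearIndependent.iff_fractionRing A L]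
    exact hv.units_smul fun _ => (Units.mk0 _ hc0)⁻¹
  · rw [Submodule.span_le]
    intro g hg
    have hsum : ∑ k, b.repr ⟨g, hsV g hg⟩ k • (b k : K) = g := by
      have := congrArg V.subtype (b.sum_repr ⟨g, hsV g hg⟩)
      simpa only [map_sum, map_smul, Submodule.subtype_apply] using this
    rw [SetLike.mem_coe, ← hsum]
    refine Submodule.sum_mem _ fun k _ => ?_
    obtain ⟨a, ha⟩ := hc (b.repr ⟨g, hsV g hg⟩ k) (by
      simp only [Finset.mem_biUnion, Finset.mem_attach, true_and, Finset.mem_image,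
        Finset.mem_univ]
      exact ⟨⟨g, hg⟩, k, rfl⟩)
    have : b.repr ⟨g, hsV g hg⟩ k • (b k : K) = a • ((algebraMap A L c)⁻¹ • (b k : K)) := by
      rw [← IsScalarTower.algebraMap_smul L a, ha, Algebra.smul_def (c : A), smul_smul]
      congr 1
      rw [mul_assoc, mul_comm, mul_assoc, inv_mul_cancel₀ hc0, mul_one]
    rw [this]
    exact Submodule.smul_mem _ _ (Submodule.subset_span ⟨k, rfl⟩)

/-- If `y` is a nonzerodivisor modulo `(u i)` in `A`, then it is one modulo `(u i)` on the free
module spanned by `v`. -/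
lemma exists_sum_of_smul_eq_sum {A K : Type} [CommRing A] [Field K] [Algebra A K] {r j : ℕ}
    {v : Fin r → K} (hv : LinearIndependent A v) (y : A) (u : Fin j → A)
    (hcol : ∀ a, y * a ∈ Ideal.span (Set.range u) → a ∈ Ideal.span (Set.range u))
    {m : K} (hm : m ∈ Submodule.span A (Set.range v)) {w : Fin j → K}
    (hw : ∀ i, w i ∈ Submodule.span A (Set.range v)) (h : y • m = ∑ i, u i • w i) :
    ∃ w' : Fin j → K, (∀ i, w' i ∈ Submodule.span A (Set.range v)) ∧ m = ∑ i, u i • w' i := by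
  obtain ⟨a, rfl⟩ := (Submodule.mem_span_range_iff_exists_fun A).mp hm
  choose c hc using fun i => (Submodule.mem_span_range_iff_exists_fun A).mp (hw i)
  have hcoord : ∀ k, y * a k = ∑ i, u i * c i k := by
    have h0 : ∑ k, (y * a k - ∑ i, u i * c i k) • v k = 0 := by
      simp only [sub_smul, Finset.sum_sub_distrib, mul_smul, ← Finset.smul_sum, h, sub_eq_zero,
        Finset.sum_smul]
      rw [Finset.sum_comm]
      refine Finset.sum_congr rfl fun i _ => ?_
      rw [← Finset.smul_sum, hc]
    exact fun k => sub_eq_zero.mp (Fintype.linearIndependent_iff.mp hv _ h0 k)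
  have hmem : ∀ k, a k ∈ Ideal.span (Set.range u) := fun k => hcol _ (by
    rw [hcoord]
    exact Ideal.sum_mem _ fun i _ => Ideal.mul_mem_right _ _ (Ideal.subset_span ⟨i, rfl⟩))
  choose t ht using fun k => (Ideal.mem_span_range_iff_exists_fun).mp (hmem k)
  refine ⟨fun i => ∑ k, t k i • v k, fun i => Submodule.sum_mem _ fun k _ =>
    Submodule.smul_mem _ _ (Submodule.subset_span ⟨k, rfl⟩), ?_⟩
  simp only [Finset.smul_sum, smul_smul]
  rw [Finset.sum_comm]
  refine Finset.sum_congr rfl fun k _ => ?_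
  rw [← ht, Finset.sum_smul]
  refine Finset.sum_congr rfl fun i _ => ?_
  rw [mul_comm]

lemma exists_fg_pow_mem (A K : Type) [CommRing A] [Field K] [Algebra A K] (p : ℕ) {s : ℕ → K}
    {e : ℕ} {M : Submodule A K} (hM : M.FG)
    (h : ∀ n, s n ^ p ^ e ∈ M) (f : ℕ) :
    ∃ N : Submodule A K, N.FG ∧ ∀ n, s n ^ p ^ (e + f) ∈ N :=
  ⟨M ^ p ^ f, hM.pow _, fun n => by
    rw [pow_add, pow_mul]; exact Submodule.pow_mem_pow M (h n) _⟩

variable (A K : Type) [CommRing A] [Field K] [Algebra A K] (p : ℕ) [hp : Fact p.Prime] [CharP K p]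

/-- The ring of sequences `s` in `K` that are bounded over `A` up to Frobenius: for some `e`, all
the `s n ^ p ^ e` lie in one finitely generated `A`-submodule of `K`. Allowing an arbitrary `e` is
what makes this ring closed under `p`-th roots. -/
def boundedSeq : Subring (ℕ → K) where
  carrier := {s | ∃ (e : ℕ) (M : Submodule A K), M.FG ∧ ∀ n, s n ^ p ^ e ∈ M}
  zero_mem' := ⟨0, ⊥, Submodule.fg_bot, fun n => by simp⟩
  one_mem' := ⟨0, Submodule.span A {1}, Submodule.fg_span_singleton 1, fun n => by
    simp [Submodule.mem_span_singleton_self]⟩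
  neg_mem' := by
    rintro s ⟨e, M, hM, h⟩
    refine ⟨e, M, hM, fun n => ?_⟩
    rw [Pi.neg_apply, neg_pow]
    rcases neg_one_pow_eq_or K (p ^ e) with h1 | h1 <;> rw [h1]
    · simpa using h n
    · simpa using h n
  add_mem' := by
    rintro s t ⟨e, M, hM, hs⟩ ⟨f, N, hN, ht⟩
    obtain ⟨M', hM', hs'⟩ := exists_fg_pow_mem A K p hM hs f
    obtain ⟨N', hN', ht'⟩ := exists_fg_pow_mem A K p hN ht e
    refine ⟨e + f, M' ⊔ N', hM'.sup hN', fun n => ?_⟩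
    rw [Pi.add_apply, add_pow_char_pow]
    exact Submodule.add_mem_sup (hs' n) (by rw [add_comm e f]; exact ht' n)
  mul_mem' := by
    rintro s t ⟨e, M, hM, hs⟩ ⟨f, N, hN, ht⟩
    obtain ⟨M', hM', hs'⟩ := exists_fg_pow_mem A K p hM hs f
    obtain ⟨N', hN', ht'⟩ := exists_fg_pow_mem A K p hN ht e
    refine ⟨e + f, M' * N', hM'.mul hN', fun n => ?_⟩
    rw [Pi.mul_apply, mul_pow]
    exact Submodule.mul_mem_mul (hs' n) (by rw [add_comm e f]; exact ht' n)

/-- Finitely many bounded sequences share one exponent `e` and one finitely generated module. -/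
lemma exists_uniform_bound {ι : Type} (I : Finset ι) (s : ι → boundedSeq A K p) :
    ∃ (e : ℕ) (M : Submodule A K), M.FG ∧ ∀ i ∈ I, ∀ n, (s i : ℕ → K) n ^ p ^ e ∈ M := by
  classical
  induction I using Finset.induction_on with
  | empty => exact ⟨0, ⊥, Submodule.fg_bot, by simp⟩
  | insert i I _ ih =>
    obtain ⟨e, M, hM, h⟩ := ih
    obtain ⟨f, N, hN, ht⟩ := (s i).2
    obtain ⟨N', hN', ht'⟩ := exists_fg_pow_mem A K p hN ht e
    refine ⟨e + f, M ^ p ^ f ⊔ N', (hM.pow _).sup hN', fun k hk n => ?_⟩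
    rcases Finset.mem_insert.mp hk with rfl | hk
    · exact Submodule.mem_sup_right (by rw [add_comm]; exact ht' n)
    · refine Submodule.mem_sup_left ?_
      rw [pow_add, pow_mul]
      exact Submodule.pow_mem_pow M (h k hk n) _

lemma boundedSeq_pow_bijective [PerfectRing K p] :
    Function.Bijective fun s : boundedSeq A K p => s ^ p := by
  constructor
  · intro s t h
    refine Subtype.ext (funext fun n => ?_)
    have := congrFun (congrArg Subtype.val h) n
    exact frobenius_inj K p this
  · rintro ⟨s, e, M, hM, h⟩
    choose t ht using fun n => (PerfectRing.bijective_frobenius (R := K) (p := p)).2 (s n)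
    refine ⟨⟨t, e + 1, M, hM, fun n => ?_⟩, Subtype.ext (funext ht)⟩
    rw [pow_succ', pow_mul]
    have : t n ^ p = s n := ht n
    rw [this]
    exact h n

/-- The ring homomorphism `b ↦ (n ↦ f b ^ p ^ n)` into the bounded sequences; integrality of `f b`
puts all of its powers in the finitely generated `A`-module `A[f b]`. -/
def frobSeq {B : Type} [CommRing B] (f : B →+* K) (hf : ∀ b, IsIntegral A (f b)) :
    B →+* boundedSeq A K p :=
  (RingHom.pi fun n => (iterateFrobenius K p n).comp f).codRestrict _ fun b =>
    ⟨0, Subalgebra.toSubmodule (Algebra.adjoin A {f b}), (hf b).fg_adjoin_singleton, fun n => by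
      simp only [pow_zero, pow_one]
      exact Subalgebra.pow_mem _ (Algebra.self_mem_adjoin_singleton A (f b)) _⟩

variable {A K p}

lemma frobSeq_apply {B : Type} [CommRing B] (f : B →+* K) (hf : ∀ b, IsIntegral A (f b)) (b : B)
    (n : ℕ) : (frobSeq A K p f hf b : ℕ → K) n = f b ^ p ^ n := rfl

/-- Sequences of the form `n ↦ y i ^ p ^ n` with `y i` in the maximal ideal of `A` generate a proper
ideal: a relation `1 = ∑ c i * Z i` puts `1 ∈ K` into `𝔪 ^ k M` for all `k`, against Krull's
intersection theorem. -/
theorem boundedSeq_span_ne_top [IsNoetherianRing A] [IsLocalRing A] {d : ℕ} (y : Fin d → A)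
    (hy : ∀ i, y i ∈ maximalIdeal A) (Z : Fin d → boundedSeq A K p)
    (hZ : ∀ i n, (Z i : ℕ → K) n = algebraMap A K (y i) ^ p ^ n) :
    Ideal.span (Set.range Z) ≠ ⊤ := by
  intro h
  obtain ⟨c, hc⟩ := Ideal.mem_span_range_iff_exists_fun.mp ((Ideal.eq_top_iff_one _).mp h)
  obtain ⟨e, M, hM, hcM⟩ := exists_uniform_bound A K p Finset.univ c
  have hrel : ∀ n, ∑ i, y i ^ p ^ (n + e) • ((c i : ℕ → K) n ^ p ^ e) = 1 := by
    intro n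
    have h1 : ∑ i, (c i : ℕ → K) n * algebraMap A K (y i) ^ p ^ n = 1 := by
      have := congrFun (congrArg Subtype.val hc) n
      simpa [hZ] using this
    have h2 := congrArg (· ^ p ^ e) h1
    simp only [sum_pow_char_pow, one_pow] at h2
    rw [← h2]
    refine Finset.sum_congr rfl fun i _ => ?_
    rw [Algebra.smul_def, mul_pow, map_pow, pow_add, pow_mul, mul_comm]
  have h1M : (1 : K) ∈ M := by
    rw [← hrel 0]
    exact Submodule.sum_mem _ fun i hi => Submodule.smul_mem _ _ (hcM i hi 0)
  have : Module.Finite A M := Module.Finite.iff_fg.mpr hM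
  have hmem : (⟨1, h1M⟩ : M) ∈ (⨅ k : ℕ, maximalIdeal A ^ k • (⊤ : Submodule A M)) := by
    rw [Submodule.mem_iInf]
    intro k
    have hk : k ≤ p ^ (k + e) := (Nat.lt_pow_self hp.out.one_lt).le.trans
      (Nat.pow_le_pow_right hp.out.pos (Nat.le_add_right k e))
    have : (⟨1, h1M⟩ : M) =
        ∑ i, y i ^ p ^ (k + e) • (⟨_, hcM i (Finset.mem_univ i) k⟩ : M) := by
      apply Subtype.ext
      simp only [Submodule.coe_sum, Submodule.coe_smul]
      exact (hrel k).symm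
    rw [this]
    exact Submodule.sum_mem _ fun i _ => Submodule.smul_mem_smul
      (Ideal.pow_le_pow_right hk (Ideal.pow_mem_pow (hy i) _)) trivial
  rw [Ideal.iInf_pow_smul_eq_bot_of_isLocalRing _ (maximalIdeal.isMaximal A).ne_top,
    Submodule.mem_bot] at hmem
  exact one_ne_zero (congrArg Subtype.val hmem)

/-- If `y ^ N` is a nonzerodivisor modulo the `u i ^ N` in `A` for all `N ≥ 1`, then the sequence
`n ↦ y ^ p ^ n` is a nonzerodivisor modulo the sequences `n ↦ u i ^ p ^ n`. The `p ^ e`-th power of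
a relation takes place in a fixed free `A`-module, where it can be divided by `y`; taking
`p ^ e`-th roots of the new coefficients in `K` finishes. -/
theorem boundedSeq_mem_span_of_mul_mem [IsDomain A]
    (hinj : Function.Injective (algebraMap A K)) [PerfectRing K p] {j : ℕ} (y : A) (u : Fin j → A)
    (hcol : ∀ N, 1 ≤ N → ∀ a, y ^ N * a ∈ Ideal.span (Set.range fun i => u i ^ N) →
      a ∈ Ideal.span (Set.range fun i => u i ^ N))
    (Y : boundedSeq A K p) (hY : ∀ n, (Y : ℕ → K) n = algebraMap A K y ^ p ^ n)
    (U : Fin j → boundedSeq A K p)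
    (hU : ∀ i n, (U i : ℕ → K) n = algebraMap A K (u i) ^ p ^ n) (s : boundedSeq A K p)
    (hs : Y * s ∈ Ideal.span (Set.range U)) : s ∈ Ideal.span (Set.range U) := by
  obtain ⟨c, hc⟩ := Ideal.mem_span_range_iff_exists_fun.mp hs
  obtain ⟨e, M, hM, hcM⟩ := exists_uniform_bound A K p (Finset.univ : Finset (Option (Fin j)))
    (fun o => o.elim s c)
  obtain ⟨r, v, hv, hMv⟩ := exists_le_span_linearIndependent hinj M hM
  have hrel : ∀ n, y ^ p ^ (n + e) • ((s : ℕ → K) n ^ p ^ e) =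
      ∑ i, u i ^ p ^ (n + e) • ((c i : ℕ → K) n ^ p ^ e) := by
    intro n
    have h1 : ∑ i, (c i : ℕ → K) n * algebraMap A K (u i) ^ p ^ n =
        algebraMap A K y ^ p ^ n * (s : ℕ → K) n := by
      have := congrFun (congrArg Subtype.val hc) n
      simpa [hU, hY] using this
    have h2 := congrArg (· ^ p ^ e) h1
    simp only [sum_pow_char_pow, mul_pow] at h2
    rw [Algebra.smul_def, map_pow, pow_add, pow_mul, ← h2]
    refine Finset.sum_congr rfl fun i _ => ?_
    rw [Algebra.smul_def, map_pow, pow_mul, mul_comm]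
  choose w hw hsw using fun n => exists_sum_of_smul_eq_sum hv _ _
    (hcol (p ^ (n + e)) (Nat.pos_of_ne_zero (pow_ne_zero _ hp.out.ne_zero)))
    (hMv (hcM none (Finset.mem_univ _) n)) (fun i => hMv (hcM (some i) (Finset.mem_univ _) n))
    (hrel n)
  choose t ht using fun n i => (bijective_iterateFrobenius K p e).2 (w n i)
  simp only [iterateFrobenius_def] at ht
  have hspan : (Submodule.span A (Set.range v)).FG := Submodule.fg_span (Set.finite_range v)
  refine Ideal.mem_span_range_iff_exists_fun.mpr
    ⟨fun i => ⟨fun n => t n i, e, _, hspan, fun n => by rw [ht]; exact hw n i⟩, ?_⟩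
  refine Subtype.ext (funext fun n => ?_)
  apply iterateFrobenius_inj K p e
  simp only [iterateFrobenius_def]
  refine Eq.trans ?_ (hsw n).symm
  simp only [AddSubmonoidClass.coe_finsetSum, Finset.sum_apply, Subring.coe_mul, Pi.mul_apply, hU,
    sum_pow_char_pow, mul_pow, ht]
  refine Finset.sum_congr rfl fun i _ => ?_
  rw [Algebra.smul_def, map_pow, pow_add, pow_mul, mul_comm]

end BoundedSequences

/-! ### The two factors -/

section Assembly

/-- For `N ≥ 1`, the element `x j ^ N` is a nonzerodivisor modulo the `x i ^ N`, `i < j`, in the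
quotient of `R` by the first parameter `π`. -/
theorem quotient_mem_span_of_mul_mem {R : Type} [CommRing R] [IsLocalRing R] [IsNoetherianRing R]
    {d : ℕ} (hd : 0 < d) (x : Fin d → R) (hdim : ringKrullDim R = d)
    (hxgen : maximalIdeal R = Ideal.span (Set.range x)) {π : R} (hπ : x ⟨0, hd⟩ = π)
    (j : ℕ) (hj : j < d) (hj1 : 1 ≤ j) (N : ℕ) (hN : 1 ≤ N) (a : R ⧸ Ideal.span {π})
    (ha : Ideal.Quotient.mk (Ideal.span {π}) (x ⟨j, hj⟩) ^ N * a ∈ Ideal.span (Set.range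
      fun i : Fin j => Ideal.Quotient.mk (Ideal.span {π}) (x ⟨i.1, i.2.trans hj⟩) ^ N)) :
    a ∈ Ideal.span (Set.range
      fun i : Fin j => Ideal.Quotient.mk (Ideal.span {π}) (x ⟨i.1, i.2.trans hj⟩) ^ N) := by
  classical
  obtain ⟨r, rfl⟩ := Ideal.Quotient.mk_surjective a
  set J : Ideal R := Ideal.span (Set.range fun i : Fin j => x ⟨i.1, i.2.trans hj⟩ ^ N) with hJ
  have hmap : Ideal.span (Set.range
      fun i : Fin j => Ideal.Quotient.mk (Ideal.span {π}) (x ⟨i.1, i.2.trans hj⟩) ^ N) =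
      J.map (Ideal.Quotient.mk (Ideal.span {π})) := by
    rw [hJ, Ideal.map_span, ← Set.range_comp]
    simp only [Function.comp_def, map_pow]
  let T : Finset (Fin d) := Finset.univ.filter fun i => i.1 < j
  -- modulo `π = x 0`, the exponent of the first parameter may be lowered from `N` to `1`
  let e : Fin d → ℕ := fun i => if i.1 = 0 then 1 else N
  have hT : Ideal.span ((fun t => x t ^ e t) '' T) = J ⊔ Ideal.span {π} := by
    apply le_antisymm
    · rw [Ideal.span_le]
      rintro _ ⟨t, ht, rfl⟩
      have ht : t.1 < j := by simpa [T] using ht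
      by_cases h0 : t.1 = 0
      · have : t = ⟨0, hd⟩ := Fin.ext h0
        simp only [e, h0, if_true, pow_one, SetLike.mem_coe]
        rw [this, hπ]
        exact Ideal.mem_sup_right (Ideal.mem_span_singleton_self π)
      · simp only [e, h0, if_false, SetLike.mem_coe]
        exact Ideal.mem_sup_left (Ideal.subset_span ⟨⟨t.1, ht⟩, rfl⟩)
    · refine sup_le ?_ ?_
      · rw [hJ, Ideal.span_le]
        rintro _ ⟨i, rfl⟩
        have hi : x ⟨i.1, i.2.trans hj⟩ ^ e ⟨i.1, i.2.trans hj⟩ ∈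
            Ideal.span ((fun t => x t ^ e t) '' T) :=
          Ideal.subset_span ⟨⟨i.1, i.2.trans hj⟩, by simp [T], rfl⟩
        refine Ideal.mem_of_dvd _ (pow_dvd_pow _ ?_) hi
        simp only [e]
        split_ifs <;> omega
      · rw [Ideal.span_singleton_le_iff_mem]
        refine Ideal.subset_span ⟨⟨0, hd⟩, ?_, ?_⟩
        · simp only [T, Finset.coe_filter, Finset.mem_univ, true_and, Set.mem_ofPred_eq]
          omega
        · simp [e, hπ]
  rw [hmap, ← map_pow, ← map_mul, Ideal.mem_quotient_iff_mem_sup, ← hT] at ha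
  rw [hmap, Ideal.mem_quotient_iff_mem_sup, ← hT]
  refine mem_of_pow_mul_mem (y := x ⟨j, hj⟩) (fun r hr => ?_) N r ha
  refine mem_span_pow_of_mul_mem x hdim hxgen _ T e ?_ le_rfl _ ?_ r hr
  · intro t _
    simp only [e]
    split_ifs <;> omega
  · simp [T]

/-- On a product, regularity of `v` modulo the `w i` can be checked on the second factor when `v` is
a unit in the first. -/
lemma prod_mem_span_of_mul_mem {B C : Type} [CommRing B] [CommRing C] {j : ℕ} (v : B × C)
    (w : Fin j → B × C) (hv : IsUnit v.1)
    (hC : ∀ c, v.2 * c ∈ Ideal.span (Set.range fun i => (w i).2) →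
      c ∈ Ideal.span (Set.range fun i => (w i).2)) (s : B × C)
    (hs : v * s ∈ Ideal.span (Set.range w)) : s ∈ Ideal.span (Set.range w) := by
  obtain ⟨u, hu⟩ := hv
  obtain ⟨c, hc⟩ := Ideal.mem_span_range_iff_exists_fun.mp hs
  have h2 : ∑ i, (c i).2 * (w i).2 = v.2 * s.2 := by
    have := congrArg (RingHom.snd B C) hc
    simpa only [map_sum, map_mul, RingHom.coe_snd] using this
  obtain ⟨c', hc'⟩ := Ideal.mem_span_range_iff_exists_fun.mp
    (hC s.2 (Ideal.mem_span_range_iff_exists_fun.mpr ⟨_, h2⟩))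
  have e : s = (((u⁻¹ : Bˣ) : B), (0 : C)) * (v * s) + ∑ i, ((0 : B), c' i) * w i := by
    refine Prod.ext ?_ ?_
    · have : (∑ i, ((0 : B), c' i) * w i).1 = 0 := by simp [Prod.fst_sum]
      rw [Prod.fst_add, this, add_zero, Prod.fst_mul, Prod.fst_mul, ← hu, Units.inv_mul_cancel_left]
    · simp only [Prod.snd_add, Prod.snd_mul, zero_mul, zero_add, Prod.snd_sum]
      exact hc'.symm
  rw [e]
  exact Ideal.add_mem _ (Ideal.mul_mem_left _ _ hs) (Ideal.sum_mem _ fun i _ =>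
    Ideal.mul_mem_left _ _ (Ideal.subset_span ⟨i, rfl⟩))

/-- A localization of a perfect ring is perfect: `a / w` is the `p`-th power of `b / w`, where
`b ^ p = a * w ^ (p - 1)`. -/
lemma localization_pow_bijective {E : Type} [CommRing E] (W : Submonoid E) (p : ℕ)
    [Fact p.Prime] [CharP (Localization W) p] (h : Function.Bijective fun e : E => e ^ p) :
    Function.Bijective fun s : Localization W => s ^ p := by
  have hp0 : p ≠ 0 := (Fact.out : p.Prime).ne_zero
  constructor
  · change Function.Injective (frobenius (Localization W) p)
    rw [injective_iff_map_eq_zero]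
    intro s hs
    rw [frobenius_def] at hs
    obtain ⟨a, w, rfl⟩ := IsLocalization.exists_mk'_eq W s
    rw [← IsLocalization.mk'_pow, IsLocalization.mk'_eq_zero_iff] at hs
    obtain ⟨m, hm⟩ := hs
    rw [IsLocalization.mk'_eq_zero_iff]
    refine ⟨m, h.1 ?_⟩
    obtain ⟨q, rfl⟩ := Nat.exists_eq_succ_of_ne_zero hp0
    simp only [mul_pow, zero_pow hp0]
    rw [pow_succ (m : E), mul_assoc, hm, mul_zero]
  · intro s
    obtain ⟨a, w, rfl⟩ := IsLocalization.exists_mk'_eq W s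
    obtain ⟨b, hb⟩ := h.2 (a * w ^ (p - 1))
    refine ⟨IsLocalization.mk' _ b w, ?_⟩
    simp only at hb ⊢
    rw [← IsLocalization.mk'_pow, hb, IsLocalization.mk'_eq_iff_eq]
    congr 1
    obtain ⟨q, rfl⟩ := Nat.exists_eq_succ_of_ne_zero hp0
    simp only [SubmonoidClass.coe_pow, Nat.succ_eq_add_one, Nat.add_sub_cancel]
    ring

/-! ### The Fontaine ring -/

instance (R : Type) [CommRing R] [IsDomain R] : IsDomain (AbsIntClosure R) :=
  inferInstanceAs (IsDomain (integralClosure R (AlgebraicClosure (FractionRing R))))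

instance (R : Type) [CommRing R] [IsDomain R] : Algebra.IsIntegral R (AbsIntClosure R) :=
  inferInstanceAs (Algebra.IsIntegral R (integralClosure R (AlgebraicClosure (FractionRing R))))

instance (R : Type) [CommRing R] [IsDomain R] : FaithfulSMul R (AbsIntClosure R) :=
  (faithfulSMul_iff_algebraMap_injective _ _).mpr fun a b h => by
    have hinj : Function.Injective (algebraMap R (AlgebraicClosure (FractionRing R))) := by
      rw [IsScalarTower.algebraMap_eq R (FractionRing R)]
      exact (algebraMap (FractionRing R) _).injective.comp (IsFractionRing.injective R _)
    exact hinj (congrArg Subtype.val h)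

/-- The product of the `⟨xᵢ⟩` is not nilpotent in `E`. If its `M`-th power vanished, reading off the
`n`-th coordinate and raising to the power `p ^ n` would give `p ^ p ^ n ∣ (∏ x i) ^ M` in `B`.
Writing `(∏ x i) ^ M = p ^ v * u` with `p ∤ u`, the case `n = v` gives `p ∣ u` in `B`, hence
`u ∈ P ∩ R = pR`. -/
lemma prod_not_isNilpotent {p : ℕ} (hp : p.Prime) {d : ℕ} {R : Type} [CommRing R] [IsDomain R]
    [IsNoetherianRing R] {B : Type} [CommRing B] [IsDomain B] [Algebra R B] [FaithfulSMul R B]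
    (hpR : (p : R) ≠ 0) (hpu : ¬ IsUnit (p : R))
    (P : Ideal B) (hP : P.comap (algebraMap R B) = Ideal.span {(p : R)})
    (x : Fin d → R) (hx : ∀ i, x i ≠ 0)
    {E : Type} [CommRing E] (φ : ℕ → E →+* (B ⧸ Ideal.span {(p : B)}))
    (zseq : Fin d → ℕ → B) (hzseq0 : ∀ i, zseq i 0 = algebraMap R B (x i))
    (hzseqpow : ∀ i n, zseq i (n + 1) ^ p = zseq i n) (z : Fin d → E)
    (hz : ∀ i n, φ n (z i) = Ideal.Quotient.mk (Ideal.span {(p : B)}) (zseq i n)) :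
    ¬ IsNilpotent (∏ i, z i) := by
  rintro ⟨M, hM⟩
  have hX : (∏ i, x i) ^ M ≠ 0 := pow_ne_zero _ (Finset.prod_ne_zero_iff.mpr fun i _ => hx i)
  obtain ⟨v, u, hu, hXu⟩ := WfDvdMonoid.max_power_factor' hX (x := (p : R)) hpu
  have hroot : ∀ i n, zseq i n ^ p ^ n = algebraMap R B (x i) := by
    intro i n
    induction n with
    | zero => simp [hzseq0]
    | succ n ih => rw [pow_succ', pow_mul, hzseqpow, ih]
  have hdvd : ∀ n, (p : B) ^ p ^ n ∣ algebraMap R B ((∏ i, x i) ^ M) := by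
    intro n
    have h := congrArg (φ n) hM
    simp only [map_pow, map_prod, hz, map_zero] at h
    rw [← map_prod, ← map_pow, Ideal.Quotient.eq_zero_iff_mem, Ideal.mem_span_singleton] at h
    have h2 := pow_dvd_pow_of_dvd h (p ^ n)
    rwa [← pow_mul, mul_comm, pow_mul, ← Finset.prod_pow, Finset.prod_congr rfl
      (fun i _ => hroot i n), ← map_prod, ← map_pow] at h2
  have h1 : (p : B) ^ (v + 1) ∣ algebraMap R B ((∏ i, x i) ^ M) :=
    (pow_dvd_pow _ (Nat.lt_pow_self hp.one_lt)).trans (hdvd v)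
  have hpB : (p : B) ≠ 0 := by
    rw [← map_natCast (algebraMap R B)]
    exact (map_ne_zero_iff _ (FaithfulSMul.algebraMap_injective R B)).mpr hpR
  rw [hXu, map_mul, map_pow, map_natCast, pow_succ,
    mul_dvd_mul_iff_left (pow_ne_zero _ hpB)] at h1
  have hpP : (p : B) ∈ P := by
    rw [← map_natCast (algebraMap R B), ← Ideal.mem_comap, hP]
    exact Ideal.mem_span_singleton_self _
  have h2 : u ∈ P.comap (algebraMap R B) := Ideal.mem_comap.mpr (Ideal.mem_of_dvd _ h1 hpP)
  rw [hP, Ideal.mem_span_singleton] at h2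
  exact hu h2

lemma fontaine_pow_bijective {p : ℕ} {Q E : Type} [CommRing Q] [CommRing E]
    (φ : ℕ → E →+* Q) (hφ : ∀ (e : E) (n : ℕ), φ (n + 1) e ^ p = φ n e)
    (hφlim : ∀ f : ℕ → Q, (∀ n, f (n + 1) ^ p = f n) → ∃! e : E, ∀ n, φ n e = f n) :
    Function.Bijective fun e : E => e ^ p := by
  have hext : ∀ e e' : E, (∀ n, φ n e = φ n e') → e = e' := fun e e' h =>
    (hφlim (fun n => φ n e') (hφ e')).unique h fun _ => rfl
  constructor
  · intro e e' h
    refine hext _ _ fun n => ?_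
    simp only at h
    rw [← hφ e, ← hφ e', ← map_pow, ← map_pow, h]
  · intro e
    obtain ⟨e', he', -⟩ := hφlim (fun n => φ (n + 1) e) fun n => hφ e (n + 1)
    refine ⟨e', hext _ _ fun n => ?_⟩
    simp only [map_pow, he', hφ]

lemma fontaine_natCast_eq_zero {p : ℕ} (hp : p.Prime) {Q E : Type} [CommRing Q] (hQ : (p : Q) = 0)
    [CommRing E] (φ : ℕ → E →+* Q)
    (hφlim : ∀ f : ℕ → Q, (∀ n, f (n + 1) ^ p = f n) → ∃! e : E, ∀ n, φ n e = f n) :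
    (p : E) = 0 :=
  (hφlim 0 fun n => by simp [hp.ne_zero]).unique (fun n => by simp [hQ]) fun n => by simp

lemma not_isNilpotent_algebraMap_away {E ι : Type} [CommRing E] [Fintype ι] [DecidableEq ι]
    (z : ι → E) (hz : ¬ IsNilpotent (∏ i, z i)) (i₀ : ι) :
    ¬ IsNilpotent (algebraMap E (Localization.Away (∏ i ∈ Finset.univ.erase i₀, z i)) (z i₀)) := by
  rintro ⟨N, hN⟩
  rw [← map_pow, IsLocalization.map_eq_zero_iff
    (Submonoid.powers (∏ i ∈ Finset.univ.erase i₀, z i))] at hN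
  obtain ⟨⟨_, k, rfl⟩, hk⟩ := hN
  refine hz ⟨k + N, ?_⟩
  simp only at hk
  rw [← Finset.mul_prod_erase _ _ (Finset.mem_univ i₀), mul_pow, pow_add, pow_add]
  linear_combination (z i₀ ^ k * (∏ i ∈ Finset.univ.erase i₀, z i) ^ N) * hk

lemma charP_of_natCast_eq_zero {p : ℕ} (hp : p.Prime) {T : Type} [CommRing T] [Nontrivial T]
    (h : (p : T) = 0) : CharP T p := by
  rw [← CharP.ringChar_of_prime_eq_zero hp h]
  exact ringChar.charP T

/-- The factor `S'`, realized as the bounded sequences over `A = R ⧸ (p)` in the algebraic closure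
of the fraction field of `B ⧸ P`. -/
lemma exists_perfect_weakly_regular_algebra {p : ℕ} (hp : p.Prime) {d : ℕ} (hd : 0 < d)
    {R : Type} [CommRing R] [IsDomain R] [IsNoetherianRing R] [IsLocalRing R]
    (hdim : ringKrullDim R = d) (x : Fin d → R) (hx0 : x ⟨0, hd⟩ = (p : R))
    (hxgen : maximalIdeal R = Ideal.span (Set.range x))
    {B : Type} [CommRing B] [IsDomain B] [Algebra R B]
    (P : Ideal B) [P.IsPrime] [Algebra.IsIntegral R B]
    (hP : P.comap (algebraMap R B) = Ideal.span {(p : R)})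
    {E : Type} [CommRing E] (ψ : E →+* (B ⧸ Ideal.span {(p : B)})) (z : Fin d → E)
    (hz : ∀ i, ψ (z i) = Ideal.Quotient.mk (Ideal.span {(p : B)}) (algebraMap R B (x i))) :
    ∃ (S : Type) (_ : CommRing S) (_ : Algebra E S),
      Ideal.span (Set.range fun i => algebraMap E S (z i)) ≠ ⊤ ∧
      (∀ (j : ℕ) (hj : j < d), 1 ≤ j → ∀ s : S,
        algebraMap E S (z ⟨j, hj⟩) * s ∈
          Ideal.span (Set.range fun i : Fin j => algebraMap E S (z ⟨i.1, i.2.trans hj⟩)) →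
        s ∈ Ideal.span (Set.range fun i : Fin j => algebraMap E S (z ⟨i.1, i.2.trans hj⟩))) ∧
      (p : S) = 0 ∧ Function.Bijective (fun s : S => s ^ p) := by
  have : Fact p.Prime := ⟨hp⟩
  have hxm : ∀ i, x i ∈ maximalIdeal R := fun i => hxgen ▸ Ideal.subset_span ⟨i, rfl⟩
  have hprime : (Ideal.span {(p : R)}).IsPrime := by
    have := (isPrime_span_image x hdim hxgen {⟨0, hd⟩}).1
    rwa [Finset.coe_singleton, Set.image_singleton, hx0] at this
  have hpP : (p : B) ∈ P := by
    rw [← map_natCast (algebraMap R B), ← Ideal.mem_comap, hP]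
    exact Ideal.mem_span_singleton_self _
  let A := R ⧸ Ideal.span {(p : R)}
  have : IsLocalRing A := IsLocalRing.of_surjective' _ Ideal.Quotient.mk_surjective
  let K := AlgebraicClosure (FractionRing (B ⧸ P))
  let g : B →+* K := (algebraMap (B ⧸ P) K).comp (Ideal.Quotient.mk P)
  have hginj : Function.Injective (algebraMap (B ⧸ P) K) := by
    rw [IsScalarTower.algebraMap_eq (B ⧸ P) (FractionRing (B ⧸ P)) K]
    exact (algebraMap (FractionRing (B ⧸ P)) K).injective.comp (IsFractionRing.injective _ _)
  have hg : ∀ b, g b = 0 ↔ b ∈ P := fun b => by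
    rw [← Ideal.Quotient.eq_zero_iff_mem]
    exact map_eq_zero_iff _ hginj
  have hpK : (p : K) = 0 := by rw [← map_natCast g, hg]; exact hpP
  have : CharP K p := charP_of_natCast_eq_zero hp hpK
  have : PerfectRing K p := PerfectField.toPerfectRing p
  let ι : A →+* K := Ideal.Quotient.lift _ (g.comp (algebraMap R B)) fun a ha => by
    rw [← hP] at ha
    exact (hg _).mpr ha
  let _ : Algebra A K := ι.toAlgebra
  have hι : ∀ r, algebraMap A K (Ideal.Quotient.mk _ r) = g (algebraMap R B r) := fun r => rfl
  have hinj : Function.Injective (algebraMap A K) := by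
    rw [injective_iff_map_eq_zero]
    intro a ha
    obtain ⟨r, rfl⟩ := Ideal.Quotient.mk_surjective a
    rw [hι, hg, ← Ideal.mem_comap, hP] at ha
    exact Ideal.Quotient.eq_zero_iff_mem.mpr ha
  let f : (B ⧸ Ideal.span {(p : B)}) →+* K := Ideal.Quotient.lift _ g fun a ha =>
    (hg a).mpr ((Ideal.span_singleton_le_iff_mem P).mpr hpP ha)
  have hf : ∀ b, IsIntegral A (f b) := by
    intro b
    obtain ⟨b, rfl⟩ := Ideal.Quotient.mk_surjective b
    obtain ⟨q, hq, hqb⟩ := Algebra.IsIntegral.isIntegral (R := R) b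
    refine ⟨q.map (Ideal.Quotient.mk _), hq.map _, ?_⟩
    rw [Polynomial.eval₂_map]
    have := congrArg g hqb
    rw [map_zero, Polynomial.hom_eval₂] at this
    exact this
  let F : E →+* boundedSeq A K p := (frobSeq A K p f hf).comp ψ
  have hF : ∀ i n, (F (z i) : ℕ → K) n =
      algebraMap A K (Ideal.Quotient.mk _ (x i)) ^ p ^ n := by
    intro i n
    simp only [F, RingHom.comp_apply, hz, frobSeq_apply]
    rfl
  refine ⟨boundedSeq A K p, inferInstance, F.toAlgebra, ?_, ?_, ?_, ?_⟩
  · refine boundedSeq_span_ne_top (fun i => Ideal.Quotient.mk _ (x i)) (fun i => ?_) _ hF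
    rw [maximalIdeal_quotient_eq_map]
    exact Ideal.mem_map_of_mem _ (hxm i)
  · intro j hj hj1 s hs
    exact boundedSeq_mem_span_of_mul_mem hinj (Ideal.Quotient.mk _ (x ⟨j, hj⟩))
      (fun i : Fin j => Ideal.Quotient.mk _ (x ⟨i.1, i.2.trans hj⟩))
      (fun N hN a ha => quotient_mem_span_of_mul_mem hd x hdim hxgen hx0 j hj hj1 N hN a ha)
      _ (hF _) _ (fun i => hF _) s hs
  · refine Subtype.ext (funext fun n => ?_)
    simp
  · exact boundedSeq_pow_bijective A K p

/-- The product of a perfect algebra `L` in which the `⟨xᵢ⟩`, `i ≥ 2`, are units and `⟨p⟩` is not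
nilpotent with a perfect algebra `S'` on which they form a regular sequence has all the required
properties. -/
lemma exists_algebra_of_factors {p : ℕ} (hp : p.Prime) {d : ℕ} (hd : 0 < d) {E : Type}
    [CommRing E] (z : Fin d → E) (L : Type) [CommRing L] [Algebra E L]
    (hL : ¬ IsNilpotent (algebraMap E L (z ⟨0, hd⟩))) (hpL : (p : L) = 0)
    (hLbij : Function.Bijective fun s : L => s ^ p)
    (hunit : ∀ i, i ≠ ⟨0, hd⟩ → IsUnit (algebraMap E L (z i)))
    (S' : Type) [CommRing S'] [Algebra E S']
    (hS1 : Ideal.span (Set.range fun i => algebraMap E S' (z i)) ≠ ⊤)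
    (hS2 : ∀ (j : ℕ) (hj : j < d), 1 ≤ j → ∀ s : S',
      algebraMap E S' (z ⟨j, hj⟩) * s ∈
        Ideal.span (Set.range fun i : Fin j => algebraMap E S' (z ⟨i.1, i.2.trans hj⟩)) →
      s ∈ Ideal.span (Set.range fun i : Fin j => algebraMap E S' (z ⟨i.1, i.2.trans hj⟩)))
    (hSp : (p : S') = 0) (hSbij : Function.Bijective fun s : S' => s ^ p) :
    ∃ (S : Type) (_ : CommRing S) (_ : Algebra E S),
      Ideal.span (Set.range fun i => algebraMap E S (z i)) ≠ ⊤ ∧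
      (∀ (j : ℕ) (hj : j < d), 1 ≤ j → ∀ s : S,
        algebraMap E S (z ⟨j, hj⟩) * s ∈
          Ideal.span (Set.range fun i : Fin j => algebraMap E S (z ⟨i.1, i.2.trans hj⟩)) →
        s ∈ Ideal.span (Set.range fun i : Fin j => algebraMap E S (z ⟨i.1, i.2.trans hj⟩))) ∧
      ¬ IsNilpotent (algebraMap E S (z ⟨0, hd⟩)) ∧
      (∀ k : ℕ, 1 ≤ k → ∀ ρ : E, ρ ^ p ^ k = z ⟨0, hd⟩ →
        ∀ s : S, algebraMap E S (z ⟨0, hd⟩) * s = 0 → algebraMap E S ρ * s = 0) ∧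
      CharP S p ∧ Function.Bijective (fun s : S => s ^ p) ∧ Nonempty (S →ₐ[E] L) := by
  have hLnt : Nontrivial L := ⟨algebraMap E L (z ⟨0, hd⟩), 0, fun h => hL ⟨1, by rw [pow_one, h]⟩⟩
  have hbij : Function.Bijective fun s : L × S' => s ^ p := hLbij.prodMap hSbij
  refine ⟨L × S', inferInstance, inferInstance, ?_, ?_, ?_, ?_, ?_, hbij, ⟨AlgHom.fst E L S'⟩⟩
  · intro h
    apply hS1
    have h2 := congrArg (Ideal.map (RingHom.snd L S')) h
    rw [Ideal.map_top, Ideal.map_span, ← Set.range_comp] at h2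
    exact h2
  · intro j hj hj1 s hs
    have hj0 : (⟨j, hj⟩ : Fin d) ≠ ⟨0, hd⟩ := fun h => by
      have : j = 0 := congrArg Fin.val h
      omega
    refine prod_mem_span_of_mul_mem (algebraMap E (L × S') (z ⟨j, hj⟩))
      (fun i : Fin j => algebraMap E (L × S') (z ⟨i.1, i.2.trans hj⟩)) ?_ ?_ s hs
    · simpa only [Prod.algebraMap_apply] using hunit _ hj0
    · simpa only [Prod.algebraMap_apply] using hS2 j hj hj1
  · intro h
    exact hL (h.map (RingHom.fst L S'))
  · intro k _ ρ hρ s hs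
    have hinj : Function.Injective fun t : L × S' => t ^ p ^ k := by
      have := hbij.1.iterate k
      rwa [pow_iterate] at this
    obtain ⟨m, hm⟩ : ∃ m, p ^ k = m + 1 := Nat.exists_eq_succ_of_ne_zero
      (pow_ne_zero _ hp.ne_zero)
    -- `(ρ s) ^ p ^ k = ⟨p⟩ s ^ p ^ k` is a multiple of `⟨p⟩ s = 0`, and `L × S'` is reduced
    apply hinj
    simp only
    rw [mul_pow, ← map_pow, hρ, hm, zero_pow (Nat.succ_ne_zero m), pow_succ', ← mul_assoc, hs,
      zero_mul]
  · have : Nontrivial (L × S') := inferInstance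
    exact charP_of_natCast_eq_zero hp (Prod.ext (by simpa using hpL) (by simpa using hSp))

end Assembly

/-- **Theorem 5.2.** Let `(R, m)` be a complete regular local ring of mixed characteristic
`p > 0` with perfect residue field and regular system of parameters `p, x₂, …, x_d` (encoded
as `x : Fin d → R` with `x 0 = p`). Let `E` be the Fontaine ring `E(R⁺)` (encoded by its
coordinate projections `φ n` onto `R⁺/pR⁺`), and let `⟨p⟩ = z 0`, `⟨xᵢ⟩ = z i` be elements of
`E` given by compatible systems of `p`-power roots in `R⁺`. Then there is an `E(R⁺)`-algebra
`S` such that: (1) `(⟨p⟩, ⟨x₂⟩, …, ⟨x_d⟩)S ≠ S`; (2) `⟨x₂⟩, …, ⟨x_d⟩` is a regular sequence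
on `S/⟨p⟩S`; (3) `⟨p⟩` is not nilpotent in `S` and for every `k ≥ 1`, every `p^k`-th root `ρ`
of `⟨p⟩` in `E(R⁺)` annihilates `(0 :_S ⟨p⟩)`; (4) `S` is a perfect ring of characteristic
`p`. Moreover `S` admits an `E(R⁺)`-algebra homomorphism to the localization of `E(R⁺)` away
from `⟨x₂⟩⋯⟨x_d⟩`. -/
theorem exists_perfect_almost_CM_algebra_over_fontaine_ring
    (p : ℕ) (hp : p.Prime) (d : ℕ) (hd : 0 < d)
    (R : Type) [CommRing R] [IsDomain R] [IsNoetherianRing R] [IsLocalRing R]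
    [CharZero R] (hcompl : IsAdicComplete (maximalIdeal R) R)
    (hdim : ringKrullDim R = d)
    (x : Fin d → R) (hx0 : x ⟨0, hd⟩ = (p : R))
    (hxgen : maximalIdeal R = Ideal.span (Set.range x))
    (hperf : Function.Bijective fun t : ResidueField R => t ^ p)
    -- the Fontaine ring `E(R⁺)` with its coordinate projections
    (E : Type) [CommRing E]
    (φ : (n : ℕ) → E →+* (AbsIntClosure R ⧸ Ideal.span {(p : AbsIntClosure R)}))
    (hφ : ∀ (e : E) (n : ℕ), φ (n + 1) e ^ p = φ n e)
    (hφlim : ∀ f : ℕ → (AbsIntClosure R ⧸ Ideal.span {(p : AbsIntClosure R)}),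
      (∀ n, f (n + 1) ^ p = f n) → ∃! e : E, ∀ n, φ n e = f n)
    -- the elements `⟨p⟩ = z 0` and `⟨xᵢ⟩ = z i`
    (zseq : Fin d → ℕ → AbsIntClosure R)
    (hzseq0 : ∀ i, zseq i 0 = algebraMap R (AbsIntClosure R) (x i))
    (hzseqpow : ∀ i n, zseq i (n + 1) ^ p = zseq i n)
    (z : Fin d → E)
    (hz : ∀ i n, φ n (z i) = Ideal.Quotient.mk (Ideal.span {(p : AbsIntClosure R)}) (zseq i n)) :
    ∃ (S : Type) (_ : CommRing S) (_ : Algebra E S),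
      -- (1)
      Ideal.span (Set.range fun i => algebraMap E S (z i)) ≠ ⊤ ∧
      -- (2)
      (∀ (j : ℕ) (hj : j < d), 1 ≤ j → ∀ s : S,
        algebraMap E S (z ⟨j, hj⟩) * s ∈
          Ideal.span (Set.range fun i : Fin j => algebraMap E S (z ⟨i.1, i.2.trans hj⟩)) →
        s ∈ Ideal.span (Set.range fun i : Fin j => algebraMap E S (z ⟨i.1, i.2.trans hj⟩))) ∧
      -- (3)
      ¬ IsNilpotent (algebraMap E S (z ⟨0, hd⟩)) ∧
      (∀ k : ℕ, 1 ≤ k → ∀ ρ : E, ρ ^ p ^ k = z ⟨0, hd⟩ →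
        ∀ s : S, algebraMap E S (z ⟨0, hd⟩) * s = 0 → algebraMap E S ρ * s = 0) ∧
      -- (4)
      CharP S p ∧ Function.Bijective (fun s : S => s ^ p) ∧
      -- moreover, an `E`-algebra homomorphism to the localization
      Nonempty (S →ₐ[E] Localization.Away (∏ i ∈ Finset.univ.erase ⟨0, hd⟩, z i)) := by
  classical
  have hfact : Fact p.Prime := ⟨hp⟩
  have hxm : ∀ i, x i ∈ maximalIdeal R := fun i => hxgen ▸ Ideal.subset_span ⟨i, rfl⟩
  have hpR : (p : R) ≠ 0 := Nat.cast_ne_zero.mpr hp.ne_zero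
  have hpu : ¬ IsUnit (p : R) := by
    rw [← hx0]
    exact (mem_maximalIdeal _).mp (hxm _)
  have hprime : (Ideal.span {(p : R)}).IsPrime := by
    have := (isPrime_span_image x hdim hxgen {⟨0, hd⟩}).1
    rwa [Finset.coe_singleton, Set.image_singleton, hx0] at this
  have hx : ∀ i, x i ≠ 0 := fun i h => (isPrime_span_image x hdim hxgen ∅).2 i (by simp)
    (by rw [h]; exact Ideal.zero_mem _)
  obtain ⟨P, hPprime, hP⟩ := Ideal.exists_ideal_over_prime_of_isIntegral_of_isDomain
    (S := AbsIntClosure R) (Ideal.span {(p : R)})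
    (by
      rw [(RingHom.injective_iff_ker_eq_bot _).mp
        (FaithfulSMul.algebraMap_injective R (AbsIntClosure R))]
      exact bot_le)
  obtain ⟨S', _, _, hS1, hS2, hSp, hSbij⟩ := exists_perfect_weakly_regular_algebra hp hd hdim x hx0
    hxgen P hP (φ 0) z fun i => by rw [hz, hzseq0]
  have hpQ : (p : AbsIntClosure R ⧸ Ideal.span {(p : AbsIntClosure R)}) = 0 := by
    rw [← map_natCast (Ideal.Quotient.mk _), Ideal.Quotient.eq_zero_iff_mem]
    exact Ideal.mem_span_singleton_self _
  have hpE : (p : E) = 0 := fontaine_natCast_eq_zero hp hpQ φ hφlim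
  have hEbij : Function.Bijective fun e : E => e ^ p := fontaine_pow_bijective φ hφ hφlim
  have hnil : ¬ IsNilpotent (∏ i, z i) :=
    prod_not_isNilpotent hp hpR hpu P hP x hx φ zseq hzseq0 hzseqpow z hz
  let L := Localization.Away (∏ i ∈ Finset.univ.erase ⟨0, hd⟩, z i)
  have hL : ¬ IsNilpotent (algebraMap E L (z ⟨0, hd⟩)) :=
    not_isNilpotent_algebraMap_away z hnil ⟨0, hd⟩
  have hLnt : Nontrivial L := ⟨algebraMap E L (z ⟨0, hd⟩), 0, fun h => hL ⟨1, by rw [pow_one, h]⟩⟩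
  have hpL : (p : L) = 0 := by rw [← map_natCast (algebraMap E L), hpE, map_zero]
  have : CharP L p := charP_of_natCast_eq_zero hp hpL
  have hLbij : Function.Bijective fun s : L => s ^ p := localization_pow_bijective _ p hEbij
  have hunit : ∀ i, i ≠ ⟨0, hd⟩ → IsUnit (algebraMap E L (z i)) := fun i hi =>
    isUnit_of_dvd_unit (map_dvd _ (Finset.dvd_prod_of_mem z
      (Finset.mem_erase.mpr ⟨hi, Finset.mem_univ i⟩)))
      (IsLocalization.Away.algebraMap_isUnit (∏ i ∈ Finset.univ.erase ⟨0, hd⟩, z i))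
  exact exists_algebra_of_factors hp hd z L hL hpL hLbij hunit S' hS1 hS2 hSp hSbij
end

section
/- Let p, x_2, ..., x_d be a system of parameters of R and let B be an R^+-algebra such that: (1) (p, x_2, ..., x_d)B ≠ B; (2) x_2, ..., x_d is a regular sequence on B/pB; (3) p is not nilpotent in B and for all positive integers a, n and every y ∈ R^+ with y^n = p^a, the image of y in B annihilates (0 :_B p). Assume moreover that there exist positive integers a, n and y ∈ R^+ with y^n = p^a whose image in B does not lie in (p, x_2, ..., x_d)B. Then there exists a B-algebra C such that (p, x_2, ..., x_d)C ≠ C and p, x_2, ..., x_d is a regular sequence on C. In particular, for every intermediate ring R ⊆ T ⊆ R^+ and every integer t ≥ 1, (p·x_2⋯x_d)^t ∉ (p^{t+1}, x_2^{t+1}, ..., x_d^{t+1})T. -/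
/-!
The first claim uses an asymptotic localization. Fix `y` with `y ^ N = p ^ a` lying outside
`(p, x₂, …, x_d)B`, and let `zₙ ∈ R⁺` be an `(n + 1)`-st root of `y`. Put
`C = (∏_{n ∈ ℕ} B)[1/z]` with `z = (zₙ)ₙ`. Since `zₙ` is a root of a power of `p`, it kills
`(0 :_B p)`, so `z` kills the `p`-torsion of `∏ B` and `p` is a nonzerodivisor on `C`. The
regularity of `x₂, …, x_d` on `B/pB` passes to the product and to the localization. If
`(p, x₂, …, x_d)C` were the unit ideal, some `z ^ k` would lie in `(p, x₂, …, x_d)∏ B`; reading the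
`k`-th coordinate and multiplying by `z_k` would put `y = z_k ^ (k + 1)` into
`(p, x₂, …, x_d)B`. This is `exists_regular_algebra`.

The second claim holds because `T` maps to `C`, and in a ring with a regular sequence
`r₁, …, r_d` one has `(r₁⋯r_d)^t w ∈ (r₁^{t+1}, …, r_d^{t+1})` only if `w ∈ (r₁, …, r_d)`
(`RegMod.mem_of_prod_pow_mul_mem`); the case `w = 1` contradicts properness. That lemma is proved
by induction on the length, relative to a base ideal `J`. It needs two facts, valid without any
local or Noetherian assumption: the first term of a regular sequence may be replaced by a power
(`RegMod.sup_span_pow`), and the first term stays a nonzerodivisor modulo the other ones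
(`RegMod.head_regular`).
-/

open IsLocalRing

/-! ### Regular sequences modulo an ideal -/

/-- The list `rs` is a (weakly) regular sequence on `A ⧸ J`, phrased with ideals of `A`:
each term is a nonzerodivisor modulo `J` and the terms before it. -/
def RegMod {A : Type*} [CommRing A] : Ideal A → List A → Prop
  | _, [] => True
  | J, r :: rs => (∀ c, r * c ∈ J → c ∈ J) ∧ RegMod (J ⊔ Ideal.span {r}) rs

section RegMod

variable {A : Type*} [CommRing A]

/-- Weak regularity is stable under extensions: it passes from `A ⧸ K` and `A ⧸ (I + (s))` to
`A ⧸ I` when `K = (I : s)`, because of the exact sequence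
`0 → A ⧸ K → A ⧸ I → A ⧸ (I + (s)) → 0` whose first map is multiplication by `s`. -/
lemma RegMod.of_colon (s : A) (rs : List A) : ∀ (I K : Ideal A), (∀ e, e ∈ K ↔ s * e ∈ I) →
    RegMod K rs → RegMod (I ⊔ Ideal.span {s}) rs → RegMod I rs := by
  induction rs with
  | nil => intros; trivial
  | cons q rs ih =>
    rintro I K hK ⟨hK1, hK2⟩ ⟨hI1, hI2⟩
    refine ⟨fun c hc => ?_, ih _ _ ?_ hK2 ?_⟩
    · obtain ⟨i, hi, e', he', rfl⟩ := Submodule.mem_sup.1 (hI1 c (Ideal.mem_sup_left hc))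
      obtain ⟨e, rfl⟩ := Ideal.mem_span_singleton.1 he'
      refine I.add_mem hi ((hK e).1 (hK1 e ((hK _).2 ?_)))
      have := I.sub_mem hc (I.mul_mem_left q hi)
      convert this using 1; ring
    · intro e
      constructor
      · intro he
        obtain ⟨k, hk, e', he', rfl⟩ := Submodule.mem_sup.1 he
        obtain ⟨g, rfl⟩ := Ideal.mem_span_singleton.1 he'
        refine Submodule.mem_sup.2 ⟨s * k, (hK k).1 hk, q * (s * g),
          Ideal.mem_span_singleton.2 ⟨_, rfl⟩, by ring⟩
      · intro he
        obtain ⟨i, hi, e', he', h⟩ := Submodule.mem_sup.1 he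
        obtain ⟨f, rfl⟩ := Ideal.mem_span_singleton.1 he'
        have hf : q * f ∈ I ⊔ Ideal.span {s} := by
          have h2 : q * f = s * e - i := by rw [← h]; ring
          rw [h2]
          exact Ideal.sub_mem _ (Ideal.mem_sup_right (Ideal.mem_span_singleton.2 ⟨_, rfl⟩))
            (Ideal.mem_sup_left hi)
        obtain ⟨i', hi', g', hg', rfl⟩ := Submodule.mem_sup.1 (hI1 f hf)
        obtain ⟨g, rfl⟩ := Ideal.mem_span_singleton.1 hg'
        refine Submodule.mem_sup.2 ⟨e - q * g, (hK _).2 ?_, q * g,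
          Ideal.mem_span_singleton.2 ⟨_, rfl⟩, by ring⟩
        have h2 : s * (e - q * g) = i + q * i' := by linear_combination -h
        rw [h2]
        exact I.add_mem hi (I.mul_mem_left q hi')
    · rwa [sup_right_comm]

lemma RegMod.top (rs : List A) : RegMod (⊤ : Ideal A) rs := by
  induction rs with
  | nil => trivial
  | cons r rs ih => exact ⟨fun _ _ => trivial, by simpa using ih⟩

/-- If `r, rs` is regular on `A ⧸ J`, then so is `rs` on `A ⧸ (J + (r ^ n))`. -/
lemma RegMod.sup_span_pow {J : Ideal A} {r : A} {rs : List A} (h : RegMod J (r :: rs)) (n : ℕ) :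
    RegMod (J ⊔ Ideal.span {r ^ n}) rs := by
  induction n with
  | zero => simpa using RegMod.top rs
  | succ n ih =>
    refine RegMod.of_colon r rs _ _ (fun e => ?_) ih ?_
    · constructor
      · intro he
        obtain ⟨i, hi, e', he', rfl⟩ := Submodule.mem_sup.1 he
        obtain ⟨f, rfl⟩ := Ideal.mem_span_singleton.1 he'
        exact Submodule.mem_sup.2 ⟨r * i, J.mul_mem_left r hi, r ^ (n + 1) * f,
          Ideal.mem_span_singleton.2 ⟨_, rfl⟩, by ring⟩
      · intro he
        obtain ⟨i, hi, e', he', hh⟩ := Submodule.mem_sup.1 he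
        obtain ⟨f, rfl⟩ := Ideal.mem_span_singleton.1 he'
        refine Submodule.mem_sup.2 ⟨e - r ^ n * f, h.1 _ ?_, r ^ n * f,
          Ideal.mem_span_singleton.2 ⟨_, rfl⟩, by ring⟩
        have h2 : r * (e - r ^ n * f) = i := by linear_combination -hh
        rwa [h2]
    · have h3 : J ⊔ Ideal.span {r ^ (n + 1)} ⊔ Ideal.span {r} = J ⊔ Ideal.span {r} := by
        rw [sup_assoc]
        congr 1
        refine sup_eq_right.2 ((Ideal.span_singleton_le_span_singleton).2 ?_)
        exact dvd_pow_self r (Nat.succ_ne_zero n)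
      rw [h3]
      exact h.2

/-- The first term of a regular sequence is a nonzerodivisor modulo the remaining ones. -/
lemma RegMod.head_regular {r : A} (rs : List A) : ∀ {J : Ideal A}, RegMod J (r :: rs) →
    ∀ c, r * c ∈ J ⊔ Ideal.ofList rs → c ∈ J ⊔ Ideal.ofList rs := by
  induction rs with
  | nil => intro J h c hc; simpa using h.1 c (by simpa using hc)
  | cons q rs ih =>
    rintro J ⟨h1, h2, h3⟩ c hc
    rw [Ideal.ofList_cons, ← sup_assoc] at hc ⊢
    refine ih ⟨fun c hc => ?_, by rwa [sup_right_comm]⟩ c hc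
    obtain ⟨i, hi, e', he', h⟩ := Submodule.mem_sup.1 hc
    obtain ⟨f, rfl⟩ := Ideal.mem_span_singleton.1 he'
    have hf : q * f ∈ J ⊔ Ideal.span {r} := by
      have : q * f = r * c - i := by rw [← h]; ring
      rw [this]
      exact Ideal.sub_mem _ (Ideal.mem_sup_right (Ideal.mem_span_singleton.2 ⟨_, rfl⟩))
        (Ideal.mem_sup_left hi)
    obtain ⟨i', hi', g', hg', rfl⟩ := Submodule.mem_sup.1 (h2 f hf)
    obtain ⟨g, rfl⟩ := Ideal.mem_span_singleton.1 hg'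
    refine Submodule.mem_sup.2 ⟨c - q * g, h1 _ ?_, q * g,
      Ideal.mem_span_singleton.2 ⟨_, rfl⟩, by ring⟩
    have h4 : r * (c - q * g) = i + q * i' := by linear_combination -h
    rw [h4]
    exact J.add_mem hi (J.mul_mem_left q hi')

/-- The monomial property of regular sequences. -/
lemma RegMod.mem_of_prod_pow_mul_mem (t : ℕ) (rs : List A) :
    ∀ (J : Ideal A) (w : A), RegMod J rs →
      rs.prod ^ t * w ∈ J ⊔ Ideal.ofList (rs.map (· ^ (t + 1))) → w ∈ J ⊔ Ideal.ofList rs := by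
  induction rs with
  | nil => intro J w _ hw; simpa using hw
  | cons r rs ih =>
    intro J w h hw
    rw [List.map_cons, Ideal.ofList_cons, ← sup_assoc, List.prod_cons] at hw
    have h1 := ih _ (r ^ t * w) (h.sup_span_pow (t + 1)) (by convert hw using 1; ring)
    rw [sup_right_comm] at h1
    obtain ⟨i, hi, e', he', hh⟩ := Submodule.mem_sup.1 h1
    obtain ⟨u, rfl⟩ := Ideal.mem_span_singleton.1 he'
    have key : ∀ (k : ℕ) (v : A), r ^ k * v ∈ J ⊔ Ideal.ofList rs → v ∈ J ⊔ Ideal.ofList rs := by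
      intro k
      induction k with
      | zero => intro v hv; simpa using hv
      | succ k ihk =>
        intro v hv
        exact ihk v (RegMod.head_regular rs h _ (by convert hv using 1; ring))
    have h2 : w - r * u ∈ J ⊔ Ideal.ofList rs := by
      refine key t _ ?_
      have : r ^ t * (w - r * u) = i := by linear_combination -hh
      rwa [this]
    rw [Ideal.ofList_cons, sup_left_comm]
    exact Submodule.mem_sup.2 ⟨r * u, Ideal.mem_span_singleton.2 ⟨_, rfl⟩, w - r * u, h2, by ring⟩

lemma span_range_fin_succ (n : ℕ) (f : Fin (n + 1) → A) :
    Ideal.span (Set.range f) = Ideal.span {f 0} ⊔ Ideal.span (Set.range fun i => f (Fin.succ i)) := by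
  rw [← Ideal.span_union]
  congr 1
  ext a
  simp [Fin.exists_fin_succ, eq_comm]

lemma RegMod.ofFn : ∀ (n : ℕ) (f : Fin n → A) (J : Ideal A),
    (∀ (j : ℕ) (hj : j < n) (c : A),
      f ⟨j, hj⟩ * c ∈ J ⊔ Ideal.span (Set.range fun i : Fin j => f ⟨i.1, i.2.trans hj⟩) →
      c ∈ J ⊔ Ideal.span (Set.range fun i : Fin j => f ⟨i.1, i.2.trans hj⟩)) →
    RegMod J (List.ofFn f) := by
  intro n
  induction n with
  | zero => intro f J _; simp [RegMod]
  | succ n ih =>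
    intro f J h
    rw [List.ofFn_succ]
    refine ⟨fun c hc => ?_, ih _ _ fun j hj c hc => ?_⟩
    · simpa using h 0 (Nat.succ_pos n) c (by simpa using hc)
    · have := h (j + 1) (Nat.succ_lt_succ hj) c
      rw [span_range_fin_succ, ← sup_assoc] at this
      exact this hc

lemma ofList_ofFn (n : ℕ) (f : Fin n → A) :
    Ideal.ofList (List.ofFn f) = Ideal.span (Set.range f) := by
  simp only [Ideal.ofList, List.mem_ofFn]
  rfl

/-- The monomial property for sequences indexed by `Fin n`. -/
lemma prod_pow_notMem_span (n t : ℕ) (f : Fin n → A) (h1 : Ideal.span (Set.range f) ≠ ⊤)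
    (h : ∀ (j : ℕ) (hj : j < n) (c : A),
      f ⟨j, hj⟩ * c ∈ Ideal.span (Set.range fun i : Fin j => f ⟨i.1, i.2.trans hj⟩) →
      c ∈ Ideal.span (Set.range fun i : Fin j => f ⟨i.1, i.2.trans hj⟩)) :
    (∏ i, f i) ^ t ∉ Ideal.span (Set.range fun i => f i ^ (t + 1)) := by
  intro hmem
  apply h1
  rw [Ideal.eq_top_iff_one]
  have := RegMod.mem_of_prod_pow_mul_mem t (List.ofFn f) ⊥ 1
    (RegMod.ofFn n f ⊥ (by simpa only [bot_sup_eq] using h))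
  rw [List.map_ofFn, bot_sup_eq, bot_sup_eq, ofList_ofFn, ofList_ofFn, List.prod_ofFn, mul_one]
    at this
  exact this hmem

end RegMod

/-! ### The localized product `(∏ B)[1/z]` -/

section Product

/-- Membership in a finitely generated ideal of `∏ B` spanned by constant sequences is tested
coordinatewise. -/
lemma mem_span_range_pi {B : Type} [CommRing B] {m : ℕ} (g : Fin m → B) (v : ℕ → B) :
    v ∈ Ideal.span (Set.range fun i => algebraMap B (ℕ → B) (g i)) ↔
      ∀ n, v n ∈ Ideal.span (Set.range g) := by
  simp only [Ideal.mem_span_range_iff_exists_fun]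
  constructor
  · rintro ⟨c, rfl⟩ n
    exact ⟨fun i => c i n, by simp [Finset.sum_apply]⟩
  · intro h
    choose c hc using h
    exact ⟨fun i n => c n i, by ext n; simp [Finset.sum_apply, hc]⟩

lemma mem_span_range_away {B : Type} [CommRing B] {m : ℕ} (g : Fin m → B) (z v : ℕ → B) :
    algebraMap (ℕ → B) (Localization.Away z) v ∈
      Ideal.span (Set.range fun i => algebraMap B (Localization.Away z) (g i)) ↔
      ∃ k : ℕ, ∀ n, z n ^ k * v n ∈ Ideal.span (Set.range g) := by
  have h : Ideal.span (Set.range fun i => algebraMap B (Localization.Away z) (g i)) =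
      (Ideal.span (Set.range fun i => algebraMap B (ℕ → B) (g i))).map
        (algebraMap (ℕ → B) (Localization.Away z)) := by
    rw [Ideal.map_span, ← Set.range_comp]
    rfl
  rw [h, IsLocalization.algebraMap_mem_map_algebraMap_iff (Submonoid.powers z)]
  constructor
  · rintro ⟨_, ⟨k, rfl⟩, hk⟩
    exact ⟨k, (mem_span_range_pi g _).1 hk⟩
  · rintro ⟨k, hk⟩
    exact ⟨z ^ k, ⟨k, rfl⟩, (mem_span_range_pi g _).2 hk⟩

/-- If every `z n` kills the obstructions to the regularity of `f` on `B`, while `z n ^ n` stays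
outside the ideal generated by `f`, then `f` becomes regular on `(∏_{n ∈ ℕ} B)[1/z]`. -/
lemma exists_regular_algebra_s2 {B : Type} [CommRing B] (d : ℕ) (f : Fin d → B) (z : ℕ → B)
    (h1 : ∀ n, z n ^ n ∉ Ideal.span (Set.range f))
    (h2 : ∀ (j : ℕ) (hj : j < d) (b : B),
      f ⟨j, hj⟩ * b ∈ Ideal.span (Set.range fun i : Fin j => f ⟨i.1, i.2.trans hj⟩) →
      ∀ n, z n * b ∈ Ideal.span (Set.range fun i : Fin j => f ⟨i.1, i.2.trans hj⟩)) :
    ∃ (C : Type) (_ : CommRing C) (_ : Algebra B C),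
      Ideal.span (Set.range fun i => algebraMap B C (f i)) ≠ ⊤ ∧
      ∀ (j : ℕ) (hj : j < d), ∀ c : C,
        algebraMap B C (f ⟨j, hj⟩) * c ∈
          Ideal.span (Set.range fun i : Fin j => algebraMap B C (f ⟨i.1, i.2.trans hj⟩)) →
        c ∈ Ideal.span (Set.range fun i : Fin j => algebraMap B C (f ⟨i.1, i.2.trans hj⟩)) := by
  refine ⟨Localization.Away z, inferInstance, inferInstance, ?_, ?_⟩
  · rw [Ne, Ideal.eq_top_iff_one, ← map_one (algebraMap (ℕ → B) (Localization.Away z)),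
      mem_span_range_away]
    rintro ⟨k, hk⟩
    exact h1 k (by simpa using hk k)
  · intro j hj c hc
    obtain ⟨⟨v, s⟩, hv⟩ := IsLocalization.surj (Submonoid.powers z) c
    have hs : IsUnit (algebraMap (ℕ → B) (Localization.Away z) s) :=
      IsLocalization.map_units _ s
    have hc' := Ideal.mul_mem_right (algebraMap (ℕ → B) (Localization.Away z) s) _ hc
    rw [mul_assoc, hv, IsScalarTower.algebraMap_apply B (ℕ → B) (Localization.Away z),
      ← map_mul, mem_span_range_away (fun i : Fin j => f ⟨i.1, i.2.trans hj⟩)] at hc'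
    obtain ⟨k, hk⟩ := hc'
    rw [← Ideal.mul_unit_mem_iff_mem _ hs, hv,
      mem_span_range_away (fun i : Fin j => f ⟨i.1, i.2.trans hj⟩)]
    refine ⟨k + 1, fun n => ?_⟩
    have := h2 j hj (z n ^ k * v n) (by
      convert hk n using 1
      simp only [Pi.mul_apply, Pi.algebraMap_apply, Algebra.algebraMap_self, RingHom.id_apply]
      ring) n
    convert this using 1
    ring

end Product

/-! ### Roots in `R⁺` and the conclusion -/

/-- `R⁺` is closed under extraction of roots. -/
lemma AbsIntClosure.exists_pow_eq {R : Type} [CommRing R] [IsDomain R] (y : AbsIntClosure R)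
    (n : ℕ) (hn : 0 < n) : ∃ z : AbsIntClosure R, z ^ n = y := by
  obtain ⟨w, hw⟩ := IsAlgClosed.exists_pow_nat_eq
    (Subtype.val (p := (· ∈ integralClosure R (AlgebraicClosure (FractionRing R)))) y) hn
  exact ⟨⟨w, IsIntegral.of_pow hn (hw ▸ Subtype.property
    (p := (· ∈ integralClosure R (AlgebraicClosure (FractionRing R)))) y)⟩, Subtype.ext hw⟩

/-- **Corollary 6.1.** Let `(R, m)` be a complete Noetherian local domain of mixed
characteristic `p > 0` of Krull dimension `d`, with absolute integral closure `R⁺`. Let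
`p, x₂, …, x_d` be a system of parameters of `R` (encoded as `x : Fin d → R` with `x 0 = p`)
and let `B` be an `R⁺`-algebra satisfying conditions (1)–(3) of the Main Theorem. Assume
moreover that there are positive integers `a, n` and `y ∈ R⁺` with `yⁿ = pᵃ` whose image in
`B` does not lie in `(p, x₂, …, x_d)B`. Then there is a `B`-algebra `C` with
`(p, x₂, …, x_d)C ≠ C` on which `p, x₂, …, x_d` is a regular sequence; in particular the
Monomial Conjecture `(p·x₂⋯x_d)^t ∉ (p^{t+1}, x₂^{t+1}, …, x_d^{t+1})T` holds for every
intermediate ring `R ⊆ T ⊆ R⁺` and every `t ≥ 1`. -/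
theorem maps_to_big_CM_algebra_and_monomial_conjecture
    (p : ℕ) (hp : p.Prime) (d : ℕ) (hd : 0 < d)
    (R : Type) [CommRing R] [IsDomain R] [IsNoetherianRing R] [IsLocalRing R]
    [CharZero R] (hcompl : IsAdicComplete (maximalIdeal R) R)
    (hpm : (p : R) ∈ maximalIdeal R)
    (hdim : ringKrullDim R = d)
    (x : Fin d → R) (hx0 : x ⟨0, hd⟩ = (p : R)) (hxm : ∀ i, x i ∈ maximalIdeal R)
    (hsop : (Ideal.span (Set.range x)).radical = maximalIdeal R)
    (B : Type) [CommRing B] [Algebra (AbsIntClosure R) B]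
    -- (1)
    (hB1 : Ideal.span (Set.range fun i =>
      algebraMap (AbsIntClosure R) B (algebraMap R (AbsIntClosure R) (x i))) ≠ ⊤)
    -- (2)
    (hB2 : ∀ (j : ℕ) (hj : j < d), 1 ≤ j → ∀ b : B,
      algebraMap (AbsIntClosure R) B (algebraMap R (AbsIntClosure R) (x ⟨j, hj⟩)) * b ∈
        Ideal.span (Set.range fun i : Fin j =>
          algebraMap (AbsIntClosure R) B (algebraMap R (AbsIntClosure R) (x ⟨i.1, i.2.trans hj⟩))) →
      b ∈ Ideal.span (Set.range fun i : Fin j =>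
          algebraMap (AbsIntClosure R) B (algebraMap R (AbsIntClosure R) (x ⟨i.1, i.2.trans hj⟩))))
    -- (3)
    (hB3 : ¬ IsNilpotent (p : B))
    (hB3' : ∀ a n : ℕ, 0 < a → 0 < n → ∀ y : AbsIntClosure R,
      y ^ n = (p : AbsIntClosure R) ^ a →
      ∀ c : B, (p : B) * c = 0 → algebraMap (AbsIntClosure R) B y * c = 0)
    -- the additional hypothesis
    (hextra : ∃ (a n : ℕ) (y : AbsIntClosure R), 0 < a ∧ 0 < n ∧ y ^ n = (p : AbsIntClosure R) ^ a ∧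
      algebraMap (AbsIntClosure R) B y ∉
        Ideal.span (Set.range fun i =>
          algebraMap (AbsIntClosure R) B (algebraMap R (AbsIntClosure R) (x i)))) :
    (∃ (C : Type) (_ : CommRing C) (_ : Algebra B C),
      Ideal.span (Set.range fun i =>
        algebraMap B C (algebraMap (AbsIntClosure R) B (algebraMap R (AbsIntClosure R) (x i)))) ≠ ⊤ ∧
      ∀ (j : ℕ) (hj : j < d), ∀ c : C,
        algebraMap B C (algebraMap (AbsIntClosure R) B (algebraMap R (AbsIntClosure R) (x ⟨j, hj⟩))) * c ∈
          Ideal.span (Set.range fun i : Fin j =>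
            algebraMap B C (algebraMap (AbsIntClosure R) B
              (algebraMap R (AbsIntClosure R) (x ⟨i.1, i.2.trans hj⟩)))) →
        c ∈ Ideal.span (Set.range fun i : Fin j =>
            algebraMap B C (algebraMap (AbsIntClosure R) B
              (algebraMap R (AbsIntClosure R) (x ⟨i.1, i.2.trans hj⟩))))) ∧
    ∀ (T : Subalgebra R (AlgebraicClosure (FractionRing R))),
      T ≤ integralClosure R (AlgebraicClosure (FractionRing R)) →
      ∀ t : ℕ, 1 ≤ t →
        (algebraMap R T (∏ i, x i)) ^ t ∉
          Ideal.span (Set.range fun i => algebraMap R T (x i ^ (t + 1))) := by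
  have hC : ∃ (C : Type) (_ : CommRing C) (_ : Algebra B C),
      Ideal.span (Set.range fun i =>
        algebraMap B C (algebraMap (AbsIntClosure R) B (algebraMap R (AbsIntClosure R) (x i)))) ≠ ⊤ ∧
      ∀ (j : ℕ) (hj : j < d), ∀ c : C,
        algebraMap B C (algebraMap (AbsIntClosure R) B (algebraMap R (AbsIntClosure R) (x ⟨j, hj⟩))) * c ∈
          Ideal.span (Set.range fun i : Fin j =>
            algebraMap B C (algebraMap (AbsIntClosure R) B
              (algebraMap R (AbsIntClosure R) (x ⟨i.1, i.2.trans hj⟩)))) →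
        c ∈ Ideal.span (Set.range fun i : Fin j =>
            algebraMap B C (algebraMap (AbsIntClosure R) B
              (algebraMap R (AbsIntClosure R) (x ⟨i.1, i.2.trans hj⟩)))) := by
    obtain ⟨a, N, y, ha, hN, hy, hyI⟩ := hextra
    choose z hz using fun n : ℕ => AbsIntClosure.exists_pow_eq y (n + 1) n.succ_pos
    refine exists_regular_algebra_s2 d
      (fun i => algebraMap (AbsIntClosure R) B (algebraMap R (AbsIntClosure R) (x i)))
      (fun n => algebraMap (AbsIntClosure R) B (z n)) (fun n hn => hyI ?_) ?_
    · rw [← hz n, map_pow, pow_succ]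
      exact Ideal.mul_mem_right _ _ hn
    · intro j hj b hb n
      rcases Nat.eq_zero_or_pos j with rfl | hj0
      · have hb0 : (p : B) * b = 0 := by
          simpa [hx0] using hb
        have := hB3' a ((n + 1) * N) ha (Nat.mul_pos n.succ_pos hN) (z n)
          (by rw [pow_mul, hz, hy]) b hb0
        simp [this]
      · exact Ideal.mul_mem_left _ _ (hB2 j hj hj0 b hb)
  refine ⟨hC, fun T hT t _ hmem => ?_⟩
  obtain ⟨C, _, _, hC1, hC2⟩ := hC
  let φ : T →+* C := (algebraMap B C).comp ((algebraMap (AbsIntClosure R) B).comp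
    (Subalgebra.inclusion hT : T →+* integralClosure R (AlgebraicClosure (FractionRing R))))
  have hφ : ∀ r : R, φ (algebraMap R T r) =
      algebraMap B C (algebraMap (AbsIntClosure R) B (algebraMap R (AbsIntClosure R) r)) :=
    fun r => rfl
  refine prod_pow_notMem_span d t _ hC1 hC2 ?_
  have h := Ideal.mem_map_of_mem φ hmem
  rw [Ideal.map_span, ← Set.range_comp] at h
  simpa only [Function.comp_def, map_pow, map_prod, hφ] using h
end

section
/- For each 2 ≤ i ≤ d, the pair ⟨p⟩, ⟨x_i⟩ is a regular sequence on E(R^+) (that is, (⟨p⟩, ⟨x_i⟩)E(R^+) ≠ E(R^+), ⟨p⟩ is a nonzerodivisor on E(R^+), and ⟨x_i⟩ is a nonzerodivisor on E(R^+)/⟨p⟩E(R^+)), and moreover ⟨x_i⟩ itself is a nonzerodivisor on E(R^+). -/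
/-!
Write `S = R⁺` and let `w n` be the chosen `pⁿ`-th root of `p` in `S`. Everything about `E` follows
from three facts about the domain `S`.

* `S` is integrally closed in a field, so `bⁿ ∣ aⁿ` implies `b ∣ a`.
* `p, xᵢ` is a regular sequence on `S`. Since `R` and `R ⧸ (p)` have maximal ideals generated by as
  many elements as their dimension, `R ⧸ (p)` is a domain not killing `xᵢ`
  (`isDomain_of_span_card_le_dim`: regular local rings are domains), so `p, xᵢ` is regular on `R`.
  To pass to `S`, let `t` be in the fraction field of `S` with `p t` and `xᵢ t` integral. The
  finite `R`-module `R[p t, xᵢ t]` sits in a finite free lattice `F` with `R`-coordinates, and since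
  `pᵐ tᵐ` and `xᵢᵐ tᵐ` lie in `F`, regularity of `p, xᵢ` on the coordinates puts every `tᵐ` in `F`.
  Hence `R[t]` is finite over `R` and `t` is integral (`isIntegral_of_smul_of_smul`).
* `(p, xᵢ) S ≠ S` because `S` is integral over the local ring `R`.

In `E`: multiplication by `⟨xᵢ⟩` is injective because at each coordinate `n` a power of the root of
`xᵢ` is `xᵢ` itself, a nonzerodivisor on `S ⧸ p`. If `⟨p⟩ e = 0` then the coordinate `e (n+1)` is
divisible by `p / w (n+1)`, whose `p`-th power `p ^ p / w n` is divisible by `p`, so `e n = 0`.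
Finally `⟨p⟩` generates the kernel of the projection `Φ = φ 0` (`mem_span_of_coord_zero`): if
`e 0 = 0` then `w n` divides `e n`, say `e n = w n * b n`, and the `b (n+1) ^ p` form a compatible
system. Thus `E ⧸ ⟨p⟩` embeds into `S ⧸ p`, where `xᵢ` is a nonzerodivisor generating a proper ideal.
-/

open IsLocalRing

/-! ### Regular local rings are domains -/

/-- Killing one of the generators `a` of the maximal ideal of a local ring leaves a local ring whose
maximal ideal is generated by the images of the others. -/
theorem quotient_singleton_local {A : Type*} [CommRing A] [IsLocalRing A] {a : A} {s : Finset A}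
    (hs : maximalIdeal A = Ideal.span (insert a (s : Set A))) :
    ∃ _ : IsLocalRing (A ⧸ Ideal.span {a}), ∃ t : Finset (A ⧸ Ideal.span {a}),
      t.card ≤ s.card ∧ maximalIdeal (A ⧸ Ideal.span {a}) = Ideal.span (t : Set _) := by
  classical
  have ha : a ∈ maximalIdeal A := by rw [hs]; exact Ideal.subset_span (Set.mem_insert _ _)
  have hne : Ideal.span {a} ≠ ⊤ := fun h =>
    (maximalIdeal.isMaximal A).ne_top (top_le_iff.mp (h ▸ (Ideal.span_singleton_le_iff_mem _).2 ha))
  have : Nontrivial (A ⧸ Ideal.span {a}) := Ideal.Quotient.nontrivial_iff.mpr hne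
  have hl : IsLocalRing (A ⧸ Ideal.span {a}) :=
    IsLocalRing.of_surjective' _ Ideal.Quotient.mk_surjective
  refine ⟨hl, s.image (Ideal.Quotient.mk _), Finset.card_image_le, ?_⟩
  have hsurj := Ideal.Quotient.mk_surjective (I := Ideal.span {a})
  have hcomap : (maximalIdeal (A ⧸ Ideal.span {a})).comap (Ideal.Quotient.mk _) =
      maximalIdeal A :=
    IsLocalRing.eq_maximalIdeal (Ideal.comap_isMaximal_of_surjective _ hsurj)
  rw [← Ideal.map_comap_of_surjective _ hsurj (maximalIdeal _), hcomap, hs, Ideal.map_span,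
    Set.image_insert_eq, Ideal.Quotient.eq_zero_iff_mem.mpr (Ideal.mem_span_singleton_self a),
    Ideal.span_insert_zero, Finset.coe_image]

/-- A Noetherian local ring whose maximal ideal is generated by at most `dim A` elements is a domain.
By induction: prime avoidance gives `x ∈ m ∖ m²` outside all minimal primes, `A ⧸ (x)` is a domain
by induction, so the prime `(x)` contains a minimal prime `q ∌ x`; then `q = x q`, so `q = 0`. -/
theorem isDomain_of_span_card_le_dim (n : ℕ) : ∀ {A : Type*} [CommRing A] [IsLocalRing A]
    [IsNoetherianRing A] (s : Finset A), s.card ≤ n → maximalIdeal A = Ideal.span (s : Set A) →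
    (n : WithBot ℕ∞) ≤ ringKrullDim A → IsDomain A := by
  classical
  induction n with
  | zero =>
    intro A _ _ _ s hcard hs _
    have : s = ∅ := by simpa using hcard
    subst this
    have hf : IsField A := by
      rw [IsLocalRing.isField_iff_maximalIdeal_eq, hs]; simp
    exact hf.isDomain
  | succ n ih =>
    intro A _ _ _ s hcard hs hdim
    have hdim0 : ringKrullDim A ≠ 0 := by
      intro h; rw [h] at hdim
      have : ((n + 1 : ℕ) : WithBot ℕ∞) ≤ ((0 : ℕ) : WithBot ℕ∞) := by simp at hdim
      have := Nat.cast_le.mp this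
      omega
    have hsq := IsLocalRing.maximalIdeal_sq_lt_of_ringKrullDim_ne_zero hdim0
    have hfin := minimalPrimes.finite_of_isNoetherianRing A
    -- prime avoidance, with the one possibly non-prime ideal `m ^ 2`
    obtain ⟨x, hxm, hx⟩ : ∃ x ∈ maximalIdeal A, x ∉ maximalIdeal A ^ 2 ∧
        ∀ q ∈ minimalPrimes A, x ∉ q := by
      by_contra! hcon
      have hsub : (maximalIdeal A : Set A) ⊆
          ⋃ i ∈ ((insert (maximalIdeal A ^ 2) hfin.toFinset : Finset (Ideal A)) : Set (Ideal A)),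
            (id i : Ideal A) := by
        intro y hy
        simp only [Set.mem_iUnion]
        by_cases h2 : y ∈ maximalIdeal A ^ 2
        · exact ⟨_, by simp, h2⟩
        · obtain ⟨q, hq, hyq⟩ := hcon y hy h2
          exact ⟨q, by simp [hq], hyq⟩
      rw [Ideal.subset_union_prime (maximalIdeal A ^ 2) (maximalIdeal A ^ 2)] at hsub
      · obtain ⟨q, hq, hle⟩ := hsub
        rcases Finset.mem_insert.mp hq with rfl | hq
        · exact hsq.not_ge hle
        · have hq' : q ∈ minimalPrimes A := by simpa using hq
          have hqp : q.IsPrime := hq'.isPrime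
          have : maximalIdeal A = q := le_antisymm hle (le_maximalIdeal hqp.ne_top)
          rw [← this] at hq'
          apply hdim0
          rw [← IsLocalRing.maximalIdeal_height_eq_ringKrullDim,
            Ideal.height_eq_zero_iff.mpr hq']
          rfl
      · intro i hi h1 _
        rcases Finset.mem_insert.mp hi with rfl | hi
        · exact absurd rfl h1
        · exact (by simpa using hi : i ∈ minimalPrimes A).isPrime
    obtain ⟨hx2, hxq⟩ := hx
    -- some coefficient of `x` on the generators `s` is a unit, so `x` can replace that generator
    obtain ⟨c, hc⟩ : ∃ c : A → A, ∑ a ∈ s, c a * a = x := by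
      have := hxm
      rw [hs] at this
      obtain ⟨c, -, hc⟩ := Submodule.mem_span_finset.mp this
      exact ⟨c, hc⟩
    obtain ⟨j, hjs, hj⟩ : ∃ j ∈ s, IsUnit (c j) := by
      by_contra! hcon
      apply hx2
      rw [← hc, pow_two]
      refine Ideal.sum_mem _ fun a ha => Ideal.mul_mem_mul ((mem_maximalIdeal _).mpr (hcon a ha)) ?_
      rw [hs]; exact Ideal.subset_span ha
    have hs' : maximalIdeal A = Ideal.span (insert x ((s.erase j : Finset A) : Set A)) := by
      apply le_antisymm
      · rw [hs, Ideal.span_le]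
        intro a ha
        by_cases haj : a = j
        · subst haj
          rw [← Finset.add_sum_erase _ _ hjs] at hc
          have h1 : c a * a ∈ Ideal.span (insert x ((s.erase a : Finset A) : Set A)) := by
            rw [eq_sub_of_add_eq hc]
            refine Ideal.sub_mem _ (Ideal.subset_span (Set.mem_insert _ _))
              (Ideal.sum_mem _ fun b hb => Ideal.mul_mem_left _ _ (Ideal.subset_span ?_))
            exact Set.mem_insert_of_mem _ hb
          exact (Ideal.unit_mul_mem_iff_mem _ hj).mp h1
        · exact Ideal.subset_span (Set.mem_insert_of_mem _ (by simpa [haj] using ha))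
      · rw [Ideal.span_le]
        rintro a (rfl | ha)
        · exact hxm
        · rw [hs]; exact Ideal.subset_span (Finset.mem_of_mem_erase ha)
    obtain ⟨hl, t, ht, hmt⟩ := quotient_singleton_local hs'
    have hdimq : (n : WithBot ℕ∞) ≤ ringKrullDim (A ⧸ Ideal.span {x}) := by
      have h := ringKrullDim_le_ringKrullDim_quotient_add_card ({x} : Finset A)
        (by simpa [IsLocalRing.ringJacobson_eq_maximalIdeal] using hxm)
      rw [Finset.coe_singleton, Finset.card_singleton, Nat.cast_one] at h
      rw [← ENat.WithBot.add_le_add_one_right_iff]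
      exact le_trans (by exact_mod_cast hdim) h
    have hdom := ih t (ht.trans (by rw [Finset.card_erase_of_mem hjs]; omega)) hmt hdimq
    have hprime : (Ideal.span {x}).IsPrime := (Ideal.Quotient.isDomain_iff_prime _).mp hdom
    obtain ⟨q, hq, hqx⟩ := Ideal.exists_minimalPrimes_le (bot_le : ⊥ ≤ Ideal.span {x})
    have hqp : q.IsPrime := hq.isPrime
    have hq0 : q = ⊥ := by
      refine Submodule.eq_bot_of_le_smul_of_le_jacobson_bot (Ideal.span {x}) q
        (IsNoetherian.noetherian q) ?_ ?_
      · intro y hy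
        obtain ⟨a, rfl⟩ := Ideal.mem_span_singleton'.mp (hqx hy)
        rw [mul_comm]
        exact Submodule.smul_mem_smul (Ideal.mem_span_singleton_self x)
          ((hqp.mem_or_mem hy).resolve_right (hxq q hq))
      · rw [IsLocalRing.jacobson_eq_maximalIdeal _ bot_ne_top]
        exact (Ideal.span_singleton_le_iff_mem _).2 hxm
    subst hq0
    exact IsDomain.of_bot_isPrime A

/-! ### Regular sequences and integral closure -/

/-- For a prime element `a ∤ b`, the powers `aᵐ, bᵐ` form a regular sequence; equivalently
a fraction `k` with `aᵐ k, bᵐ k ∈ R` lies in `R`. -/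
theorem mem_range_of_mul_mem {R K : Type*} [CommRing R] [IsDomain R] [Field K] [Algebra R K]
    [IsFractionRing R K] {a b : R} (ha : Prime a) (hab : ¬ a ∣ b) (m : ℕ) {k : K}
    (h1 : algebraMap R K (a ^ m) * k ∈ (algebraMap R K).range)
    (h2 : algebraMap R K (b ^ m) * k ∈ (algebraMap R K).range) :
    k ∈ (algebraMap R K).range := by
  obtain ⟨u, hu⟩ := h1
  obtain ⟨v, hv⟩ := h2
  have hinj := IsFractionRing.injective R K
  have h : b ^ m * u = a ^ m * v := by
    apply hinj
    rw [map_mul, map_mul, hu, hv]; ring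
  obtain ⟨w, rfl⟩ : a ^ m ∣ u :=
    ha.pow_dvd_of_dvd_mul_left m (fun h => hab (ha.dvd_of_dvd_pow h)) ⟨v, h⟩
  refine ⟨w, ?_⟩
  have h0 : algebraMap R K (a ^ m) ≠ 0 := by
    rw [Ne, map_eq_zero_iff _ hinj]; exact pow_ne_zero _ ha.ne_zero
  rw [map_mul] at hu
  exact mul_left_cancel₀ h0 hu

/-- A finite submodule `N` of `L` is contained in a finite `F` such that `aᵐ s, bᵐ s ∈ F` implies
`s ∈ F`. The module `F` is the free `R`-module on a rescaled `K`-basis of the `K`-span of `N`. -/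
theorem exists_fg_saturated {R K L : Type*} [CommRing R] [IsDomain R] [Field K] [Algebra R K]
    [IsFractionRing R K] [Field L] [Algebra K L] [Algebra R L] [IsScalarTower R K L]
    {a b : R} (ha : Prime a) (hab : ¬ a ∣ b) (N : Submodule R L) (hN : N.FG) :
    ∃ F : Submodule R L, F.FG ∧ N ≤ F ∧
      ∀ (m : ℕ) (s : L), a ^ m • s ∈ F → b ^ m • s ∈ F → s ∈ F := by
  obtain ⟨G, rfl⟩ := hN
  let V : Submodule K L := Submodule.span K (G : Set L)
  have hV : Module.Finite K V := Module.Finite.span_of_finite K G.finite_toSet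
  let B := Module.finBasis K V
  -- a common denominator of the coordinates of the generators
  obtain ⟨c, hc⟩ := IsLocalization.exist_integer_multiples_of_finite (nonZeroDivisors R)
    (fun q : G × Fin (Module.finrank K V) =>
      B.repr ⟨q.1, Submodule.subset_span q.1.2⟩ q.2)
  have hc0 : algebraMap R K c ≠ 0 := by
    rw [Ne, map_eq_zero_iff _ (IsFractionRing.injective R K)]
    exact nonZeroDivisors.ne_zero c.2
  let f : (Fin (Module.finrank K V) → R) →ₗ[R] L :=
    Fintype.linearCombination R (fun j => (algebraMap R K c)⁻¹ • (B j : L))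
  have hf (r) : f r = ((algebraMap R K c)⁻¹ • ∑ j, algebraMap R K (r j) • B j : V) := by
    simp only [f, Fintype.linearCombination_apply, Submodule.coe_smul, Submodule.coe_sum,
      Finset.smul_sum]
    refine Finset.sum_congr rfl fun j _ => ?_
    rw [smul_comm, algebraMap_smul]
  -- membership in the lattice is integrality of the coordinates multiplied by `c`
  have key (s : V) : (s : L) ∈ LinearMap.range f ↔
      ∀ j, algebraMap R K c * B.repr s j ∈ (algebraMap R K).range := by
    constructor
    · rintro ⟨r, hr⟩ j
      rw [hf] at hr
      have hr := Subtype.ext hr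
      rw [← hr]
      refine ⟨r j, ?_⟩
      rw [map_smul, Finsupp.smul_apply, B.repr_sum_self, smul_eq_mul, mul_inv_cancel_left₀ hc0]
    · intro h
      choose r hr using h
      refine ⟨r, ?_⟩
      rw [hf]
      congr 1
      simp_rw [hr, mul_smul]
      rw [← Finset.smul_sum, smul_smul, inv_mul_cancel₀ hc0, one_smul, B.sum_repr]
  refine ⟨LinearMap.range f, ?_, ?_, ?_⟩
  · rw [LinearMap.range_eq_map]; exact Module.Finite.fg_top.map f
  · rw [Submodule.span_le]
    intro g hg
    refine (key ⟨g, Submodule.subset_span hg⟩).2 fun j => ?_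
    obtain ⟨y, hy⟩ := hc (⟨g, hg⟩, j)
    exact ⟨y, by rw [hy, ← algebraMap_smul K, smul_eq_mul]⟩
  · intro m s h1 h2
    have hfV : ∀ v ∈ LinearMap.range f, v ∈ V := by
      rintro _ ⟨r, rfl⟩; rw [hf]; exact Subtype.property _
    have h0 : algebraMap R K (a ^ m) ≠ 0 := by
      rw [Ne, map_eq_zero_iff _ (IsFractionRing.injective R K)]; exact pow_ne_zero _ ha.ne_zero
    have hsV : s ∈ V := by
      have := hfV _ h1
      rw [← algebraMap_smul K] at this
      exact (Submodule.smul_mem_iff _ h0).1 this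
    lift s to V using hsV
    have e (r : R) : r • (s : L) = ((algebraMap R K r • s : V) : L) := by
      rw [Submodule.coe_smul, algebraMap_smul]
    rw [e, key] at h1 h2
    refine (key s).2 fun j => mem_range_of_mul_mem ha hab m ?_ ?_
    · simpa [mul_left_comm] using h1 j
    · simpa [mul_left_comm] using h2 j

/-- If `a` is prime and `a ∤ b`, an element `t` with `a t` and `b t` integral is itself integral.
No normality of `R` is needed. -/
theorem isIntegral_of_smul_of_smul {R : Type*} (K : Type*) {L : Type*} [CommRing R] [IsDomain R]
    [IsNoetherianRing R] [Field K] [Algebra R K]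
    [IsFractionRing R K] [Field L] [Algebra K L] [Algebra R L] [IsScalarTower R K L]
    {a b : R} (ha : Prime a) (hab : ¬ a ∣ b) {t : L} (h1 : IsIntegral R (a • t))
    (h2 : IsIntegral R (b • t)) : IsIntegral R t := by
  let A := Algebra.adjoin R {a • t, b • t}
  have hA : A.toSubmodule.FG := fg_adjoin_of_finite (Set.toFinite _) (by
    rintro x (rfl | rfl) <;> assumption)
  obtain ⟨F, hF, hAF, hsat⟩ := exists_fg_saturated (K := K) ha hab _ hA
  have hle : (Algebra.adjoin R {t}).toSubmodule ≤ F := by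
    rw [Algebra.adjoin_singleton_eq_range_aeval]
    rintro _ ⟨q, rfl⟩
    change Polynomial.aeval t q ∈ F
    rw [Polynomial.aeval_eq_sum_range]
    refine Submodule.sum_mem _ fun m _ => Submodule.smul_mem _ _ (hsat m _ ?_ ?_)
    · rw [← smul_pow]
      exact hAF (A.pow_mem (Algebra.subset_adjoin (by simp)) m)
    · rw [← smul_pow]
      exact hAF (A.pow_mem (Algebra.subset_adjoin (by simp)) m)
  exact IsIntegral.of_mem_of_fg _ (hF.of_le hle) t (Algebra.self_mem_adjoin_singleton R t)

/-! ### The regular system of parameters of `R` -/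

/-- An element of a regular system of parameters is prime, and does not divide the others. -/
theorem prime_and_not_dvd_of_regular_system {d : ℕ} (hd : 0 < d) {R : Type*} [CommRing R]
    [IsDomain R] [IsNoetherianRing R] [IsLocalRing R] (hdim : ringKrullDim R = d)
    (x : Fin d → R) (hx0 : x ⟨0, hd⟩ ≠ 0)
    (hxgen : maximalIdeal R = Ideal.span (Set.range x)) :
    Prime (x ⟨0, hd⟩) ∧ ∀ i : Fin d, i ≠ ⟨0, hd⟩ → ¬ x ⟨0, hd⟩ ∣ x i := by
  classical
  set o : Fin d := ⟨0, hd⟩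
  -- fewer than `d = dim R` of the `x j` cannot generate the maximal ideal
  have himg (T : Finset (Fin d)) (hT : T.card < d) :
      maximalIdeal R ≠ Ideal.span ((T.image x : Finset R) : Set R) := by
    intro h
    have h1 := ringKrullDim_le_spanFinrank_maximalIdeal R
    rw [h, hdim] at h1
    have h2 := Submodule.spanFinrank_span_le_ncard_of_finite (R := R) (T.image x).finite_toSet
    rw [Set.ncard_coe_finset] at h2
    have h3 : d ≤ (Submodule.span R ((T.image x : Finset R) : Set R)).spanFinrank :=
      Nat.cast_le.mp h1
    exact absurd (h3.trans (h2.trans Finset.card_image_le)) (by omega)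
  constructor
  · have hs : maximalIdeal R =
        Ideal.span (insert (x o) (((Finset.univ.erase o).image x : Finset R) : Set R)) := by
      rw [hxgen, ← Finset.coe_insert, ← Finset.image_insert,
        Finset.insert_erase (Finset.mem_univ _), Finset.coe_image, Finset.coe_univ, Set.image_univ]
    obtain ⟨hl, t, ht, hmt⟩ := quotient_singleton_local hs
    have hcard : ((Finset.univ.erase o).image x).card ≤ d - 1 :=
      Finset.card_image_le.trans (by simp [Finset.card_erase_of_mem])
    have hdimq : ((d - 1 : ℕ) : WithBot ℕ∞) ≤ ringKrullDim (R ⧸ Ideal.span {x o}) := by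
      have hom : x o ∈ maximalIdeal R := by
        rw [hxgen]; exact Ideal.subset_span ⟨o, rfl⟩
      have h := ringKrullDim_le_ringKrullDim_quotient_add_card ({x o} : Finset R)
        (by simpa [IsLocalRing.ringJacobson_eq_maximalIdeal] using hom)
      rw [Finset.coe_singleton, Finset.card_singleton, Nat.cast_one, hdim] at h
      rw [← ENat.WithBot.add_le_add_one_right_iff]
      refine le_trans (le_of_eq ?_) h
      norm_cast
      omega
    have hdom := isDomain_of_span_card_le_dim (d - 1) t (ht.trans hcard) hmt hdimq
    exact (Ideal.span_singleton_prime hx0).mp ((Ideal.Quotient.isDomain_iff_prime _).mp hdom)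
  · intro i hi hdvd
    refine himg (Finset.univ.erase i) (by simp [Finset.card_erase_of_mem, hd]) ?_
    apply le_antisymm
    · rw [hxgen, Ideal.span_le]
      rintro _ ⟨j, rfl⟩
      have hmem (k : Fin d) (hk : k ≠ i) : x k ∈
          Ideal.span (((Finset.univ.erase i).image x : Finset R) : Set R) :=
        Ideal.subset_span (Finset.mem_image_of_mem _ (by simp [hk]))
      by_cases hj : j = i
      · subst hj
        exact Ideal.mem_of_dvd _ hdvd (hmem o hi.symm)
      · exact hmem j hj
    · rw [hxgen]
      refine Ideal.span_mono ?_
      rw [Finset.coe_image]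
      exact Set.image_subset_range _ _

/-! ### The Fontaine ring of a ring `S` -/

section Fontaine

variable {p : ℕ} {S E : Type*} [CommRing S] [CommRing E]
  {φ : (n : ℕ) → E →+* (S ⧸ Ideal.span {(p : S)})}

theorem coord_pow_pow (hφ : ∀ (e : E) (n : ℕ), φ (n + 1) e ^ p = φ n e) (e : E) (n k : ℕ) :
    φ (n + k) e ^ p ^ k = φ n e := by
  induction k with
  | zero => simp
  | succ k ih => rw [pow_succ', pow_mul, ← add_assoc, hφ, ih]

theorem root_pow_pow {w : ℕ → S} (hw : ∀ n, w (n + 1) ^ p = w n) (n : ℕ) :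
    w n ^ p ^ n = w 0 := by
  induction n with
  | zero => simp
  | succ k ih => rw [pow_succ', pow_mul, hw, ih]

theorem mk_eq_iff_dvd_sub {q a b : S} : Ideal.Quotient.mk (Ideal.span {q}) a =
    Ideal.Quotient.mk (Ideal.span {q}) b ↔ q ∣ a - b := by
  rw [Ideal.Quotient.eq, Ideal.mem_span_singleton]

theorem mk_eq_zero_iff_dvd {q a : S} : Ideal.Quotient.mk (Ideal.span {q}) a = 0 ↔ q ∣ a := by
  rw [Ideal.Quotient.eq_zero_iff_mem, Ideal.mem_span_singleton]

theorem eq_zero_of_forall_coord (hφlim : ∀ f : ℕ → (S ⧸ Ideal.span {(p : S)}),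
      (∀ n, f (n + 1) ^ p = f n) → ∃! e : E, ∀ n, φ n e = f n) (hp : p ≠ 0)
    {e : E} (he : ∀ n, φ n e = 0) : e = 0 :=
  (hφlim (fun _ => 0) fun _ => zero_pow hp).unique he fun _ => map_zero _

/-- The element of `E` given by a system of `p`-power roots of `v 0` is a nonzerodivisor as soon as
`v 0` is a nonzerodivisor on `S ⧸ p`. -/
theorem nonzerodivisor_of_root_system
    (hφlim : ∀ f : ℕ → (S ⧸ Ideal.span {(p : S)}),
      (∀ n, f (n + 1) ^ p = f n) → ∃! e : E, ∀ n, φ n e = f n) (hp : p.Prime)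
    {v : ℕ → S} (hv : ∀ n, v (n + 1) ^ p = v n) {y : E}
    (hy : ∀ n, φ n y = Ideal.Quotient.mk _ (v n))
    (hreg : ∀ s, (p : S) ∣ v 0 * s → (p : S) ∣ s) {e : E} (he : y * e = 0) : e = 0 := by
  refine eq_zero_of_forall_coord hφlim hp.ne_zero fun n => ?_
  obtain ⟨a, ha⟩ := Ideal.Quotient.mk_surjective (φ n e)
  have h : φ n y * φ n e = 0 := by rw [← map_mul, he, map_zero]
  rw [hy, ← ha, ← map_mul, mk_eq_zero_iff_dvd] at h
  rw [← ha, mk_eq_zero_iff_dvd]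
  apply hreg
  obtain ⟨k, hk⟩ : ∃ k, p ^ n = k + 1 := ⟨p ^ n - 1, by have := Nat.pow_pos (n := n) hp.pos; omega⟩
  rw [← root_pow_pow hv n, hk, pow_succ, mul_assoc]
  exact h.mul_left _

variable [IsDomain S]

/-- `⟨p⟩` is a nonzerodivisor on `E`, although its image in `S ⧸ p` is zero. -/
theorem nonzerodivisor_of_root_system_p (hφ : ∀ (e : E) (n : ℕ), φ (n + 1) e ^ p = φ n e)
    (hφlim : ∀ f : ℕ → (S ⧸ Ideal.span {(p : S)}),
      (∀ n, f (n + 1) ^ p = f n) → ∃! e : E, ∀ n, φ n e = f n) (hp : p.Prime)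
    (hpS : (p : S) ≠ 0) {w : ℕ → S} (hw : ∀ n, w (n + 1) ^ p = w n) (hw0 : w 0 = p) {y : E}
    (hy : ∀ n, φ n y = Ideal.Quotient.mk _ (w n)) {e : E} (he : y * e = 0) : e = 0 := by
  refine eq_zero_of_forall_coord hφlim hp.ne_zero fun n => ?_
  obtain ⟨a, ha⟩ := Ideal.Quotient.mk_surjective (φ (n + 1) e)
  have h : φ (n + 1) y * φ (n + 1) e = 0 := by rw [← map_mul, he, map_zero]
  rw [hy, ← ha, ← map_mul, mk_eq_zero_iff_dvd] at h
  rw [← hφ, ← ha, ← map_pow, mk_eq_zero_iff_dvd]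
  -- `w (n+1) * a = p * s` gives `w n * a ^ p = p ^ p * s ^ p`, and `w n` divides `p`
  obtain ⟨s, hs⟩ := h
  obtain ⟨v, hv⟩ : w n ∣ p := by
    rw [← hw0, ← root_pow_pow hw n]; exact dvd_pow_self _ (pow_ne_zero _ hp.ne_zero)
  have hwn : w n ≠ 0 := by rintro h0; rw [h0, zero_mul] at hv; exact hpS hv
  obtain ⟨k, rfl⟩ : ∃ k, p = k + 2 := ⟨p - 2, by have := hp.two_le; omega⟩
  have h2 : w n * a ^ (k + 2) = w n * (((k + 2 : ℕ) : S) ^ (k + 1) * v * s ^ (k + 2)) := by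
    calc w n * a ^ (k + 2) = (w (n + 1) * a) ^ (k + 2) := by rw [mul_pow, hw]
      _ = ((k + 2 : ℕ) : S) * ((k + 2 : ℕ) : S) ^ (k + 1) * s ^ (k + 2) := by rw [hs]; ring
      _ = (w n * v) * ((k + 2 : ℕ) : S) ^ (k + 1) * s ^ (k + 2) := by rw [← hv]
      _ = _ := by ring
  rw [mul_left_cancel₀ hwn h2, pow_succ', mul_assoc, mul_assoc]
  exact dvd_mul_right _ _

/-- `⟨p⟩` generates the kernel of `Φ = φ 0` when divisibility in `S` can be tested on powers. -/
theorem mem_span_of_coord_zero (hφ : ∀ (e : E) (n : ℕ), φ (n + 1) e ^ p = φ n e)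
    (hφlim : ∀ f : ℕ → (S ⧸ Ideal.span {(p : S)}),
      (∀ n, f (n + 1) ^ p = f n) → ∃! e : E, ∀ n, φ n e = f n) (hp : p.Prime)
    (hpS : (p : S) ≠ 0) (hroot : ∀ (a b : S) (n : ℕ), n ≠ 0 → b ^ n ∣ a ^ n → b ∣ a)
    {w : ℕ → S} (hw : ∀ n, w (n + 1) ^ p = w n) (hw0 : w 0 = p) {y : E}
    (hy : ∀ n, φ n y = Ideal.Quotient.mk _ (w n)) {e : E} (he : φ 0 e = 0) :
    e ∈ Ideal.span {y} := by
  have hex (n : ℕ) : ∃ b, φ n e = Ideal.Quotient.mk _ (w n * b) := by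
    obtain ⟨a, ha⟩ := Ideal.Quotient.mk_surjective (φ n e)
    have h := coord_pow_pow hφ e 0 n
    rw [zero_add, he, ← ha, ← map_pow, mk_eq_zero_iff_dvd, ← hw0, ← root_pow_pow hw n] at h
    obtain ⟨b, rfl⟩ := hroot _ _ _ (pow_ne_zero _ hp.ne_zero) h
    exact ⟨b, ha.symm⟩
  choose b hb using hex
  have hdvd (n : ℕ) : w n ∣ p := by
    rw [← hw0, ← root_pow_pow hw n]; exact dvd_pow_self _ (pow_ne_zero _ hp.ne_zero)
  have hwn (n : ℕ) : w n ≠ 0 := fun h0 => hpS (zero_dvd_iff.mp (h0 ▸ hdvd n))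
  have hcompat (n : ℕ) : (p : S) ∣ w n * (b (n + 1) ^ p - b n) := by
    have := hφ e n
    rw [hb, hb, ← map_pow, mk_eq_iff_dvd_sub, mul_pow, hw] at this
    rwa [mul_sub]
  -- `b (n+1) ^ p - b n` is only divisible by `p / w n`; its `p`-th power is divisible by `p`
  obtain ⟨f, hf, -⟩ := hφlim (fun n => Ideal.Quotient.mk _ (b (n + 1) ^ p)) (by
    intro n
    rw [← map_pow, mk_eq_iff_dvd_sub]
    obtain ⟨s, hs⟩ := hcompat (n + 1)
    obtain ⟨v, hv⟩ := hdvd n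
    set u := b (n + 1 + 1) ^ p - b (n + 1) with hu
    have hup : (p : S) ∣ u ^ p := by
      obtain ⟨k, hk⟩ : ∃ k, p = k + 2 := ⟨p - 2, by have := hp.two_le; omega⟩
      refine ⟨(p : S) ^ k * v * s ^ p, mul_left_cancel₀ (hwn n) ?_⟩
      calc w n * u ^ p = (w (n + 1) * u) ^ p := by rw [mul_pow, hw]
        _ = (p : S) ^ (k + 2) * s ^ p := by rw [hs, mul_pow]; congr 2
        _ = (p : S) * (p : S) ^ k * p * s ^ p := by ring
        _ = (p : S) * (p : S) ^ k * (w n * v) * s ^ p := by rw [← hv]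
        _ = _ := by ring
    have hb2 : b (n + 1 + 1) ^ p = b (n + 1) + u := by rw [hu]; ring
    obtain ⟨r, hr⟩ := exists_add_pow_prime_eq hp (b (n + 1)) u
    obtain ⟨q, hq⟩ := hup
    exact ⟨q + b (n + 1) * u * r, by rw [hb2, hr, hq]; ring⟩)
  rw [Ideal.mem_span_singleton]
  refine ⟨f, ?_⟩
  rw [← sub_eq_zero]
  refine eq_zero_of_forall_coord hφlim hp.ne_zero fun n => ?_
  rw [map_sub, map_mul, hf, hy, sub_eq_zero, hb, ← map_mul, eq_comm, mk_eq_iff_dvd_sub, ← mul_sub]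
  exact hcompat n

end Fontaine

/-! ### The absolute integral closure -/

theorem AbsIntClosure.isDomain' (R : Type) [CommRing R] [IsDomain R] :
    IsDomain (AbsIntClosure R) :=
  inferInstanceAs (IsDomain (integralClosure R (AlgebraicClosure (FractionRing R))))

theorem AbsIntClosure.algebraMap_injective' (R : Type) [CommRing R] [IsDomain R] :
    Function.Injective (algebraMap R (AbsIntClosure R)) := by
  have : FaithfulSMul R (AlgebraicClosure (FractionRing R)) :=
    FaithfulSMul.trans R (FractionRing R) _
  exact FaithfulSMul.algebraMap_injective R
    (integralClosure R (AlgebraicClosure (FractionRing R)))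

theorem AbsIntClosure.isIntegral' (R : Type) [CommRing R] [IsDomain R] :
    Algebra.IsIntegral R (AbsIntClosure R) :=
  inferInstanceAs (Algebra.IsIntegral R (integralClosure R (AlgebraicClosure (FractionRing R))))

theorem AbsIntClosure.dvd_of_isIntegral_div {R : Type} [CommRing R] [IsDomain R]
    (a b : integralClosure R (AlgebraicClosure (FractionRing R))) (hb : b ≠ 0)
    (h : IsIntegral R (a / b : AlgebraicClosure (FractionRing R))) : b ∣ a := by
  refine ⟨⟨_, h⟩, Subtype.ext ?_⟩
  have : (b : AlgebraicClosure (FractionRing R)) ≠ 0 := fun h0 => hb (Subtype.ext h0)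
  change (a : AlgebraicClosure (FractionRing R)) = b * (a / b)
  rw [mul_div_cancel₀ _ this]

theorem AbsIntClosure.dvd_of_pow_dvd_pow {R : Type} [CommRing R] [IsDomain R]
    (a b : AbsIntClosure R) (n : ℕ) (hn : n ≠ 0) (h : b ^ n ∣ a ^ n) : b ∣ a := by
  by_cases hb : b = 0
  · subst hb
    have := AbsIntClosure.isDomain' R
    rw [zero_pow hn] at h
    exact zero_dvd_iff.mpr (pow_eq_zero_iff hn |>.mp (zero_dvd_iff.mp h))
  change integralClosure R (AlgebraicClosure (FractionRing R)) at a b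
  have hb' : (b : AlgebraicClosure (FractionRing R)) ≠ 0 := fun h0 => hb (Subtype.ext h0)
  refine AbsIntClosure.dvd_of_isIntegral_div a b hb (IsIntegral.of_pow (Nat.pos_of_ne_zero hn) ?_)
  obtain ⟨c, hc⟩ := h
  have hc' : (a : AlgebraicClosure (FractionRing R)) ^ n = b ^ n * Subtype.val c :=
    congrArg Subtype.val hc
  rw [div_pow, hc', mul_div_cancel_left₀ _ (pow_ne_zero _ hb')]
  exact Subtype.property c

/-- `a, b` is a regular sequence on `R⁺` when `a` is prime in `R` and `a ∤ b`. -/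
theorem AbsIntClosure.dvd_of_dvd_mul {R : Type} [CommRing R] [IsDomain R] [IsNoetherianRing R]
    {a b : R} (ha : Prime a) (hab : ¬ a ∣ b) (s : AbsIntClosure R)
    (h : algebraMap R (AbsIntClosure R) a ∣ algebraMap R (AbsIntClosure R) b * s) :
    algebraMap R (AbsIntClosure R) a ∣ s := by
  have ha0 : algebraMap R (AbsIntClosure R) a ≠ 0 := by
    rw [Ne, map_eq_zero_iff _ (AbsIntClosure.algebraMap_injective' R)]; exact ha.ne_zero
  change integralClosure R (AlgebraicClosure (FractionRing R)) at s
  set α : integralClosure R (AlgebraicClosure (FractionRing R)) :=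
    algebraMap R (integralClosure R (AlgebraicClosure (FractionRing R))) a with hα
  have hα' : (α : AlgebraicClosure (FractionRing R)) ≠ 0 := fun h0 => ha0 (Subtype.ext h0)
  refine AbsIntClosure.dvd_of_isIntegral_div s α ha0 ?_
  obtain ⟨c, hc⟩ := h
  have hc' : algebraMap R (AlgebraicClosure (FractionRing R)) b * s = α * Subtype.val c :=
    congrArg Subtype.val hc
  refine isIntegral_of_smul_of_smul (FractionRing R) ha hab ?_ ?_
  · have : a • ((s : AlgebraicClosure (FractionRing R)) / α) = s := by
      rw [Algebra.smul_def]; exact mul_div_cancel₀ _ hα'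
    rw [this]; exact s.2
  · have : b • ((s : AlgebraicClosure (FractionRing R)) / α) = Subtype.val c := by
      rw [Algebra.smul_def, ← mul_div_assoc, hc', mul_div_cancel_left₀ _ hα']
    rw [this]; exact Subtype.property c

/-- **Discussion 5.1.** Let `(R, m)` be a complete regular local ring of mixed characteristic
`p > 0` with perfect residue field and regular system of parameters `p, x₂, …, x_d` (encoded
as `x : Fin d → R` with `x 0 = p`).  In the Fontaine ring `E(R⁺)` (encoded by a ring `E` with
coordinate projections `φ n` onto `R⁺/pR⁺`), for each `2 ≤ i ≤ d` the pair `⟨p⟩, ⟨xᵢ⟩` is a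
regular sequence on `E(R⁺)`, and moreover `⟨xᵢ⟩` itself is a nonzerodivisor on `E(R⁺)`.
Here `⟨p⟩ = z 0` and `⟨xᵢ⟩ = z i` are given by compatible systems of `p`-power roots in
`R⁺`. -/
theorem fontaine_ring_regular_pairs
    (p : ℕ) (hp : p.Prime) (d : ℕ) (hd : 0 < d)
    (R : Type) [CommRing R] [IsDomain R] [IsNoetherianRing R] [IsLocalRing R]
    [CharZero R] (hcompl : IsAdicComplete (maximalIdeal R) R)
    (hdim : ringKrullDim R = d)
    (x : Fin d → R) (hx0 : x ⟨0, hd⟩ = (p : R))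
    (hxgen : maximalIdeal R = Ideal.span (Set.range x))
    (hperf : Function.Bijective fun t : ResidueField R => t ^ p)
    -- the Fontaine ring `E(R⁺)` with its coordinate projections
    (E : Type) [CommRing E]
    (φ : (n : ℕ) → E →+* (AbsIntClosure R ⧸ Ideal.span {(p : AbsIntClosure R)}))
    (hφ : ∀ (e : E) (n : ℕ), φ (n + 1) e ^ p = φ n e)
    (hφlim : ∀ f : ℕ → (AbsIntClosure R ⧸ Ideal.span {(p : AbsIntClosure R)}),
      (∀ n, f (n + 1) ^ p = f n) → ∃! e : E, ∀ n, φ n e = f n)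
    -- the elements `⟨p⟩ = z 0` and `⟨xᵢ⟩ = z i`
    (zseq : Fin d → ℕ → AbsIntClosure R)
    (hzseq0 : ∀ i, zseq i 0 = algebraMap R (AbsIntClosure R) (x i))
    (hzseqpow : ∀ i n, zseq i (n + 1) ^ p = zseq i n)
    (z : Fin d → E)
    (hz : ∀ i n, φ n (z i) = Ideal.Quotient.mk (Ideal.span {(p : AbsIntClosure R)}) (zseq i n)) :
    ∀ i : Fin d, i ≠ ⟨0, hd⟩ →
      Ideal.span {z ⟨0, hd⟩, z i} ≠ ⊤ ∧
      (∀ e : E, z ⟨0, hd⟩ * e = 0 → e = 0) ∧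
      (∀ e : E, z i * e ∈ Ideal.span {z ⟨0, hd⟩} → e ∈ Ideal.span {z ⟨0, hd⟩}) ∧
      (∀ e : E, z i * e = 0 → e = 0) := by
  intro i hi
  have := AbsIntClosure.isDomain' R
  have := AbsIntClosure.isIntegral' R
  have hinj := AbsIntClosure.algebraMap_injective' R
  have hpR : (p : R) ≠ 0 := Nat.cast_ne_zero.mpr hp.ne_zero
  have hpS : (p : AbsIntClosure R) ≠ 0 := by
    rw [← map_natCast (algebraMap R (AbsIntClosure R)), Ne, map_eq_zero_iff _ hinj]
    exact hpR
  have hw0 : zseq ⟨0, hd⟩ 0 = p := by rw [hzseq0, hx0, map_natCast]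
  obtain ⟨hprime, hndvd⟩ := prime_and_not_dvd_of_regular_system hd hdim x (hx0 ▸ hpR) hxgen
  have hreg (s : AbsIntClosure R) (h : (p : AbsIntClosure R) ∣ zseq i 0 * s) :
      (p : AbsIntClosure R) ∣ s := by
    rw [hzseq0, ← hw0, hzseq0] at h
    rw [← hw0, hzseq0]
    exact AbsIntClosure.dvd_of_dvd_mul hprime (hndvd i hi) s h
  have hz00 : φ 0 (z ⟨0, hd⟩) = 0 := by rw [hz, mk_eq_zero_iff_dvd, hw0]
  refine ⟨?_, ?_, ?_, ?_⟩
  · intro htop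
    -- apply `φ 0`: the ideal `(p, xᵢ)` of `R⁺` would be the unit ideal
    have h1 : (1 : E) ∈ Ideal.span {z ⟨0, hd⟩, z i} := htop ▸ Submodule.mem_top
    obtain ⟨u, v, huv⟩ := Ideal.mem_span_pair.mp h1
    have h2 := congrArg (φ 0) huv
    obtain ⟨b, hb⟩ := Ideal.Quotient.mk_surjective (φ 0 v)
    rw [map_add, map_mul, map_mul, hz00, mul_zero, zero_add, hz, map_one, ← hb, ← map_mul,
      ← map_one (Ideal.Quotient.mk _), mk_eq_iff_dvd_sub] at h2
    obtain ⟨c, hc⟩ := h2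
    have hmap : (maximalIdeal R).map (algebraMap R (AbsIntClosure R)) = ⊤ := by
      rw [Ideal.eq_top_iff_one]
      have hmem (j : Fin d) : algebraMap R (AbsIntClosure R) (x j) ∈
          (maximalIdeal R).map (algebraMap R (AbsIntClosure R)) :=
        Ideal.mem_map_of_mem _ (hxgen ▸ Ideal.subset_span ⟨j, rfl⟩)
      have h3 : (1 : AbsIntClosure R) = b * algebraMap R (AbsIntClosure R) (x i) -
          c * algebraMap R (AbsIntClosure R) (x ⟨0, hd⟩) := by
        rw [← hzseq0, ← hzseq0, hw0]
        linear_combination -hc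
      rw [h3]
      exact Ideal.sub_mem _ (Ideal.mul_mem_left _ _ (hmem i)) (Ideal.mul_mem_left _ _ (hmem _))
    rw [Ideal.map_eq_top_iff _ hinj Algebra.IsIntegral.isIntegral] at hmap
    exact (maximalIdeal.isMaximal R).ne_top hmap
  · intro e he
    exact nonzerodivisor_of_root_system_p hφ hφlim hp hpS (hzseqpow _) hw0 (hz _) he
  · intro e he
    refine mem_span_of_coord_zero hφ hφlim hp hpS AbsIntClosure.dvd_of_pow_dvd_pow
      (hzseqpow _) hw0 (hz _) ?_
    obtain ⟨f, hf⟩ := Ideal.mem_span_singleton.mp he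
    have h := congrArg (φ 0) hf
    obtain ⟨a, ha⟩ := Ideal.Quotient.mk_surjective (φ 0 e)
    rw [map_mul, map_mul, hz00, zero_mul, hz, ← ha, ← map_mul, mk_eq_zero_iff_dvd] at h
    rw [← ha, mk_eq_zero_iff_dvd]
    exact hreg a h
  · intro e he
    exact nonzerodivisor_of_root_system hφlim hp (hzseqpow i) (hz i) hreg he
end
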